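/- arXiv:1005.1306 — 3 statements merged into one kernel-verified Lean document; each statement's English description precedes it below -/
import Mathlib

section
/- For all positive integers n and j, let M be distributed according to the Haar probability measure on U(n,ℂ), and set W = (Tr(M^j) + conj(Tr(M^j)))/√(2j), a real random variable. Then for every real x₀, |P(W ≤ x₀) − Φ(x₀)| ≤ 22·j/n. -/
open MeasureTheory ProbabilityTheory Matrix

/-- Matrices over a measurable space of entries carry the product σ-algebra
(the Borel σ-algebra, for matrices over `ℝ` or `ℂ`). -/
instance matrixMeasurableSpace {m n α : Type*} [MeasurableSpace α] :
    MeasurableSpace (Matrix m n α) :=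
  inferInstanceAs (MeasurableSpace (m → n → α))

/-- The trace of the `k`-th power (`k : ℤ`, negative powers via the inverse) of an
element of the unitary group `U(n,ℂ)`. -/
noncomputable def trU {n : ℕ} (M : Matrix.unitaryGroup (Fin n) ℂ) (k : ℤ) : ℂ :=
  Matrix.trace (((M ^ k : Matrix.unitaryGroup (Fin n) ℂ)) : Matrix (Fin n) (Fin n) ℂ)

/-- The standard normal cumulative distribution function
`Φ(x₀) = (1/√(2π)) ∫_{-∞}^{x₀} e^{-x²/2} dx`. -/
noncomputable def Phi (x₀ : ℝ) : ℝ :=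
  (Real.sqrt (2 * Real.pi))⁻¹ * ∫ x in Set.Iic x₀, Real.exp (-x ^ 2 / 2)

namespace TraceCLT

/-- Shorthand for the unitary group. -/
abbrev UG (n : ℕ) := Matrix.unitaryGroup (Fin n) ℂ

/-- Shorthand for square matrices. -/
abbrev MT (n : ℕ) := Matrix (Fin n) (Fin n) ℂ

instance borelMT (n : ℕ) : BorelSpace (MT n) :=
  inferInstanceAs (BorelSpace (Fin n → Fin n → ℂ))

instance secondMT (n : ℕ) : SecondCountableTopology (MT n) :=
  inferInstanceAs (SecondCountableTopology (Fin n → Fin n → ℂ))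

instance borelUG (n : ℕ) : BorelSpace (UG n) := Subtype.borelSpace _

instance secondUG (n : ℕ) : SecondCountableTopology (UG n) :=
  TopologicalSpace.Subtype.secondCountableTopology {x : MT n | x ∈ Matrix.unitaryGroup (Fin n) ℂ}

lemma isCompact_UG (n : ℕ) : IsCompact {x : MT n | x ∈ Matrix.unitaryGroup (Fin n) ℂ} := by
  have hK : IsCompact (Set.pi Set.univ (fun _ : Fin n => Set.pi Set.univ
      (fun _ : Fin n => Metric.closedBall (0 : ℂ) 1)) : Set (Fin n → Fin n → ℂ)) :=
    isCompact_univ_pi fun _ => isCompact_univ_pi fun _ => isCompact_closedBall _ _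
  refine IsCompact.of_isClosed_subset (X := MT n) hK ?_ ?_
  · have h : {x : MT n | x ∈ Matrix.unitaryGroup (Fin n) ℂ} = {x : MT n | x * star x = 1} := by
      ext x; exact Matrix.mem_unitaryGroup_iff
    rw [h]
    exact isClosed_eq (continuous_id.matrix_mul (continuous_id.matrix_conjTranspose))
      continuous_const
  · intro x hx i _ j _
    simpa using entry_norm_bound_of_unitary hx i j

instance compactUG (n : ℕ) : CompactSpace (UG n) := isCompact_iff_compactSpace.mp (isCompact_UG n)

lemma integrable_of_cont {n : ℕ} (μ : Measure (UG n)) [IsProbabilityMeasure μ] {E : Type*}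
    [NormedAddCommGroup E] [SecondCountableTopology E] {G : UG n → E} (hG : Continuous G) :
    Integrable G μ :=
  hG.integrable_of_hasCompactSupport (HasCompactSupport.of_compactSpace G)

section exp

attribute [local instance] Matrix.linftyOpNormedRing Matrix.linftyOpNormedAlgebra

lemma exp_mem_UG {n : ℕ} (X : MT n) (hX : star X = -X) (t : ℝ) :
    NormedSpace.exp (t • X) ∈ Matrix.unitaryGroup (Fin n) ℂ := by
  have : @ContinuousStar (MT n) (Matrix.linftyOpNormedRing.toPseudoMetricSpace.toUniformSpace.toTopologicalSpace) _ :=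
    inferInstanceAs (@ContinuousStar (MT n) instTopologicalSpaceMatrix _)
  refine NormedSpace.exp_mem_unitary_of_mem_skewAdjoint ?_
  rw [skewAdjoint.mem_iff, star_smul, hX, smul_neg, star_trivial]

/-- The one-parameter group generated by a skew-adjoint matrix. -/
noncomputable def eX {n : ℕ} (X : MT n) (hX : star X = -X) (t : ℝ) : UG n :=
  ⟨NormedSpace.exp (t • X), exp_mem_UG X hX t⟩

lemma eX_add {n : ℕ} (X : MT n) (hX : star X = -X) (s t : ℝ) :
    eX X hX (s + t) = eX X hX s * eX X hX t := by
  apply Subtype.ext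
  change NormedSpace.exp ((s + t) • X) = NormedSpace.exp (s • X) * NormedSpace.exp (t • X)
  rw [add_smul]
  apply NormedSpace.exp_add_of_commute
  exact ((Commute.refl X).smul_left s).smul_right t

lemma eX_zero {n : ℕ} (X : MT n) (hX : star X = -X) : eX X hX 0 = 1 := by
  apply Subtype.ext
  change NormedSpace.exp ((0 : ℝ) • X) = 1
  rw [zero_smul, NormedSpace.exp_zero]

lemma deriv_pow {n : ℕ} (X : MT n) (hX : star X = -X) (M : UG n) (k : ℕ) :
    HasDerivAt (fun t : ℝ => ((eX X hX t * M : UG n) : MT n) ^ k)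
      (∑ i ∈ Finset.range k, (M : MT n) ^ i * X * (M : MT n) ^ (k - i)) 0 := by
  have h1 : HasDerivAt (fun t : ℝ => ((eX X hX t * M : UG n) : MT n)) (X * (M : MT n)) 0 := by
    have := (hasDerivAt_exp_smul_const' (𝕂 := ℝ) X (0 : ℝ)).mul_const (M : MT n)
    simp only [zero_smul, NormedSpace.exp_zero, mul_one] at this
    exact this
  induction k with
  | zero => 
    have := hasDerivAt_const (0 : ℝ) (1 : MT n)
    simp only [pow_zero, Finset.range_zero, Finset.sum_empty]
    exact this
  | succ k ih =>
    have h2 := ih.mul h1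
    simp only [eX_zero, one_mul] at h2
    have h3 : (∑ i ∈ Finset.range (k + 1), (M : MT n) ^ i * X * (M : MT n) ^ (k + 1 - i))
        = (∑ i ∈ Finset.range k, (M : MT n) ^ i * X * (M : MT n) ^ (k - i)) * (M : MT n)
          + (M : MT n) ^ k * (X * (M : MT n)) := by
      rw [Finset.sum_range_succ, Finset.sum_mul]
      congr 1
      · refine Finset.sum_congr rfl fun i hi => ?_
        have : k + 1 - i = (k - i) + 1 := by have := Finset.mem_range.mp hi; omega
        rw [this, pow_succ, mul_assoc, mul_assoc, mul_assoc]
      · simp [mul_assoc]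
    rw [h3]
    refine h2.congr_of_eventuallyEq ?_
    filter_upwards with t
    simp [pow_succ]

lemma deriv_pow_entry {n : ℕ} (X : MT n) (hX : star X = -X) (M : UG n) (k : ℕ) (a b : Fin n) :
    HasDerivAt (fun t : ℝ => (((eX X hX t * M : UG n) : MT n) ^ k) a b)
      ((∑ i ∈ Finset.range k, (M : MT n) ^ i * X * (M : MT n) ^ (k - i)) a b) 0 := by
  have h := deriv_pow X hX M k
  let L : MT n →L[ℝ] ℂ := LinearMap.toContinuousLinearMap
    (Matrix.entryLinearMap ℝ ℂ a b)
  exact (L.hasFDerivAt.comp_hasDerivAt (0 : ℝ) h)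

end exp


/-- `H` is the (left-invariant) gradient of `G`. -/
structure HasGrad {n : ℕ} (G : UG n → ℂ) (H : UG n → MT n) : Prop where
  contG : Continuous G
  contH : Continuous H
  deriv : ∀ (X : MT n) (hX : star X = -X) (M : UG n),
    HasDerivAt (fun t : ℝ => G (eX X hX t * M)) (Matrix.trace (X * H M)) 0

lemma cont_val {n : ℕ} : Continuous (fun M : UG n => (M : MT n)) := continuous_subtype_val

lemma cont_pow {n : ℕ} (k : ℕ) : Continuous (fun M : UG n => (M : MT n) ^ k) :=
  cont_val.pow k

lemma HasGrad.ibp_skew {n : ℕ} (μ : Measure (UG n)) [IsProbabilityMeasure μ] [μ.IsHaarMeasure]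
    {G : UG n → ℂ} {H : UG n → MT n} (h : HasGrad G H) (X : MT n) (hX : star X = -X) :
    ∫ M, Matrix.trace (X * H M) ∂μ = 0 := by
  have hc : Continuous (fun M : UG n => Matrix.trace (X * H M)) :=
    (continuous_const.matrix_mul h.contH).matrix_trace
  obtain ⟨C, hC⟩ := (isCompact_range hc).isBounded.exists_norm_le
  have hd : ∀ (M : UG n) (t : ℝ), HasDerivAt (fun t : ℝ => G (eX X hX t * M))
      (Matrix.trace (X * H (eX X hX t * M))) t := by
    intro M t
    have h1 := h.deriv X hX (eX X hX t * M)
    have h2 : HasDerivAt (fun s : ℝ => s - t) 1 t := (hasDerivAt_id t).sub_const t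
    have h1' : HasDerivAt (fun s : ℝ => G (eX X hX s * (eX X hX t * M)))
      (Matrix.trace (X * H (eX X hX t * M))) (t - t) := by simpa using h1
    have h3 := HasDerivAt.scomp (h := fun s : ℝ => s - t) t h1' h2
    rw [one_smul] at h3
    refine h3.congr_of_eventuallyEq ?_
    filter_upwards with s
    simp only [Function.comp]
    rw [← mul_assoc, ← eX_add, sub_add_cancel]
  have key := hasDerivAt_integral_of_dominated_loc_of_deriv_le (μ := μ) (𝕜 := ℝ)
    (F := fun t M => G (eX X hX t * M)) (F' := fun t M => Matrix.trace (X * H (eX X hX t * M)))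
    (x₀ := (0 : ℝ)) (s := Set.univ) (bound := fun _ => C) Filter.univ_mem
    (by
      filter_upwards with t
      exact (integrable_of_cont μ (h.contG.comp (continuous_const.mul continuous_id))).1)
    (integrable_of_cont μ (h.contG.comp (continuous_const.mul continuous_id)))
    (integrable_of_cont μ (hc.comp (continuous_const.mul continuous_id))).1
    (by
      filter_upwards with M
      intro t _
      exact hC _ ⟨_, rfl⟩)
    (integrable_const _)
    (by
      filter_upwards with M
      intro t _
      exact hd M t)
  have h1 := key.2
  have h2 : (fun t : ℝ => ∫ M, G (eX X hX t * M) ∂μ) = fun _ => ∫ M, G M ∂μ := by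
    funext t
    exact integral_mul_left_eq_self G _
  rw [h2] at h1
  have h3 := h1.unique (hasDerivAt_const (0 : ℝ) _)
  simpa [eX_zero] using h3

lemma HasGrad.ibp {n : ℕ} (μ : Measure (UG n)) [IsProbabilityMeasure μ] [μ.IsHaarMeasure]
    {G : UG n → ℂ} {H : UG n → MT n} (h : HasGrad G H) (A : MT n) :
    ∫ M, Matrix.trace (A * H M) ∂μ = 0 := by
  have h1 := h.ibp_skew μ ((1 / 2 : ℂ) • (A - star A)) (by
    simp [star_smul, ← smul_neg])
  have h2 := h.ibp_skew μ ((-Complex.I / 2) • (A + star A)) (by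
    simp only [star_smul, star_add, star_star, ← neg_smul]
    rw [add_comm]
    congr 1
    simp [neg_div])
  have hi : ∀ B : MT n, Integrable (fun M => Matrix.trace (B * H M)) μ := fun B =>
    integrable_of_cont μ (continuous_const.matrix_mul h.contH).matrix_trace
  have h3 : ∀ M, Matrix.trace (A * H M) = Matrix.trace (((1 / 2 : ℂ) • (A - star A)) * H M)
      + Complex.I * Matrix.trace (((-Complex.I / 2) • (A + star A)) * H M) := by
    intro M
    simp only [smul_mul, sub_mul, add_mul, Matrix.trace_smul, Matrix.trace_sub, Matrix.trace_add,
      smul_eq_mul, Matrix.smul_mul]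
    linear_combination ((1 / 2) * Matrix.trace (A * H M)
      + (1 / 2) * Matrix.trace (star A * H M)) * Complex.I_sq
  simp_rw [h3]
  rw [integral_add (hi _) ((hi _).const_mul _), integral_const_mul, h1, h2]
  simp

lemma HasGrad.mul {n : ℕ} {G₁ G₂ : UG n → ℂ} {H₁ H₂ : UG n → MT n}
    (h₁ : HasGrad G₁ H₁) (h₂ : HasGrad G₂ H₂) :
    HasGrad (fun M => G₁ M * G₂ M) (fun M => G₂ M • H₁ M + G₁ M • H₂ M) where
  contG := h₁.contG.mul h₂.contG
  contH := (h₂.contG.smul h₁.contH).add (h₁.contG.smul h₂.contH)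
  deriv X hX M := by
    have := (h₁.deriv X hX M).mul (h₂.deriv X hX M)
    simp only [eX_zero, one_mul] at this
    convert! this using 1
    simp [mul_add, Matrix.trace_add]
    ring

lemma HasGrad.const {n : ℕ} (c : ℂ) : HasGrad (fun _ : UG n => c) (fun _ => 0) where
  contG := continuous_const
  contH := continuous_const
  deriv X hX M := by simpa using hasDerivAt_const (0 : ℝ) c

/-- Power sums of eigenvalues. -/
noncomputable def p {n : ℕ} (k : ℕ) (M : UG n) : ℂ := Matrix.trace ((M : MT n) ^ k)

lemma cont_p {n : ℕ} (k : ℕ) : Continuous (p (n := n) k) := (cont_pow k).matrix_trace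

lemma p_zero {n : ℕ} (M : UG n) : p 0 M = n := by simp [p]

lemma hasGrad_p {n : ℕ} (k : ℕ) :
    HasGrad (p (n := n) k) (fun M => (k : ℂ) • (M : MT n) ^ k) where
  contG := cont_p k
  contH := (cont_pow k).const_smul (k : ℂ)
  deriv X hX M := by
    have h := HasDerivAt.fun_sum (u := Finset.univ) fun (a : Fin n) _ => deriv_pow_entry X hX M k a a
    convert! h using 1
    change _ = Matrix.trace (∑ i ∈ Finset.range k, (M : MT n) ^ i * X * (M : MT n) ^ (k - i))
    rw [Matrix.trace_sum]
    have : ∀ i ∈ Finset.range k, Matrix.trace ((M : MT n) ^ i * X * (M : MT n) ^ (k - i))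
        = Matrix.trace (X * (M : MT n) ^ k) := by
      intro i hi
      rw [Matrix.trace_mul_comm, ← mul_assoc, ← pow_add, Matrix.trace_mul_comm,
        Nat.sub_add_cancel (Finset.mem_range.mp hi).le]
    rw [Finset.sum_congr rfl this]
    simp

lemma HasGrad.conj {n : ℕ} {G : UG n → ℂ} {H : UG n → MT n} (h : HasGrad G H) :
    HasGrad (fun M => (starRingEnd ℂ) (G M)) (fun M => - star (H M)) where
  contG := Complex.continuous_conj.comp h.contG
  contH := h.contH.matrix_conjTranspose.neg
  deriv X hX M := by
    have := (h.deriv X hX M).star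
    convert! this using 1
    have hX' : Xᴴ = -X := hX
    rw [← Matrix.trace_conjTranspose, Matrix.conjTranspose_mul, Matrix.trace_mul_comm, hX',
      Matrix.neg_mul, Matrix.mul_neg]
    rfl

lemma hasGrad_pbar {n : ℕ} (k : ℕ) :
    HasGrad (fun M => (starRingEnd ℂ) (p (n := n) k M))
      (fun M => -((k : ℂ) • star ((M : MT n) ^ k))) := by
  have := (hasGrad_p (n := n) k).conj
  simpa [star_smul] using this

lemma hasGrad_entry {n : ℕ} (k : ℕ) (a b : Fin n) :
    HasGrad (fun M : UG n => ((M : MT n) ^ k) a b)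
      (fun M => ∑ i ∈ Finset.range k, (M : MT n) ^ (k - i) * Matrix.single b a 1 * (M : MT n) ^ i)
      where
  contG := (cont_pow k).matrix_elem a b
  contH := continuous_finsetSum _ fun i _ =>
    ((cont_pow _).matrix_mul continuous_const).matrix_mul (cont_pow _)
  deriv X hX M := by
    convert! deriv_pow_entry X hX M k a b using 1
    rw [Finset.mul_sum, Matrix.trace_sum, Matrix.sum_apply]
    refine Finset.sum_congr rfl fun i _ => ?_
    rw [← mul_assoc, ← mul_assoc, Matrix.trace_mul_comm, ← mul_assoc, ← mul_assoc,
      Matrix.trace_mul_single]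
    simp

/-- The loop equation. -/
lemma loop {n : ℕ} (μ : Measure (UG n)) [IsProbabilityMeasure μ] [μ.IsHaarMeasure]
    {G : UG n → ℂ} {H : UG n → MT n} (h : HasGrad G H) (k : ℕ) :
    ∫ M, (∑ i ∈ Finset.range k, p i M * p (k - i) M) * G M ∂μ
      + ∫ M, Matrix.trace ((M : MT n) ^ k * H M) ∂μ = 0 := by
  have hg := fun a b => (hasGrad_entry (n := n) k a b).mul h
  have h1 : ∑ a : Fin n, ∑ b : Fin n, ∫ M : UG n, Matrix.trace (Matrix.single a b 1 *
      (G M • (∑ i ∈ Finset.range k, (M : MT n) ^ (k - i) * Matrix.single b a 1 * (M : MT n) ^ i)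
        + (((M : MT n) ^ k) a b) • H M)) ∂μ = 0 :=
    Finset.sum_eq_zero fun a _ => Finset.sum_eq_zero fun b _ => (hg a b).ibp μ _
  have hi : ∀ a b : Fin n, Integrable (fun M : UG n => Matrix.trace (Matrix.single a b 1 *
      (G M • (∑ i ∈ Finset.range k, (M : MT n) ^ (k - i) * Matrix.single b a 1 * (M : MT n) ^ i)
        + (((M : MT n) ^ k) a b) • H M))) μ := fun a b =>
    integrable_of_cont μ (continuous_const.matrix_mul (hg a b).contH).matrix_trace
  have h2 : ∀ a, ∑ b : Fin n, ∫ M : UG n, Matrix.trace (Matrix.single a b 1 *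
      (G M • (∑ i ∈ Finset.range k, (M : MT n) ^ (k - i) * Matrix.single b a 1 * (M : MT n) ^ i)
        + (((M : MT n) ^ k) a b) • H M)) ∂μ = ∫ M : UG n, ∑ b : Fin n, Matrix.trace
      (Matrix.single a b 1 *
      (G M • (∑ i ∈ Finset.range k, (M : MT n) ^ (k - i) * Matrix.single b a 1 * (M : MT n) ^ i)
        + (((M : MT n) ^ k) a b) • H M)) ∂μ := fun a =>
    (integral_finsetSum _ fun b _ => hi a b).symm
  rw [Finset.sum_congr rfl fun a _ => h2 a, ← integral_finsetSum _ fun a _ =>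
    integrable_finsetSum _ fun b _ => hi a b] at h1
  rw [← integral_add, ← h1]
  · congr 1
    funext M
    have e : ∀ a b : Fin n, Matrix.trace (Matrix.single a b 1 *
      (G M • (∑ i ∈ Finset.range k, (M : MT n) ^ (k - i) * Matrix.single b a 1 * (M : MT n) ^ i)
        + (((M : MT n) ^ k) a b) • H M))
        = (∑ i ∈ Finset.range k, ((M : MT n) ^ i) a a * ((M : MT n) ^ (k - i)) b b) * G M
          + ((M : MT n) ^ k) a b * H M b a := by
      intro a b
      rw [mul_add, Matrix.trace_add, Matrix.mul_smul, Matrix.mul_smul, Matrix.trace_smul,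
        Matrix.trace_smul, Matrix.trace_single_mul, Matrix.trace_single_mul, Matrix.sum_apply]
      simp only [smul_eq_mul, one_mul]
      rw [mul_comm (G M)]
      congr 2
      refine Finset.sum_congr rfl fun i _ => ?_
      rw [Matrix.mul_apply]
      rw [Finset.sum_eq_single a]
      · simp [mul_comm]
      · intro x _ hx
        rw [Matrix.mul_single_apply_of_ne _ _ _ _ _ hx, zero_mul]
      · simp
    simp_rw [e, Finset.sum_add_distrib]
    congr 1
    · simp_rw [← Finset.sum_mul]
      congr 1
      simp_rw [p, Matrix.trace, Finset.sum_mul_sum, Matrix.diag]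
      rw [Finset.sum_comm]
      refine Finset.sum_congr rfl fun a _ => ?_
      rw [Finset.sum_comm]
  · exact integrable_of_cont μ ((continuous_finsetSum _ fun i _ =>
      (cont_p i).mul (cont_p (k - i))).mul h.contG)
  · exact integrable_of_cont μ ((cont_pow k).matrix_mul h.contH).matrix_trace


/-- Product of power sums. -/
noncomputable def PL {n : ℕ} : List ℕ → UG n → ℂ
  | [], _ => 1
  | c :: l, M => p c M * PL l M

/-- Gradient of a product of power sums. -/
noncomputable def gradL {n : ℕ} : List ℕ → UG n → MT n
  | [], _ => 0
  | c :: l, M => PL l M • ((c : ℂ) • (M : MT n) ^ c) + p c M • gradL l M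

/-- The join term in the loop equation. -/
noncomputable def JL {n : ℕ} (c : ℕ) : List ℕ → UG n → ℂ
  | [], _ => 0
  | m :: l, M => (m : ℂ) * (p (c + m) M * PL l M) + p m M * JL c l M

lemma hasGrad_PL {n : ℕ} (l : List ℕ) : HasGrad (PL (n := n) l) (gradL l) := by
  induction l with
  | nil => exact HasGrad.const 1
  | cons c l ih => exact (hasGrad_p c).mul ih

lemma cont_PL {n : ℕ} (l : List ℕ) : Continuous (PL (n := n) l) := (hasGrad_PL l).contG

lemma cont_JL {n : ℕ} (c : ℕ) (l : List ℕ) : Continuous (JL (n := n) c l) := by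
  induction l with
  | nil => exact continuous_const
  | cons m l ih =>
    exact (continuous_const.mul ((cont_p _).mul (cont_PL l))).add ((cont_p m).mul ih)

lemma trace_gradL {n : ℕ} (c : ℕ) (l : List ℕ) (M : UG n) :
    Matrix.trace ((M : MT n) ^ c * gradL l M) = JL c l M := by
  induction l with
  | nil => simp [gradL, JL]
  | cons m l ih =>
    simp only [gradL, JL, mul_add, Matrix.mul_smul, Matrix.trace_add, Matrix.trace_smul, ih,
      smul_eq_mul, ← pow_add, p]
    ring

lemma PL_append {n : ℕ} (l l' : List ℕ) (M : UG n) : PL (l ++ l') M = PL l M * PL l' M := by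
  induction l with
  | nil => simp [PL]
  | cons m l ih => simp [PL, ih, mul_assoc]

lemma cont_pbar {n : ℕ} (k : ℕ) : Continuous (fun M : UG n => (starRingEnd ℂ) (p k M)) :=
  Complex.continuous_conj.comp (cont_p k)

lemma pow_mul_star {n : ℕ} (M : UG n) {c k : ℕ} (h : c ≤ k) :
    Matrix.trace ((M : MT n) ^ c * star ((M : MT n) ^ k)) = (starRingEnd ℂ) (p (k - c) M) := by
  have h1 : (M : MT n) ^ c * star ((M : MT n) ^ c) = 1 := by
    have : ((M ^ c : UG n) : MT n) * star ((M ^ c : UG n) : MT n) = 1 :=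
      Unitary.mul_star_self_of_mem (M ^ c).2
    simpa using this
  obtain ⟨d, rfl⟩ := Nat.exists_eq_add_of_le h
  rw [add_comm, pow_add, star_mul, ← mul_assoc, h1, one_mul, Nat.add_sub_cancel, p]
  exact Matrix.trace_conjTranspose _

lemma pow_mul_star' {n : ℕ} (M : UG n) {c k : ℕ} (h : c ≤ k) :
    Matrix.trace ((M : MT n) ^ k * star ((M : MT n) ^ c)) = p (k - c) M := by
  have h1 := pow_mul_star M h
  have h2 := congrArg (starRingEnd ℂ) h1
  rw [Complex.conj_conj, starRingEnd_apply, ← Matrix.trace_conjTranspose] at h2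
  rw [← h2, ← Matrix.star_eq_conjTranspose, star_mul, star_star]

/-- The mixed moments. -/
noncomputable def phi {n : ℕ} (μ : Measure (UG n)) (k : ℕ) (l : List ℕ) : ℂ :=
  ∫ M, PL l M * (starRingEnd ℂ) (p k M) ∂μ

lemma sum_split {n : ℕ} (c : ℕ) (M : UG n) :
    ∑ i ∈ Finset.range (c + 1), p i M * p (c + 1 - i) M
      = (n : ℂ) * p (c + 1) M + ∑ i ∈ Finset.range c, p (i + 1) M * p (c - i) M := by
  rw [Finset.sum_range_succ', add_comm]
  congr 1
  · simp [p_zero]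
  · refine Finset.sum_congr rfl fun i _ => ?_
    congr 2
    omega

lemma loop1 {n : ℕ} (μ : Measure (UG n)) [IsProbabilityMeasure μ] [μ.IsHaarMeasure]
    (k c : ℕ) (hc : c + 1 ≤ k) (l : List ℕ) :
    (n : ℂ) * phi μ k ((c + 1) :: l)
      + ∑ i ∈ Finset.range c, phi μ k ((i + 1) :: (c - i) :: l)
      + ∫ M, JL (c + 1) l M * (starRingEnd ℂ) (p k M) ∂μ
      = (k : ℂ) * phi μ (k - (c + 1)) l := by
  have h := loop μ ((hasGrad_PL (n := n) l).mul (hasGrad_pbar k)) (c + 1)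
  have i1 : ∀ (l : List ℕ) (k : ℕ),
      Integrable (fun M : UG n => PL l M * (starRingEnd ℂ) (p k M)) μ :=
    fun l k => integrable_of_cont μ ((cont_PL l).mul (cont_pbar k))
  have i2 : Integrable (fun M : UG n => JL (c + 1) l M * (starRingEnd ℂ) (p k M)) μ :=
    integrable_of_cont μ ((cont_JL _ l).mul (cont_pbar k))
  have e1 : ∀ M : UG n, (∑ i ∈ Finset.range (c + 1), p i M * p (c + 1 - i) M) *
      (PL l M * (starRingEnd ℂ) (p k M)) = (n : ℂ) * (PL ((c + 1) :: l) M * (starRingEnd ℂ) (p k M))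
      + ∑ i ∈ Finset.range c, PL ((i + 1) :: (c - i) :: l) M * (starRingEnd ℂ) (p k M) := by
    intro M
    rw [sum_split, add_mul, Finset.sum_mul]
    congr 1
    · simp only [PL]; ring
    · refine Finset.sum_congr rfl fun i _ => ?_
      simp only [PL]; ring
  have e2 : ∀ M : UG n, Matrix.trace ((M : MT n) ^ (c + 1) * ((starRingEnd ℂ) (p k M) • gradL l M
      + PL l M • -((k : ℂ) • star ((M : MT n) ^ k))))
      = JL (c + 1) l M * (starRingEnd ℂ) (p k M)
        - (k : ℂ) * (PL l M * (starRingEnd ℂ) (p (k - (c + 1)) M)) := by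
    intro M
    rw [mul_add, Matrix.trace_add, Matrix.mul_smul, Matrix.trace_smul, trace_gradL,
      Matrix.mul_smul, Matrix.mul_neg, Matrix.mul_smul, Matrix.trace_smul, Matrix.trace_neg,
      Matrix.trace_smul, pow_mul_star M hc]
    simp only [smul_eq_mul]
    ring
  simp_rw [e1, e2] at h
  rw [integral_add ((i1 _ _).const_mul _) (integrable_finsetSum _ fun i _ => i1 _ _),
    integral_finsetSum _ fun i _ => i1 _ _, integral_sub i2 ((i1 _ _).const_mul _),
    integral_const_mul, integral_const_mul] at h
  simp only [phi]
  linear_combination h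

/-- The predicted value of the mixed moments. -/
noncomputable def psi (k : ℕ) (l : List ℕ) : ℂ := if l = [k] then (k : ℂ) else 0

lemma JL_bound {n : ℕ} (μ : Measure (UG n)) [IsProbabilityMeasure μ]
    (k : ℕ) (C : ℝ)
    (hC : ∀ l : List ℕ, (∀ x ∈ l, 0 < x) → l.sum = k → ‖phi μ k l - psi k l‖ ≤ C)
    (c : ℕ) (hc : 0 < c) (l : List ℕ) (hl : ∀ x ∈ l, 0 < x) (ν : List ℕ) (hν : ∀ x ∈ ν, 0 < x)
    (hs : ν.sum + c + l.sum = k) :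
    ‖∫ M, PL ν M * JL c l M * (starRingEnd ℂ) (p k M) ∂μ
      - (if ν = [] ∧ l.length = 1 then (l.sum : ℂ) * k else 0)‖ ≤ C * l.sum := by
  induction l generalizing ν with
  | nil => simp [JL]
  | cons m l ih =>
    have ih' := ih (fun x hx => hl x (by simp [hx])) (m :: ν)
      (by
        intro x hx
        rcases List.mem_cons.mp hx with rfl | hx
        · exact hl _ (by simp)
        · exact hν x hx)
      (by simp at hs ⊢; omega)
    have h1 := hC ((c + m) :: (ν ++ l)) (by
        intro x hx
        simp only [List.mem_cons, List.mem_append] at hx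
        rcases hx with rfl | hx | hx
        · omega
        · exact hν x hx
        · exact hl x (by simp [hx])) (by simp at hs ⊢; omega)
    have e1 : ∫ M, PL ν M * JL c (m :: l) M * (starRingEnd ℂ) (p k M) ∂μ
        = (m : ℂ) * phi μ k ((c + m) :: (ν ++ l))
          + ∫ M, PL (m :: ν) M * JL c l M * (starRingEnd ℂ) (p k M) ∂μ := by
      rw [phi, ← integral_const_mul, ← integral_add]
      · congr 1
        funext M
        simp only [PL, JL, PL_append]
        ring
      · exact (integrable_of_cont μ ((cont_PL _).mul (cont_pbar k))).const_mul _
      · exact integrable_of_cont μ (((cont_PL _).mul (cont_JL _ _)).mul (cont_pbar k))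
    have e2 : (if ν = [] ∧ (m :: l).length = 1 then ((m :: l).sum : ℂ) * k else 0)
        = (m : ℂ) * psi k ((c + m) :: (ν ++ l)) := by
      unfold psi
      by_cases h : ν = [] ∧ l = []
      · obtain ⟨rfl, rfl⟩ := h
        simp at hs
        simp [hs]
      · rw [if_neg, if_neg, mul_zero]
        · intro h'
          apply h
          simp at h'
          exact h'.2
        · intro h'
          apply h
          simpa using h'
    rw [e1]
    rw [e2]
    rw [if_neg (by simp), sub_zero] at ih'
    have e4 : (m : ℂ) * phi μ k ((c + m) :: (ν ++ l))
          + ∫ M, PL (m :: ν) M * JL c l M * (starRingEnd ℂ) (p k M) ∂μ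
          - (m : ℂ) * psi k ((c + m) :: (ν ++ l))
        = (m : ℂ) * (phi μ k ((c + m) :: (ν ++ l)) - psi k ((c + m) :: (ν ++ l)))
          + ∫ M, PL (m :: ν) M * JL c l M * (starRingEnd ℂ) (p k M) ∂μ := by ring
    rw [e4]
    refine (norm_add_le _ _).trans ?_
    rw [norm_mul, Complex.norm_natCast, List.sum_cons]
    rw [Nat.cast_add]
    have := mul_le_mul_of_nonneg_left h1 (Nat.cast_nonneg (α := ℝ) m)
    linarith

lemma phi_step {n : ℕ} (μ : Measure (UG n)) [IsProbabilityMeasure μ] [μ.IsHaarMeasure]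
    (k : ℕ) (hk : 0 < k) (hkn : k ≤ n)
    (IH : ∀ k' < k, 0 < k' → ∀ l : List ℕ, (∀ x ∈ l, 0 < x) → l.sum = k' → phi μ k' l = psi k' l)
    (C : ℝ)
    (hC : ∀ l : List ℕ, (∀ x ∈ l, 0 < x) → l.sum = k → ‖phi μ k l - psi k l‖ ≤ C)
    (l : List ℕ) (hl : ∀ x ∈ l, 0 < x) (hs : l.sum = k) :
    (n : ℝ) * ‖phi μ k l - psi k l‖ ≤ (n - 1 : ℝ) * C := by
  have hC0 : 0 ≤ C := (norm_nonneg _).trans (hC l hl hs)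
  match l, hl, hs with
  | [], _, hs => simp at hs; omega
  | 0 :: l, hl, _ => exact absurd (hl 0 (by simp)) (by simp)
  | (c + 1) :: l, hl, hs =>
    have hl' : ∀ x ∈ l, 0 < x := fun x hx => hl x (by simp [hx])
    simp only [List.sum_cons] at hs
    have h1 := loop1 μ k c (by omega) l
    have h2 := JL_bound μ k C hC (c + 1) (by omega) l hl' [] (by simp) (by simp; omega)
    simp only [PL, one_mul, true_and] at h2
    have h3 : ∀ i ∈ Finset.range c, ‖phi μ k ((i + 1) :: (c - i) :: l)‖ ≤ C := by
      intro i hi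
      have hi := Finset.mem_range.mp hi
      have := hC ((i + 1) :: (c - i) :: l) (by
        intro x hx
        simp only [List.mem_cons] at hx
        rcases hx with rfl | rfl | hx
        · omega
        · omega
        · exact hl' x hx) (by simp; omega)
      simpa [psi] using this
    have e : (k : ℂ) * phi μ (k - (c + 1)) l = (if l.length = 1 then (l.sum : ℂ) * k else 0)
        + n * psi k ((c + 1) :: l) := by
      rcases l with _ | ⟨m, l⟩
      · simp at hs
        subst hs
        simp [phi, psi, PL, p_zero]
        ring
      · have hm : 0 < m := hl' m (by simp)
        simp only [List.sum_cons] at hs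
        rw [IH (k - (c + 1)) (by omega) (by omega) (m :: l) hl' (by simp; omega)]
        rcases l with _ | ⟨m', l⟩
        · simp at hs
          have : k - (c + 1) = m := by omega
          simp [psi, this]
          ring
        · simp [psi]
    set J := ∫ M, JL (c + 1) l M * (starRingEnd ℂ) (p k M) ∂μ
    have h4 : (n : ℂ) * (phi μ k ((c + 1) :: l) - psi k ((c + 1) :: l))
        = -(∑ i ∈ Finset.range c, phi μ k ((i + 1) :: (c - i) :: l))
          - (J - (if l.length = 1 then (l.sum : ℂ) * k else 0)) := by
      linear_combination h1 + e
    have h5 : (n : ℝ) * ‖phi μ k ((c + 1) :: l) - psi k ((c + 1) :: l)‖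
        = ‖(n : ℂ) * (phi μ k ((c + 1) :: l) - psi k ((c + 1) :: l))‖ := by
      rw [norm_mul, Complex.norm_natCast]
    rw [h5, h4]
    refine (norm_sub_le _ _).trans ?_
    rw [norm_neg]
    have h6 : ‖∑ i ∈ Finset.range c, phi μ k ((i + 1) :: (c - i) :: l)‖ ≤ c * C := by
      refine (norm_sum_le_of_le _ h3).trans ?_
      simp
    have h7 : (c : ℝ) + 1 + (l.sum : ℝ) ≤ n := by
      have : c + 1 + l.sum ≤ n := by omega
      exact_mod_cast this
    nlinarith

lemma phi_eq {n : ℕ} (μ : Measure (UG n)) [IsProbabilityMeasure μ] [μ.IsHaarMeasure]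
    (k : ℕ) (hk : 0 < k) (hkn : k ≤ n)
    (l : List ℕ) (hl : ∀ x ∈ l, 0 < x) (hs : l.sum = k) : phi μ k l = psi k l := by
  induction k using Nat.strong_induction_on generalizing l with
  | _ k ih =>
    have IH : ∀ k' < k, 0 < k' → ∀ l : List ℕ, (∀ x ∈ l, 0 < x) → l.sum = k' →
      phi μ k' l = psi k' l := fun k' h h' l => ih k' h h' (by omega) l
    -- an a priori bound
    have hp : ∀ (c : ℕ) (M : UG n), ‖p c M‖ ≤ n := by
      intro c M
      have : ∀ i, ‖((M ^ c : UG n) : MT n) i i‖ ≤ 1 := fun i =>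
        entry_norm_bound_of_unitary (M ^ c).2 i i
      have h1 := norm_sum_le_of_le Finset.univ fun i _ => this i
      simpa [p, Matrix.trace] using h1
    have hn1 : (1 : ℝ) ≤ n := by exact_mod_cast (by omega : 1 ≤ n)
    have hPL : ∀ (l : List ℕ), (∀ x ∈ l, 0 < x) → ∀ (M : UG n), ‖PL l M‖ ≤ (n : ℝ) ^ l.sum := by
      intro l
      induction l with
      | nil => intro _ M; simp [PL]
      | cons c l ihl =>
        intro hl M
        have hc : 0 < c := hl c (by simp)
        rw [PL, norm_mul, List.sum_cons, pow_add]
        refine mul_le_mul ((hp c M).trans (le_self_pow₀ hn1 (by omega)))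
          (ihl (fun x hx => hl x (by simp [hx])) M) (norm_nonneg _) (by positivity)
    have hb : ∀ l : List ℕ, (∀ x ∈ l, 0 < x) → l.sum = k →
        ‖phi μ k l - psi k l‖ ≤ (n : ℝ) ^ k * n + k := by
      intro l hl hs
      refine (norm_sub_le _ _).trans (add_le_add ?_ ?_)
      · have := norm_integral_le_of_norm_le_const (μ := μ) (C := (n : ℝ) ^ k * n)
          (f := fun M => PL l M * (starRingEnd ℂ) (p k M)) (by
            filter_upwards with M
            rw [norm_mul, RCLike.norm_conj]
            exact mul_le_mul (hs ▸ hPL l hl M) (hp k M) (norm_nonneg _) (by positivity))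
        simpa [phi] using this
      · unfold psi
        split_ifs <;> simp
    have hit : ∀ N : ℕ, ∀ l : List ℕ, (∀ x ∈ l, 0 < x) → l.sum = k →
        ‖phi μ k l - psi k l‖ ≤ ((n - 1) / n : ℝ) ^ N * ((n : ℝ) ^ k * n + k) := by
      intro N
      induction N with
      | zero => intro l hl hs; simpa using hb l hl hs
      | succ N ihN =>
        intro l hl hs
        have := phi_step μ k hk hkn IH _ ihN l hl hs
        rw [pow_succ']
        have hn0 : (0 : ℝ) < n := by linarith
        rw [← mul_le_mul_iff_right₀ hn0]
        refine this.trans (le_of_eq ?_)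
        field_simp
    have hlim : Filter.Tendsto (fun N : ℕ => ((n - 1) / n : ℝ) ^ N * ((n : ℝ) ^ k * n + k))
        Filter.atTop (nhds (0 * ((n : ℝ) ^ k * n + k))) := by
      refine Filter.Tendsto.mul_const _ (tendsto_pow_atTop_nhds_zero_of_lt_one ?_ ?_)
      · apply div_nonneg <;> linarith
      · rw [div_lt_one (by linarith)]; linarith
    rw [zero_mul] at hlim
    have h0 := ge_of_tendsto' hlim fun N => hit N l hl hs
    exact sub_eq_zero.mp (norm_le_zero_iff.mp h0)


lemma moment_p {n : ℕ} (μ : Measure (UG n)) [IsProbabilityMeasure μ] [μ.IsHaarMeasure]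
    (k : ℕ) (hk : 0 < k) (hkn : k ≤ n) :
    ∫ M, p k M * (starRingEnd ℂ) (p k M) ∂μ = k := by
  have := phi_eq μ k hk hkn [k] (by simpa using hk) (by simp)
  simpa [phi, psi, PL] using this

lemma moment_pp {n : ℕ} (μ : Measure (UG n)) [IsProbabilityMeasure μ] [μ.IsHaarMeasure]
    (a b : ℕ) (ha : 0 < a) (hb : 0 < b) (hkn : a + b ≤ n) :
    ∫ M, p (a + b) M * (starRingEnd ℂ) (p a M * p b M) ∂μ = 0 := by
  have := phi_eq μ (a + b) (by omega) hkn [a, b] (by simp [ha, hb]) (by simp)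
  simp only [phi, psi, PL] at this
  simp only [mul_one, List.cons.injEq, reduceCtorEq, and_false, if_false] at this
  have h2 := congrArg (starRingEnd ℂ) this
  rw [← integral_conj, map_zero] at h2
  rw [← h2]
  congr 1
  funext M
  simp
  ring

/-- The cut term. -/
noncomputable def SS {n : ℕ} (c : ℕ) (M : UG n) : ℂ :=
  ∑ i ∈ Finset.range c, p (i + 1) M * p (c - i) M

lemma cont_SS {n : ℕ} (c : ℕ) : Continuous (SS (n := n) c) :=
  continuous_finsetSum _ fun _ _ => (cont_p _).mul (cont_p _)

lemma moment_Spp {n : ℕ} (μ : Measure (UG n)) [IsProbabilityMeasure μ] [μ.IsHaarMeasure]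
    (c a b : ℕ) (ha : 0 < a) (hb : 0 < b) (hc : a + b = c + 1) (hkn : c + 1 ≤ n) :
    ∫ M, SS c M * (starRingEnd ℂ) (p a M * p b M) ∂μ = 2 * a * b := by
  have h := loop μ ((hasGrad_pbar (n := n) a).mul (hasGrad_pbar b)) (c + 1)
  have e1 : ∀ M : UG n, (∑ i ∈ Finset.range (c + 1), p i M * p (c + 1 - i) M) *
      ((starRingEnd ℂ) (p a M) * (starRingEnd ℂ) (p b M))
      = (n : ℂ) * (p (a + b) M * (starRingEnd ℂ) (p a M * p b M))
        + SS c M * (starRingEnd ℂ) (p a M * p b M) := by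
    intro M
    rw [sum_split, hc, map_mul, SS]
    ring
  have e2 : ∀ M : UG n, Matrix.trace ((M : MT n) ^ (c + 1) *
      ((starRingEnd ℂ) (p b M) • -((a : ℂ) • star ((M : MT n) ^ a))
        + (starRingEnd ℂ) (p a M) • -((b : ℂ) • star ((M : MT n) ^ b))))
      = -(a : ℂ) * (p b M * (starRingEnd ℂ) (p b M))
        + -(b : ℂ) * (p a M * (starRingEnd ℂ) (p a M)) := by
    intro M
    rw [mul_add, Matrix.trace_add, Matrix.mul_smul, Matrix.trace_smul,
      Matrix.mul_smul, Matrix.mul_neg, Matrix.mul_smul, Matrix.trace_smul, Matrix.trace_neg,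
      Matrix.trace_smul, pow_mul_star' M (by omega), Matrix.mul_neg, Matrix.mul_smul,
      Matrix.trace_neg, Matrix.trace_smul, pow_mul_star' M (by omega)]
    have h1 : c + 1 - a = b := by omega
    have h2 : c + 1 - b = a := by omega
    rw [h1, h2]
    simp only [smul_eq_mul]
    ring
  have cab : Continuous (fun M : UG n => (starRingEnd ℂ) (p a M * p b M)) :=
    Complex.continuous_conj.comp ((cont_p a).mul (cont_p b))
  simp_rw [e1, e2] at h
  rw [integral_add, integral_add, integral_const_mul, integral_const_mul, integral_const_mul,
    moment_pp μ a b ha hb (by omega), moment_p μ a ha (by omega), moment_p μ b hb (by omega)] at h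
  · linear_combination h
  · exact (integrable_of_cont μ ((cont_p b).mul (cont_pbar b))).const_mul _
  · exact (integrable_of_cont μ ((cont_p a).mul (cont_pbar a))).const_mul _
  · exact (integrable_of_cont μ ((cont_p _).mul cab)).const_mul _
  · exact integrable_of_cont μ ((cont_SS c).mul cab)

lemma moment_S {n : ℕ} (μ : Measure (UG n)) [IsProbabilityMeasure μ] [μ.IsHaarMeasure]
    (c : ℕ) (hkn : c + 1 ≤ n) :
    ∫ M, SS c M * (starRingEnd ℂ) (SS c M) ∂μ
      = ∑ i ∈ Finset.range c, (2 * (i + 1 : ℕ) * (c - i : ℕ) : ℂ) := by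
  have e : ∀ M : UG n, SS c M * (starRingEnd ℂ) (SS c M)
      = ∑ i ∈ Finset.range c, SS c M * (starRingEnd ℂ) (p (i + 1) M * p (c - i) M) := by
    intro M
    rw [← Finset.mul_sum, ← map_sum]
    rfl
  simp_rw [e]
  rw [integral_finsetSum]
  · refine Finset.sum_congr rfl fun i hi => ?_
    have := Finset.mem_range.mp hi
    exact moment_Spp μ c (i + 1) (c - i) (by omega) (by omega) (by omega) hkn
  · intro i _
    exact integrable_of_cont μ ((cont_SS c).mul
      (Complex.continuous_conj.comp ((cont_p _).mul (cont_p _))))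

lemma norm_sq_of_moment {n : ℕ} (μ : Measure (UG n)) {F : UG n → ℂ} {r : ℝ}
    (h : ∫ M, F M * (starRingEnd ℂ) (F M) ∂μ = r) : ∫ M, ‖F M‖ ^ 2 ∂μ = r := by
  have e : ∀ M, F M * (starRingEnd ℂ) (F M) = ((‖F M‖ ^ 2 : ℝ) : ℂ) := by
    intro M
    rw [Complex.mul_conj, Complex.normSq_eq_norm_sq]
  simp_rw [e] at h
  rw [integral_complex_ofReal] at h
  exact_mod_cast h

lemma L1_le {n : ℕ} (μ : Measure (UG n)) [IsProbabilityMeasure μ] {F : UG n → ℂ}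
    (hF : Continuous F) {s : ℝ} (hs : 0 < s) (h : ∫ M, ‖F M‖ ^ 2 ∂μ ≤ s ^ 2) :
    ∫ M, ‖F M‖ ∂μ ≤ s := by
  have h1 : ∫ M, ‖F M‖ ∂μ ≤ ∫ M, ((1 / (2 * s)) * ‖F M‖ ^ 2 + s / 2) ∂μ := by
    refine integral_mono (integrable_of_cont μ hF.norm)
      (integrable_of_cont μ ((continuous_const.mul (hF.norm.pow 2)).add continuous_const)) ?_
    intro M
    have : 0 ≤ (‖F M‖ - s) ^ 2 / (2 * s) := by positivity
    have e : (‖F M‖ - s) ^ 2 / (2 * s) = ((1 / (2 * s)) * ‖F M‖ ^ 2 + s / 2) - ‖F M‖ := by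
      field_simp
      ring
    simp only
    linarith
  rw [integral_add ((integrable_of_cont μ (hF.norm.fun_pow 2)).const_mul _) (integrable_const _),
    integral_const_mul] at h1
  simp only [integral_const, probReal_univ, one_smul] at h1
  have h2 : (1 / (2 * s)) * ∫ M, ‖F M‖ ^ 2 ∂μ ≤ (1 / (2 * s)) * s ^ 2 :=
    mul_le_mul_of_nonneg_left h (by positivity)
  have h3 : (1 / (2 * s)) * s ^ 2 = s / 2 := by field_simp
  linarith

lemma L1_p {n : ℕ} (μ : Measure (UG n)) [IsProbabilityMeasure μ] [μ.IsHaarMeasure]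
    (k : ℕ) (hk : 0 < k) (hkn : k ≤ n) : ∫ M, ‖p k M‖ ∂μ ≤ Real.sqrt k := by
  have hk' : (0 : ℝ) < k := by exact_mod_cast hk
  refine L1_le μ (cont_p k) (Real.sqrt_pos.mpr hk') ?_
  rw [Real.sq_sqrt hk'.le]
  exact (norm_sq_of_moment μ (r := k) (by simpa using moment_p μ k hk hkn)).le

lemma L1_S {n : ℕ} (μ : Measure (UG n)) [IsProbabilityMeasure μ] [μ.IsHaarMeasure]
    (c : ℕ) (hkn : c + 1 ≤ n) :
    ∫ M, ‖SS c M‖ ∂μ ≤ (c + 1 : ℝ) * Real.sqrt (2 * (c + 1 : ℝ)) / 2 := by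
  refine L1_le μ (cont_SS c) (by positivity) ?_
  have h := norm_sq_of_moment μ (F := SS c)
    (r := ∑ i ∈ Finset.range c, (2 * (i + 1 : ℕ) * (c - i : ℕ) : ℝ))
    (by rw [moment_S μ c hkn]; push_cast; rfl)
  rw [h]
  have h2 : ∑ i ∈ Finset.range c, (2 * (i + 1 : ℕ) * (c - i : ℕ) : ℝ)
      ≤ ∑ i ∈ Finset.range c, ((c + 1 : ℝ) ^ 2 / 2) := by
    refine Finset.sum_le_sum fun i hi => ?_
    have := Finset.mem_range.mp hi
    have e : ((i + 1 : ℕ) : ℝ) + ((c - i : ℕ) : ℝ) = c + 1 := by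
      have : i + 1 + (c - i) = c + 1 := by omega
      exact_mod_cast this
    rw [← e]
    nlinarith [sq_nonneg (((i + 1 : ℕ) : ℝ) - ((c - i : ℕ) : ℝ))]
  refine h2.trans ?_
  rw [Finset.sum_const, Finset.card_range, nsmul_eq_mul, div_pow, mul_pow,
    Real.sq_sqrt (by positivity)]
  nlinarith [sq_nonneg (c + 1 : ℝ)]

lemma HasGrad.add {n : ℕ} {G₁ G₂ : UG n → ℂ} {H₁ H₂ : UG n → MT n}
    (h₁ : HasGrad G₁ H₁) (h₂ : HasGrad G₂ H₂) :
    HasGrad (fun M => G₁ M + G₂ M) (fun M => H₁ M + H₂ M) where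
  contG := h₁.contG.add h₂.contG
  contH := h₁.contH.add h₂.contH
  deriv X hX M := by
    have := (h₁.deriv X hX M).add (h₂.deriv X hX M)
    convert! this using 1
    simp [mul_add, Matrix.trace_add]

lemma HasGrad.comp_real {n : ℕ} {G : UG n → ℂ} {H : UG n → MT n} (h : HasGrad G H)
    (hr : ∀ M, G M = ((G M).re : ℂ)) {f f' : ℝ → ℝ} (hf : ∀ x, HasDerivAt f (f' x) x)
    (hf' : Continuous f') :
    HasGrad (fun M => (f (G M).re : ℂ)) (fun M => (f' (G M).re : ℂ) • H M) where
  contG := by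
    have : Continuous f := continuous_iff_continuousAt.mpr fun x => (hf x).continuousAt
    exact Complex.continuous_ofReal.comp (this.comp (Complex.continuous_re.comp h.contG))
  contH := (Complex.continuous_ofReal.comp (hf'.comp (Complex.continuous_re.comp h.contG))).smul
    h.contH
  deriv X hX M := by
    have h1 := h.deriv X hX M
    have h2 : HasDerivAt (fun t : ℝ => (G (eX X hX t * M)).re) (Matrix.trace (X * H M)).re 0 :=
      Complex.reCLM.hasFDerivAt.comp_hasDerivAt (0 : ℝ) h1
    have h3 := h2.ofReal_comp
    have h4 : (Matrix.trace (X * H M)) = ((Matrix.trace (X * H M)).re : ℂ) := by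
      refine h1.unique ?_
      refine h3.congr_of_eventuallyEq ?_
      filter_upwards with t
      exact hr _
    have h5 := ((hf _).comp (0 : ℝ) h2).ofReal_comp
    simp only [eX_zero, one_mul] at h5
    rw [Matrix.mul_smul, Matrix.trace_smul, smul_eq_mul, h4, ← Complex.ofReal_mul]
    exact h5

/-- The random variable. -/
noncomputable def WW {n : ℕ} (j : ℕ) (M : UG n) : ℝ :=
  (p j M + (starRingEnd ℂ) (p j M)).re / Real.sqrt (2 * j)

lemma cont_WW {n : ℕ} (j : ℕ) : Continuous (WW (n := n) j) :=
  (Complex.continuous_re.comp ((cont_p j).add (cont_pbar j))).div_const _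

lemma stein_identity {n : ℕ} (μ : Measure (UG n)) [IsProbabilityMeasure μ] [μ.IsHaarMeasure]
    (c : ℕ) {f f' : ℝ → ℝ} (hf : ∀ x, HasDerivAt f (f' x) x) (hf' : Continuous f') :
    (n : ℝ) * ∫ M, (f' (WW (c + 1) M) - WW (c + 1) M * f (WW (c + 1) M)) ∂μ
      = ∫ M, (f' (WW (c + 1) M) * (p (2 * (c + 1)) M).re
        + 2 / Real.sqrt (2 * (c + 1 : ℕ)) * (f (WW (c + 1) M) * (SS c M).re)) ∂μ := by
  set j := c + 1 with hj
  set r := Real.sqrt (2 * (j : ℝ)) with hr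
  have hj0 : (0 : ℝ) < j := by rw [hj]; positivity
  have hr0 : 0 < r := Real.sqrt_pos.mpr (by positivity)
  have hr2 : r ^ 2 = 2 * j := Real.sq_sqrt (by positivity)
  have hfc : Continuous f := continuous_iff_continuousAt.mpr fun x => (hf x).continuousAt
  have hg := ((hasGrad_p (n := n) j).add (hasGrad_pbar j)).comp_real
    (fun M => by
      apply Complex.ext <;> simp)
    (f := fun x => f (x / r)) (f' := fun x => f' (x / r) / r)
    (fun x => by
      have := (hf (x / r)).comp x ((hasDerivAt_id x).div_const r)
      convert! this using 1
      field_simp)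
    ((hf'.comp (continuous_id.div_const _)).div_const _)
  have h := loop μ hg j
  have e2 : ∀ M : UG n, Matrix.trace ((M : MT n) ^ j *
      (((f' ((p j M + (starRingEnd ℂ) (p j M)).re / r) / r : ℝ) : ℂ) •
        ((j : ℂ) • (M : MT n) ^ j + -((j : ℂ) • star ((M : MT n) ^ j)))))
      = ((f' (WW j M) / r : ℝ) : ℂ) * (j * (p (2 * j) M - n)) := by
    intro M
    rw [Matrix.mul_smul, Matrix.trace_smul, mul_add, Matrix.trace_add, Matrix.mul_neg,
      Matrix.mul_smul, Matrix.mul_smul, Matrix.trace_neg, Matrix.trace_smul, Matrix.trace_smul,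
      pow_mul_star' M le_rfl, ← pow_add, ← two_mul, Nat.sub_self, p_zero]
    simp only [smul_eq_mul, WW, p, ← hr]
    ring
  simp_rw [e2] at h
  have cW : Continuous (fun M : UG n => WW j M) := cont_WW j
  have c1 : Continuous (fun M : UG n => ((f' (WW j M) / r : ℝ) : ℂ) * (j * (p (2 * j) M - n))) :=
    (Complex.continuous_ofReal.comp ((hf'.comp cW).div_const r)).mul
      (continuous_const.mul ((cont_p _).sub continuous_const))
  have c2 : Continuous (fun M : UG n => (∑ i ∈ Finset.range j, p i M * p (j - i) M) *
      (f ((p j M + (starRingEnd ℂ) (p j M)).re / r) : ℂ)) :=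
    (continuous_finsetSum _ fun i _ => (cont_p i).mul (cont_p (j - i))).mul
      (Complex.continuous_ofReal.comp (hfc.comp cW))
  rw [← integral_add (integrable_of_cont μ c2) (integrable_of_cont μ c1)] at h
  have h' := congrArg Complex.re h
  have hre : ∀ F : UG n → ℂ, Continuous F → (∫ M, F M ∂μ).re = ∫ M, (F M).re ∂μ := by
    intro F hF
    exact (integral_re (integrable_of_cont μ hF)).symm
  rw [hre _ (c2.fun_add c1), Complex.zero_re] at h'
  have e3 : ∀ M : UG n, ((∑ i ∈ Finset.range j, p i M * p (j - i) M) *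
      (f ((p j M + (starRingEnd ℂ) (p j M)).re / r) : ℂ)
      + ((f' (WW j M) / r : ℝ) : ℂ) * (j * (p (2 * j) M - n))).re
      = (r / 2) * ((f' (WW j M) * (p (2 * j) M).re
        + 2 / r * (f (WW j M) * (SS c M).re)) - n * (f' (WW j M) - WW j M * f (WW j M))) := by
    intro M
    have hs : ∑ i ∈ Finset.range j, p i M * p (j - i) M = (n : ℂ) * p j M + SS c M :=
      sum_split c M
    have hW : (p j M).re = r / 2 * WW j M := by
      simp only [WW, ← hr]
      field_simp
      simp
      ring
    have hf1 : f ((p j M + (starRingEnd ℂ) (p j M)).re / r) = f (WW j M) := rfl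
    rw [hs, hf1]
    have a1 : (((n : ℂ) * p j M + SS c M) * (f (WW j M) : ℂ)).re
        = ((n : ℝ) * (p j M).re + (SS c M).re) * f (WW j M) := by
      simp [Complex.mul_re, Complex.add_re]
    have a2 : (((f' (WW j M) / r : ℝ) : ℂ) * (j * (p (2 * j) M - n))).re
        = f' (WW j M) / r * (j * ((p (2 * j) M).re - n)) := by
      rw [Complex.re_ofReal_mul, ← Complex.ofReal_natCast, Complex.re_ofReal_mul]
      simp
    rw [Complex.add_re, a1, a2, hW]
    have hjr : (j : ℝ) = r ^ 2 / 2 := by rw [hr2]; ring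
    rw [hjr]
    field_simp
    ring
  simp_rw [e3] at h'
  rw [integral_const_mul] at h'
  have h6 : ∫ M, ((f' (WW j M) * (p (2 * j) M).re
        + 2 / r * (f (WW j M) * (SS c M).re)) - n * (f' (WW j M) - WW j M * f (WW j M))) ∂μ = 0 := by
    rcases mul_eq_zero.mp h' with h0 | h0
    · exact absurd h0 (by positivity)
    · exact h0
  rw [integral_sub, integral_const_mul] at h6
  · linarith
  · exact integrable_of_cont μ (((hf'.comp cW).mul (Complex.continuous_re.comp (cont_p _))).add
      (continuous_const.mul ((hfc.comp cW).mul (Complex.continuous_re.comp (cont_SS _)))))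
  · exact integrable_of_cont μ (continuous_const.mul ((hf'.comp cW).sub (cW.mul (hfc.comp cW))))

lemma stein_bound {n : ℕ} (μ : Measure (UG n)) [IsProbabilityMeasure μ] [μ.IsHaarMeasure]
    (c : ℕ) (hc : 2 * (c + 1) ≤ n) {f f' : ℝ → ℝ} (hf : ∀ x, HasDerivAt f (f' x) x)
    (hf' : Continuous f') (hB0 : ∀ x, |f x| ≤ 4) (hB1 : ∀ x, |f' x| ≤ 4) :
    |∫ M, (f' (WW (c + 1) M) - WW (c + 1) M * f (WW (c + 1) M)) ∂μ|
      ≤ 22 * (c + 1 : ℕ) / n := by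
  have hn : (0 : ℝ) < n := by exact_mod_cast (by omega : 0 < n)
  rw [le_div_iff₀ hn, mul_comm, ← abs_of_pos hn, ← abs_mul,
    stein_identity μ c hf hf']
  set r := Real.sqrt (2 * ((c + 1 : ℕ) : ℝ)) with hr
  have hr0 : 0 < r := Real.sqrt_pos.mpr (by positivity)
  have hr2 : r ^ 2 = 2 * ((c + 1 : ℕ) : ℝ) := Real.sq_sqrt (by positivity)
  have h1 := L1_p μ (2 * (c + 1)) (by omega) hc
  have h2 := L1_S μ c (by omega)
  have e1 : Real.sqrt ((2 * (c + 1) : ℕ) : ℝ) = r := by rw [hr]; push_cast; rfl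
  have e2 : Real.sqrt (2 * (c + 1 : ℝ)) = r := by rw [hr]; push_cast; rfl
  rw [e1] at h1
  rw [e2] at h2
  have h3 : |∫ M, (f' (WW (c + 1) M) * (p (2 * (c + 1)) M).re
        + 2 / r * (f (WW (c + 1) M) * (SS c M).re)) ∂μ|
      ≤ ∫ M, (4 * ‖p (2 * (c + 1)) M‖ + 2 / r * (4 * ‖SS c M‖)) ∂μ := by
    rw [← Real.norm_eq_abs]
    refine norm_integral_le_of_norm_le (integrable_of_cont μ
      ((continuous_const.mul (cont_p _).norm).add
        (continuous_const.mul (continuous_const.mul (cont_SS _).norm)))) ?_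
    filter_upwards with M
    rw [Real.norm_eq_abs]
    refine (abs_add_le _ _).trans (add_le_add ?_ ?_)
    · rw [abs_mul]
      exact mul_le_mul (hB1 _) (Complex.abs_re_le_norm _) (abs_nonneg _) (by norm_num)
    · rw [abs_mul, abs_of_pos (by positivity : 0 < 2 / r), abs_mul]
      refine mul_le_mul_of_nonneg_left ?_ (by positivity)
      exact mul_le_mul (hB0 _) (Complex.abs_re_le_norm _) (abs_nonneg _) (by norm_num)
  refine h3.trans ?_
  rw [integral_add ((integrable_of_cont μ (cont_p _).norm).const_mul _)
    (((integrable_of_cont μ (cont_SS _).norm).const_mul _).const_mul _),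
    integral_const_mul, integral_const_mul, integral_const_mul]
  have h4 : 2 / r * (4 * ∫ M, ‖SS c M‖ ∂μ) ≤ 2 / r * (4 * ((c + 1 : ℝ) * r / 2)) := by gcongr
  have h5 : 2 / r * (4 * ((c + 1 : ℝ) * r / 2)) = 4 * (c + 1 : ℝ) := by field_simp
  have h6 : r ≤ 2 * (c + 1 : ℝ) := by
    push_cast at hr2
    have : (1 : ℝ) ≤ c + 1 := by have := Nat.cast_nonneg (α := ℝ) c; linarith
    nlinarith
  push_cast
  have : (0 : ℝ) ≤ c := Nat.cast_nonneg c
  linarith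


/-- Unnormalised Gaussian weight. -/
noncomputable def gw (t : ℝ) : ℝ := Real.exp (-t ^ 2 / 2)

lemma cont_gw : Continuous gw := by unfold gw; fun_prop

lemma gw_pos (t : ℝ) : 0 < gw t := Real.exp_pos _

lemma gw_eq (t : ℝ) : gw t = Real.exp (-(1 / 2) * t ^ 2) := by
  unfold gw; congr 1; ring

lemma integrable_gw : Integrable gw := by
  have := integrable_exp_neg_mul_sq (b := 1 / 2) (by norm_num)
  exact this.congr (Filter.Eventually.of_forall fun t => (gw_eq t).symm)

lemma integral_gw : ∫ t, gw t = Real.sqrt (2 * Real.pi) := by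
  simp_rw [gw_eq]
  rw [integral_gaussian]
  congr 1
  ring

lemma sqrt_two_pi_le : Real.sqrt (2 * Real.pi) ≤ 3 := by
  rw [Real.sqrt_le_left (by norm_num)]
  have := Real.pi_lt_four
  linarith

lemma mills1 {x : ℝ} (hx : 0 ≤ x) : ∫ t in Set.Ioi x, gw t ≤ 3 * gw x := by
  have h1 : ∫ t in Set.Ioi x, gw t ≤ ∫ t in Set.Ioi x, gw x * gw (t - x) := by
    refine setIntegral_mono_on integrable_gw.integrableOn
      ((integrable_gw.comp_sub_right x).const_mul _).integrableOn measurableSet_Ioi ?_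
    intro t ht
    have ht : x < t := ht
    unfold gw
    rw [← Real.exp_add, Real.exp_le_exp]
    nlinarith
  have h2 : ∫ t in Set.Ioi x, gw x * gw (t - x) ≤ ∫ t, gw x * gw (t - x) :=
    setIntegral_le_integral ((integrable_gw.comp_sub_right x).const_mul _)
      (Filter.Eventually.of_forall fun t => (mul_pos (gw_pos _) (gw_pos _)).le)
  have h3 : ∫ t, gw x * gw (t - x) = gw x * Real.sqrt (2 * Real.pi) := by
    rw [integral_const_mul, integral_sub_right_eq_self gw x, integral_gw]
  rw [h3] at h2
  have := mul_le_mul_of_nonneg_left sqrt_two_pi_le (gw_pos x).le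
  linarith

lemma mills2 {x : ℝ} (hx : 0 ≤ x) : x * ∫ t in Set.Ioi x, gw t ≤ gw x := by
  rcases hx.eq_or_lt with rfl | hx
  · simpa using (gw_pos 0).le
  have h1 : ∫ t in Set.Ioi x, gw t ≤ ∫ t in Set.Ioi x, Real.exp (x ^ 2 / 2) * Real.exp (-x * t) := by
    refine setIntegral_mono_on integrable_gw.integrableOn
      ((integrableOn_exp_mul_Ioi (by linarith : -x < 0) x).const_mul _) measurableSet_Ioi ?_
    intro t _
    unfold gw
    rw [← Real.exp_add, Real.exp_le_exp]
    nlinarith [sq_nonneg (t - x)]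
  rw [integral_const_mul, integral_exp_mul_Ioi (by linarith : -x < 0) x] at h1
  have h2 := mul_le_mul_of_nonneg_left h1 hx.le
  refine h2.trans (le_of_eq ?_)
  have : gw x = Real.exp (x ^ 2 / 2) * Real.exp (-x * x) := by
    unfold gw
    rw [← Real.exp_add]
    congr 1
    ring
  rw [this]
  field_simp

lemma stein_solution (h : ℝ → ℝ) (hc : Continuous h) (h0 : ∀ x, 0 ≤ h x) (h1 : ∀ x, h x ≤ 1) :
    ∃ f f' : ℝ → ℝ, (∀ x, HasDerivAt f (f' x) x) ∧ Continuous f' ∧ (∀ x, |f x| ≤ 4) ∧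
      (∀ x, |f' x| ≤ 4) ∧ ∀ x, f' x - x * f x = h x - ∫ y, h y ∂(gaussianReal 0 1) := by
  set c := ∫ y, h y ∂(gaussianReal 0 1) with hcdef
  have hpos : 0 < Real.sqrt (2 * Real.pi) := Real.sqrt_pos.mpr (by positivity)
  have hcg : Real.sqrt (2 * Real.pi) * c = ∫ y, h y * gw y := by
    rw [hcdef, integral_gaussianReal_eq_integral_smul (by norm_num), ← integral_const_mul]
    congr 1
    funext y
    simp only [gaussianPDFReal, smul_eq_mul, gw, NNReal.coe_one, mul_one, sub_zero]
    field_simp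
  have hInt : Integrable (fun y => h y * gw y) := by
    refine integrable_gw.mono' (hc.mul cont_gw).aestronglyMeasurable ?_
    filter_upwards with y
    rw [Real.norm_eq_abs, abs_of_nonneg (mul_nonneg (h0 y) (gw_pos y).le)]
    exact mul_le_of_le_one_left (gw_pos y).le (h1 y)
  have hc0 : 0 ≤ c := integral_nonneg h0
  have hc1 : c ≤ 1 := by
    have : ∫ y, h y * gw y ≤ ∫ y, gw y :=
      integral_mono hInt integrable_gw fun y => mul_le_of_le_one_left (gw_pos y).le (h1 y)
    rw [← hcg, integral_gw] at this
    nlinarith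
  set u : ℝ → ℝ := fun t => (h t - c) * gw t with hu
  have huc : Continuous u := (hc.sub continuous_const).mul cont_gw
  have hub : ∀ t, ‖u t‖ ≤ gw t := by
    intro t
    rw [hu, Real.norm_eq_abs, abs_mul, abs_of_pos (gw_pos t)]
    refine mul_le_of_le_one_left (gw_pos t).le ?_
    rw [abs_le]
    constructor <;> linarith [h0 t, h1 t]
  have hui : Integrable u := integrable_gw.mono' huc.aestronglyMeasurable
    (Filter.Eventually.of_forall hub)
  have hu0 : ∫ t, u t = 0 := by
    simp only [hu, sub_mul]
    rw [integral_sub hInt (integrable_gw.const_mul c), integral_const_mul, integral_gw, ← hcg]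
    ring
  set F : ℝ → ℝ := fun x => ∫ t in Set.Iic x, u t with hF
  have hFd : ∀ x, HasDerivAt F (u x) x := by
    intro x
    have e : F = fun x => F 0 + ∫ t in (0 : ℝ)..x, u t := by
      funext x
      rw [← intervalIntegral.integral_Iic_sub_Iic hui.integrableOn hui.integrableOn]
      simp [hF]
    rw [e]
    exact (intervalIntegral.integral_hasDerivAt_right (huc.intervalIntegrable _ _)
      (huc.stronglyMeasurableAtFilter _ _) huc.continuousAt).const_add _
  have hFb : ∀ x, |F x| ≤ ∫ t in Set.Ioi |x|, gw t := by
    intro x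
    rcases le_total 0 x with hx | hx
    · rw [abs_of_nonneg hx]
      have e : F x = -∫ t in Set.Ioi x, u t := by
        have := intervalIntegral.integral_Iic_add_Ioi (b := x) hui.integrableOn hui.integrableOn
        rw [hu0] at this
        simp only [hF]
        linarith
      rw [e, abs_neg, ← Real.norm_eq_abs]
      exact norm_integral_le_of_norm_le integrable_gw.integrableOn
        (Filter.Eventually.of_forall hub)
    · rw [abs_of_nonpos hx, ← integral_comp_neg_Iic x gw, ← Real.norm_eq_abs]
      have e : ∀ t, gw (-t) = gw t := by intro t; simp [gw]
      simp_rw [e]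
      exact norm_integral_le_of_norm_le integrable_gw.integrableOn
        (Filter.Eventually.of_forall hub)
  set f : ℝ → ℝ := fun x => Real.exp (x ^ 2 / 2) * F x with hf
  have hgw : ∀ x : ℝ, Real.exp (x ^ 2 / 2) * gw |x| = 1 := by
    intro x
    unfold gw
    rw [← Real.exp_add, sq_abs, neg_div, add_neg_cancel, Real.exp_zero]
  have hfx : ∀ x, |f x| ≤ 3 := by
    intro x
    rw [hf, abs_mul, Real.abs_exp]
    have h2 := (hFb x).trans (mills1 (abs_nonneg x))
    have h3 := mul_le_mul_of_nonneg_left h2 (Real.exp_pos (x ^ 2 / 2)).le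
    have h4 := hgw x
    linarith
  have hxf : ∀ x, |x * f x| ≤ 1 := by
    intro x
    rw [hf, abs_mul, abs_mul, Real.abs_exp]
    have h2 := (mul_le_mul_of_nonneg_left (hFb x) (abs_nonneg x)).trans (mills2 (abs_nonneg x))
    have h3 := mul_le_mul_of_nonneg_left h2 (Real.exp_pos (x ^ 2 / 2)).le
    have h4 := hgw x
    linarith
  have hfd : ∀ x, HasDerivAt f (x * f x + (h x - c)) x := by
    intro x
    have h2 : HasDerivAt (fun x : ℝ => Real.exp (x ^ 2 / 2)) (Real.exp (x ^ 2 / 2) * x) x := by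
      have := (((hasDerivAt_id x).pow 2).div_const 2).exp
      convert! this using 1
      simp
    have h3 := h2.mul (hFd x)
    convert! h3 using 1
    have : Real.exp (x ^ 2 / 2) * gw x = 1 := by
      unfold gw
      rw [← Real.exp_add, neg_div, add_neg_cancel, Real.exp_zero]
    simp only [hf, hu]
    linear_combination (-(h x - c)) * this
  have hfc : Continuous f := continuous_iff_continuousAt.mpr fun x => (hfd x).continuousAt
  refine ⟨f, fun x => x * f x + (h x - c), hfd,
    (continuous_id.mul hfc).add (hc.sub continuous_const), fun x => (hfx x).trans (by norm_num),
    ?_, fun x => by ring⟩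
  intro x
  have h2 := abs_le.mp (hxf x)
  rw [abs_le]
  constructor <;> linarith [h0 x, h1 x]

/-- Continuous approximations of the indicator of a half-line. -/
noncomputable def ramp (x₀ : ℝ) (m : ℕ) (x : ℝ) : ℝ := max 0 (min 1 (1 - m * (x - x₀)))

lemma cont_ramp (x₀ : ℝ) (m : ℕ) : Continuous (ramp x₀ m) := by
  unfold ramp; fun_prop

lemma ramp_nonneg (x₀ : ℝ) (m : ℕ) (x : ℝ) : 0 ≤ ramp x₀ m x := le_max_left _ _

lemma ramp_le (x₀ : ℝ) (m : ℕ) (x : ℝ) : ramp x₀ m x ≤ 1 :=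
  max_le (by norm_num) (min_le_left _ _)

lemma tendsto_ramp (x₀ : ℝ) (ν : Measure ℝ) [IsProbabilityMeasure ν] :
    Filter.Tendsto (fun m => ∫ x, ramp x₀ m x ∂ν) Filter.atTop (nhds (ν.real (Set.Iic x₀))) := by
  rw [← integral_indicator_one measurableSet_Iic]
  refine tendsto_integral_of_dominated_convergence (fun _ => (1 : ℝ))
    (fun m => (cont_ramp x₀ m).aestronglyMeasurable) (integrable_const _) ?_ ?_
  · intro m
    filter_upwards with x
    rw [Real.norm_eq_abs, abs_of_nonneg (ramp_nonneg _ _ _)]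
    exact ramp_le _ _ _
  · filter_upwards with x
    by_cases hx : x ≤ x₀
    · rw [Set.indicator_of_mem (show x ∈ Set.Iic x₀ from hx)]
      refine tendsto_const_nhds.congr fun m => ?_
      have : (m : ℝ) * (x - x₀) ≤ 0 :=
        mul_nonpos_of_nonneg_of_nonpos (Nat.cast_nonneg m) (by linarith)
      rw [ramp, min_eq_left (by linarith)]
      simp
    · rw [Set.indicator_of_notMem (show x ∉ Set.Iic x₀ from hx)]
      push Not at hx
      obtain ⟨N, hN⟩ := exists_nat_gt (1 / (x - x₀))
      refine tendsto_const_nhds.congr' ?_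
      filter_upwards [Filter.eventually_ge_atTop N] with m hm
      have h1 : (N : ℝ) ≤ m := by exact_mod_cast hm
      have h2 : 1 < (m : ℝ) * (x - x₀) := by
        rw [div_lt_iff₀ (by linarith)] at hN
        nlinarith
      rw [ramp, max_eq_left]
      exact (min_le_right _ _).trans (by linarith)

lemma kolmogorov (ν₁ ν₂ : Measure ℝ) [IsProbabilityMeasure ν₁] [IsProbabilityMeasure ν₂] (B : ℝ)
    (h : ∀ g : ℝ → ℝ, Continuous g → (∀ x, 0 ≤ g x) → (∀ x, g x ≤ 1) →
      |∫ x, g x ∂ν₁ - ∫ x, g x ∂ν₂| ≤ B) (x₀ : ℝ) :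
    |ν₁.real (Set.Iic x₀) - ν₂.real (Set.Iic x₀)| ≤ B :=
  le_of_tendsto' ((tendsto_ramp x₀ ν₁).sub (tendsto_ramp x₀ ν₂)).abs fun m =>
    h _ (cont_ramp x₀ m) (ramp_nonneg x₀ m) (ramp_le x₀ m)

lemma Phi_eq (x₀ : ℝ) : Phi x₀ = (gaussianReal 0 1).real (Set.Iic x₀) := by
  rw [measureReal_def, gaussianReal_apply_eq_integral 0 (by norm_num), ENNReal.toReal_ofReal
    (integral_nonneg fun x => gaussianPDFReal_nonneg _ _ _), Phi, ← integral_const_mul]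
  congr 1
  funext x
  simp [gaussianPDFReal]

end TraceCLT


/-- CLT with explicit rate `22·j/n` for traces of powers of Haar-distributed elements of
`U(n,ℂ)`: for all `n, j ≥ 1` and all `x₀`, `|P(W ≤ x₀) − Φ(x₀)| ≤ 22·j/n`, where
`W = (Tr(M^j) + conj(Tr(M^j)))/√(2j)` (a real number, recorded via the real part). -/
theorem u_trace_power_clt (n j : ℕ) (hn : 0 < n) (hj : 0 < j)
    (μ : Measure (Matrix.unitaryGroup (Fin n) ℂ)) [IsProbabilityMeasure μ]
    [μ.IsHaarMeasure] (x₀ : ℝ) :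
    |(μ {M : Matrix.unitaryGroup (Fin n) ℂ |
        (trU M j + (starRingEnd ℂ) (trU M j)).re / Real.sqrt (2 * j) ≤ x₀}).toReal
        - Phi x₀| ≤ 22 * j / n := by
  obtain ⟨c, rfl⟩ : ∃ c, j = c + 1 := ⟨j - 1, by omega⟩
  have htr : ∀ M : Matrix.unitaryGroup (Fin n) ℂ, trU M ((c + 1 : ℕ) : ℤ) = TraceCLT.p (c + 1) M := by
    intro M
    rw [trU, zpow_natCast]
    rfl
  have hW : Measurable (TraceCLT.WW (n := n) (c + 1)) := (TraceCLT.cont_WW _).measurable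
  have hset : (μ {M : Matrix.unitaryGroup (Fin n) ℂ |
        (trU M ((c + 1 : ℕ) : ℤ) + (starRingEnd ℂ) (trU M ((c + 1 : ℕ) : ℤ))).re /
          Real.sqrt (2 * ((c + 1 : ℕ) : ℝ)) ≤ x₀}).toReal
      = (μ.map (TraceCLT.WW (c + 1))).real (Set.Iic x₀) := by
    rw [measureReal_def, Measure.map_apply hW measurableSet_Iic]
    simp_rw [htr]
    rfl
  rw [hset, TraceCLT.Phi_eq]
  have : IsProbabilityMeasure (μ.map (TraceCLT.WW (c + 1))) :=
    Measure.isProbabilityMeasure_map hW.aemeasurable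
  have hn0 : (0 : ℝ) < n := by exact_mod_cast hn
  by_cases hc : 2 * (c + 1) ≤ n
  · refine TraceCLT.kolmogorov _ _ _ ?_ x₀
    intro g hg h0 h1
    obtain ⟨f, f', hf, hf', hB0, hB1, hs⟩ := TraceCLT.stein_solution g hg h0 h1
    have key := TraceCLT.stein_bound μ c hc hf hf' hB0 hB1
    simp_rw [hs] at key
    have hi : Integrable (fun M : Matrix.unitaryGroup (Fin n) ℂ =>
        g (TraceCLT.WW (c + 1) M)) μ :=
      TraceCLT.integrable_of_cont μ (hg.comp (TraceCLT.cont_WW _))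
    rw [integral_sub hi (integrable_const _)] at key
    simp only [integral_const, probReal_univ, one_smul] at key
    rw [integral_map hW.aemeasurable hg.aestronglyMeasurable]
    exact key
  · have h1 : (1 : ℝ) ≤ 22 * ((c + 1 : ℕ) : ℝ) / n := by
      rw [le_div_iff₀ hn0]
      have : n ≤ 22 * (c + 1) := by omega
      rw [one_mul]
      exact_mod_cast this
    refine le_trans ?_ h1
    have a1 := measureReal_le_one (μ := μ.map (TraceCLT.WW (c + 1))) (s := Set.Iic x₀)
    have a2 := measureReal_le_one (μ := gaussianReal 0 1) (s := Set.Iic x₀)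
    have b1 := measureReal_nonneg (μ := μ.map (TraceCLT.WW (c + 1))) (s := Set.Iic x₀)
    have b2 := measureReal_nonneg (μ := gaussianReal 0 1) (s := Set.Iic x₀)
    rw [abs_le]
    constructor <;> linarith
end

section
/- Let n and j be positive integers with 4j ≤ n − 1, and let M be distributed according to the Haar probability measure on SO(n,ℝ). Then E[Tr(M^{2j})] = 1 and Var(Tr(M^{2j})) = 2j. -/
open MeasureTheory ProbabilityTheory Matrix

/-- The special orthogonal group `SO(n,ℝ)`: real orthogonal `n × n` matrices of
determinant `1`, as a subgroup of the orthogonal group. -/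
def SO (n : ℕ) : Subgroup (Matrix.orthogonalGroup (Fin n) ℝ) where
  carrier := {M | Matrix.det (M : Matrix (Fin n) (Fin n) ℝ) = 1}
  mul_mem' := by
    intro a b ha hb
    simp only [Set.mem_setOf_eq, Matrix.UnitaryGroup.mul_val, Matrix.det_mul] at *
    rw [ha, hb, mul_one]
  one_mem' := by
    simp only [Set.mem_setOf_eq, Matrix.UnitaryGroup.one_val, Matrix.det_one]
  inv_mem' := by
    intro a ha
    simp only [Set.mem_setOf_eq, Matrix.UnitaryGroup.inv_val] at *
    rw [Matrix.star_eq_conjTranspose, Matrix.det_conjTranspose, ha, star_one]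

/-- The trace of the `k`-th power (`k : ℤ`, negative powers via the inverse) of an
element of `SO(n,ℝ)`. -/
noncomputable def trSO {n : ℕ} (M : SO n) (k : ℤ) : ℝ :=
  Matrix.trace (((M ^ k : SO n) : Matrix.orthogonalGroup (Fin n) ℝ) :
    Matrix (Fin n) (Fin n) ℝ)

namespace SOTrace

abbrev Mat (n : ℕ) := Matrix (Fin n) (Fin n) ℝ

/-- the underlying matrix -/
def mv {n : ℕ} (M : SO n) : Mat n := ((M : Matrix.orthogonalGroup (Fin n) ℝ) : Mat n)

lemma mv_mul {n : ℕ} (M N : SO n) : mv (M * N) = mv M * mv N := rfl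

lemma mv_pow {n : ℕ} (M : SO n) (k : ℕ) : mv (M ^ k) = mv M ^ k := by
  induction k with
  | zero => rfl
  | succ k ih => rw [pow_succ, pow_succ, mv_mul, ih]

lemma trSO_eq {n : ℕ} (M : SO n) (k : ℕ) : trSO M (k : ℤ) = trace (mv M ^ k) := by
  rw [trSO, zpow_natCast, ← mv_pow]; rfl

lemma continuous_mv {n : ℕ} : Continuous (mv : SO n → Mat n) :=
  continuous_subtype_val.comp continuous_subtype_val

instance (n : ℕ) : BorelSpace (Mat n) := inferInstanceAs (BorelSpace (Fin n → Fin n → ℝ))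
instance (n : ℕ) : BorelSpace (Matrix.orthogonalGroup (Fin n) ℝ) := Subtype.borelSpace _
instance (n : ℕ) : BorelSpace (SO n) := Subtype.borelSpace _

lemma mv_mul_transpose {n : ℕ} (M : SO n) : mv M * (mv M)ᵀ = 1 := by
  have := (Matrix.mem_unitaryGroup_iff).1 (M : Matrix.orthogonalGroup (Fin n) ℝ).2
  rw [Matrix.star_eq_conjTranspose, Matrix.conjTranspose_eq_transpose_of_trivial] at this
  exact this

lemma transpose_mul_mv {n : ℕ} (M : SO n) : (mv M)ᵀ * mv M = 1 :=
  mul_eq_one_comm.1 (mv_mul_transpose M)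

lemma det_mv {n : ℕ} (M : SO n) : (mv M).det = 1 := M.2

/-- constructor -/
def mk {n : ℕ} (A : Mat n) (h1 : A * Aᵀ = 1) (h2 : A.det = 1) : SO n :=
  ⟨⟨A, by
    rw [Matrix.mem_orthogonalGroup_iff]
    exact h1⟩, h2⟩

lemma mv_mk {n : ℕ} (A : Mat n) (h1 : A * Aᵀ = 1) (h2 : A.det = 1) : mv (mk A h1 h2) = A := rfl

instance (n : ℕ) : CompactSpace (SO n) := by
  have hr : Set.range (mv : SO n → Mat n) = {A | A * Aᵀ = 1 ∧ A.det = 1} := by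
    ext A
    constructor
    · rintro ⟨M, rfl⟩
      exact ⟨mv_mul_transpose M, det_mv M⟩
    · rintro ⟨h1, h2⟩
      exact ⟨mk A h1 h2, rfl⟩
  have hcl : IsClosed (Set.range (mv : SO n → Mat n)) := by
    rw [hr]
    apply IsClosed.inter
    · exact isClosed_eq (by fun_prop) (by fun_prop)
    · exact isClosed_eq (by fun_prop) (by fun_prop)
  have hemb : Topology.IsEmbedding (mv : SO n → Mat n) :=
    Topology.IsEmbedding.subtypeVal.comp Topology.IsEmbedding.subtypeVal
  have hcpt : IsCompact (Set.range (mv : SO n → Mat n)) := by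
    have hK : IsCompact (Set.univ.pi (fun _ : Fin n => Set.univ.pi (fun _ : Fin n => Set.Icc (-1:ℝ) 1))) :=
      isCompact_univ_pi fun _ => isCompact_univ_pi fun _ => isCompact_Icc
    refine IsCompact.of_isClosed_subset (X := Fin n → Fin n → ℝ) hK hcl ?_
    rintro _ ⟨M, rfl⟩ i _ j _
    have := entry_norm_bound_of_unitary (M : Matrix.orthogonalGroup (Fin n) ℝ).2 i j
    rw [Real.norm_eq_abs, abs_le] at this
    exact this
  rw [← isCompact_univ_iff, hemb.isCompact_iff, Set.image_univ]
  exact hcpt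

lemma integrable_of_cont {n : ℕ} (μ : Measure (SO n)) [IsProbabilityMeasure μ] {f : SO n → ℝ}
    (hf : Continuous f) : Integrable f μ := by
  have := hf.integrable_of_hasCompactSupport (μ := μ) (HasCompactSupport.of_compactSpace f)
  exact this

lemma exp_mul_transpose {n : ℕ} (X : Mat n) (hX : Xᵀ = -X) :
    NormedSpace.exp X * (NormedSpace.exp X)ᵀ = 1 := by
  rw [← Matrix.exp_transpose, hX, Matrix.exp_neg]
  apply Matrix.mul_nonsing_inv
  exact (Matrix.isUnit_iff_isUnit_det _).1 (Matrix.isUnit_exp X)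

lemma det_exp_skew {n : ℕ} (X : Mat n) (hX : Xᵀ = -X) :
    (NormedSpace.exp X).det = 1 := by
  have h1 := exp_mul_transpose ((1/2 : ℝ) • X) (by rw [transpose_smul, hX, smul_neg])
  have h2 : X = 2 • ((1/2 : ℝ) • X) := by
    rw [two_nsmul, ← add_smul]; norm_num
  rw [h2, Matrix.exp_nsmul, det_pow]
  have := congrArg Matrix.det h1
  rw [det_mul, det_transpose, det_one] at this
  rw [sq, this]

lemma smul_skew {n : ℕ} {X : Mat n} (hX : Xᵀ = -X) (t : ℝ) : (t • X)ᵀ = -(t • X) := by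
  rw [transpose_smul, hX, smul_neg]

/-- one-parameter subgroup -/
noncomputable def gam {n : ℕ} (X : Mat n) (hX : Xᵀ = -X) (t : ℝ) : SO n :=
  mk (NormedSpace.exp (t • X)) (exp_mul_transpose _ (smul_skew hX t)) (det_exp_skew _ (smul_skew hX t))

lemma mv_gam_mul {n : ℕ} (X : Mat n) (hX : Xᵀ = -X) (t : ℝ) (M : SO n) :
    mv (gam X hX t * M) = NormedSpace.exp (t • X) * mv M := rfl

lemma integral_deriv_eq_zero {n : ℕ} (μ : Measure (SO n)) [IsProbabilityMeasure μ] [μ.IsHaarMeasure]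
    (X : Mat n) (hX : Xᵀ = -X) (f f' : SO n → ℝ) (hf : Continuous f) (hf' : Continuous f')
    (hd : ∀ M t, HasDerivAt (fun t => f (gam X hX t * M)) (f' (gam X hX t * M)) t) :
    ∫ M, f' M ∂μ = 0 := by
  obtain ⟨C, hC⟩ : ∃ C, ∀ M, ‖f' M‖ ≤ C := by
    obtain ⟨C, hC⟩ := isCompact_univ.exists_bound_of_continuousOn hf'.continuousOn
    exact ⟨C, fun M => hC M trivial⟩
  have key := hasDerivAt_integral_of_dominated_loc_of_deriv_le (μ := μ) (x₀ := (0:ℝ))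
    (F := fun t M => f (gam X hX t * M)) (F' := fun t M => f' (gam X hX t * M))
    (s := Set.univ) (bound := fun _ => C) Filter.univ_mem
    (Filter.Eventually.of_forall fun t =>
      (integrable_of_cont μ (hf.comp (continuous_const.mul continuous_id))).aestronglyMeasurable)
    (integrable_of_cont μ (hf.comp (continuous_const.mul continuous_id)))
    (integrable_of_cont μ (hf'.comp (continuous_const.mul continuous_id))).aestronglyMeasurable
    (Filter.Eventually.of_forall fun M t _ => hC _)
    (integrable_const C)
    (Filter.Eventually.of_forall fun M t _ => hd M t)
  have h2 := key.2
  simp only [integral_mul_left_eq_self] at h2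
  exact (h2.unique (hasDerivAt_const _ _))

section
attribute [local instance] Matrix.linftyOpNormedRing Matrix.linftyOpNormedAlgebra

lemma hasDeriv_tr {n : ℕ} (X M Y : Mat n) (k : ℕ) (t : ℝ) :
    HasDerivAt (fun t : ℝ => trace (Y * (NormedSpace.exp (t • X) * M) ^ k))
      (∑ i ∈ Finset.range k, trace (Y * ((NormedSpace.exp (t • X) * M) ^ (k - 1 - i) * X *
        (NormedSpace.exp (t • X) * M) ^ (i + 1)))) t := by
  have h1 : HasDerivAt (fun t : ℝ => NormedSpace.exp (t • X) * M)
      (X * NormedSpace.exp (t • X) * M) t :=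
    (hasDerivAt_exp_smul_const' X t).mul_const M
  have h2 := (h1.fun_pow' k).const_mul Y
  have h3 := (LinearMap.toContinuousLinearMap (Matrix.traceLinearMap (Fin n) ℝ ℝ)).hasFDerivAt.comp_hasDerivAt t h2
  refine HasDerivAt.congr_deriv h3 ?_
  show trace (Y * _) = _
  simp only [Finset.mul_sum, Matrix.trace_sum]
  refine Finset.sum_congr rfl fun i _ => ?_
  rw [pow_succ' _ i, Nat.pred_eq_sub_one]
  simp only [mul_assoc]
end

lemma hasDeriv_tr1 {n : ℕ} (X M : Mat n) (k : ℕ) (t : ℝ) :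
    HasDerivAt (fun t : ℝ => trace ((NormedSpace.exp (t • X) * M) ^ k))
      (k * trace (X * (NormedSpace.exp (t • X) * M) ^ k)) t := by
  have := hasDeriv_tr X M 1 k t
  simp only [one_mul] at this
  refine this.congr_deriv ?_
  rw [Finset.sum_congr rfl (g := fun _ => trace (X * (NormedSpace.exp (t • X) * M) ^ k))]
  · simp
  · intro i hi
    rw [mul_assoc, trace_mul_comm, mul_assoc, ← pow_add]
    congr 3
    have := Finset.mem_range.1 hi
    omega

open MvPolynomial in
lemma hasDeriv_poly (v : ℝ → ℕ → ℝ) (v' : ℕ → ℝ) (t : ℝ)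
    (hv : ∀ l, HasDerivAt (fun t => v t l) (v' l) t) (g : MvPolynomial ℕ ℝ) :
    ∀ B, (∀ l, B ≤ l → l ∉ g.vars) →
    HasDerivAt (fun t => eval (v t) g)
      (∑ l ∈ Finset.range B, eval (v t) (pderiv l g) * v' l) t := by
  have main : ∀ᶠ B in Filter.atTop, HasDerivAt (fun t => eval (v t) g)
      (∑ l ∈ Finset.range B, eval (v t) (pderiv l g) * v' l) t := by
    induction g using MvPolynomial.induction_on with
    | C a =>
      refine Filter.Eventually.of_forall fun B => ?_
      simpa using hasDerivAt_const t a
    | add p q hp hq =>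
      filter_upwards [hp, hq] with B h1 h2
      simpa [add_mul, Finset.sum_add_distrib] using h1.fun_add h2
    | mul_X p i hp =>
      filter_upwards [hp, Filter.eventually_gt_atTop i] with B h1 hB
      have := h1.fun_mul (hv i)
      have e : (fun t => eval (v t) (p * X i)) = fun t => eval (v t) p * v t i := by
        funext t; simp
      rw [e]
      refine this.congr_deriv ?_
      symm
      simp only [Derivation.leibniz, pderiv_X, smul_eq_mul, map_add, map_mul, eval_X, add_mul,
        Finset.sum_add_distrib, Finset.sum_mul]
      rw [add_comm]
      congr 1
      · refine Finset.sum_congr rfl fun l _ => by ring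
      · rw [Finset.sum_eq_single i]
        · simp
        · intro l _ hl
          simp [Pi.single_apply, hl.symm]
        · intro h; exact absurd (Finset.mem_range.2 hB) h
  intro B hB
  obtain ⟨B1, h1, h2⟩ := (main.and (Filter.eventually_ge_atTop B)).exists
  rw [← Finset.sum_subset (Finset.range_subset_range.2 h2)] at h1
  · exact h1
  · intro l _ hl
    rw [pderiv_eq_zero_of_notMem_vars (hB l (by simpa using hl))]
    simp

end SOTrace

namespace SOTrace

/-- absolute difference -/
def ad (a b : ℕ) : ℕ := (a - b) + (b - a)

/-- power sums -/
noncomputable def pm {n : ℕ} (M : SO n) (l : ℕ) : ℝ := trace (mv M ^ l)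

lemma continuous_pm {n : ℕ} (l : ℕ) : Continuous (fun M : SO n => pm M l) := by
  unfold pm
  exact (continuous_mv.pow l).matrix_trace

lemma continuous_eval {n : ℕ} (f : MvPolynomial ℕ ℝ) :
    Continuous (fun M : SO n => MvPolynomial.eval (pm M) f) := by
  induction f using MvPolynomial.induction_on with
  | C a => simpa using continuous_const
  | add p q hp hq => simp only [map_add]; exact hp.add hq
  | mul_X p i hp => simp only [map_mul, MvPolynomial.eval_X]; exact hp.mul (continuous_pm i)

/-- The Haar functional -/
noncomputable def Psi {n : ℕ} (μ : Measure (SO n)) [IsProbabilityMeasure μ] :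
    MvPolynomial ℕ ℝ →ₗ[ℝ] ℝ where
  toFun f := ∫ M, MvPolynomial.eval (pm M) f ∂μ
  map_add' f g := by
    simp only [map_add]
    exact integral_add (integrable_of_cont μ (continuous_eval f)) (integrable_of_cont μ (continuous_eval g))
  map_smul' c f := by
    simp only [MvPolynomial.smul_eval, RingHom.id_apply, smul_eq_mul]
    exact integral_const_mul _ _

lemma trace_pow_transpose {n : ℕ} (M : SO n) (a b : ℕ) :
    trace (mv M ^ a * (mv M ^ b)ᵀ) = pm M (ad a b) := by
  have key : ∀ b c : ℕ, mv M ^ (c + b) * (mv M ^ b)ᵀ = mv M ^ c := by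
    intro b c
    rw [pow_add, mul_assoc, ← mv_pow M b, mv_mul_transpose, mul_one]
  unfold ad pm
  rcases le_total b a with h | h
  · obtain ⟨c, rfl⟩ := Nat.exists_eq_add_of_le' h
    rw [key]; congr 2; omega
  · obtain ⟨c, rfl⟩ := Nat.exists_eq_add_of_le' h
    rw [← trace_transpose, transpose_mul, transpose_transpose, key]; congr 2; omega

/-- elementary skew matrices -/
noncomputable def Xab {n : ℕ} (a b : Fin n) : Mat n := Matrix.single a b 1 - Matrix.single b a 1

lemma Xab_skew {n : ℕ} (a b : Fin n) : (Xab a b)ᵀ = - Xab a b := by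
  simp [Xab, transpose_sub, Matrix.transpose_single]

lemma tr_single {n : ℕ} (a b : Fin n) (A : Mat n) : trace (Matrix.single a b 1 * A) = A b a := by
  simp [Matrix.trace_single_mul]

lemma tr_Xab {n : ℕ} (a b : Fin n) (A : Mat n) : trace (Xab a b * A) = A b a - A a b := by
  rw [Xab, sub_mul, trace_sub, tr_single, tr_single]

lemma sum_XX {n : ℕ} (A B : Mat n) :
    ∑ a, ∑ b, trace (Xab a b * A) * trace (Xab a b * B) = 2 * (trace (A * Bᵀ) - trace (A * B)) := by
  simp only [tr_Xab]
  have h1 : trace (A * Bᵀ) = ∑ a, ∑ b, A a b * B a b := by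
    simp [trace, Matrix.mul_apply]
  have h1' : trace (A * Bᵀ) = ∑ a, ∑ b, A b a * B b a := by
    rw [h1, Finset.sum_comm]
  have h2 : trace (A * B) = ∑ a, ∑ b, A a b * B b a := by
    simp [trace, Matrix.mul_apply]
  have h2' : trace (A * B) = ∑ a, ∑ b, A b a * B a b := by
    rw [h2, Finset.sum_comm]
  have : 2 * (trace (A * Bᵀ) - trace (A * B)) =
    trace (A * Bᵀ) + trace (A * Bᵀ) - trace (A * B) - trace (A * B) := by ring
  rw [this]
  nth_rewrite 1 [h1]
  nth_rewrite 1 [h1']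
  nth_rewrite 1 [h2]
  rw [h2']
  simp only [← Finset.sum_add_distrib, ← Finset.sum_sub_distrib]
  refine Finset.sum_congr rfl fun a _ => Finset.sum_congr rfl fun b _ => by ring

lemma tr_XAXB {n : ℕ} (a b : Fin n) (A B : Mat n) :
    trace (Xab a b * (A * Xab a b * B)) =
      A b a * B b a - A b b * B a a - A a a * B b b + A a b * B a b := by
  have h : ∀ c d e f : Fin n, trace (Matrix.single c d 1 * (A * Matrix.single e f 1 * B)) = A d e * B f c := by
    intro c d e f
    rw [tr_single, mul_assoc, Matrix.mul_apply]
    rw [Finset.sum_eq_single e]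
    · simp
    · intro x _ hx
      simp [Matrix.single_mul_apply_of_ne, hx]
    · simp
  simp only [Xab, sub_mul, mul_sub, trace_sub, h]
  ring

lemma sum_XAXB {n : ℕ} (A B : Mat n) :
    ∑ a, ∑ b, trace (Xab a b * (A * Xab a b * B)) = 2 * (trace (A * Bᵀ) - trace A * trace B) := by
  simp only [tr_XAXB]
  have h1 : trace (A * Bᵀ) = ∑ a, ∑ b, A a b * B a b := by
    simp [trace, Matrix.mul_apply]
  have h1' : trace (A * Bᵀ) = ∑ a, ∑ b, A b a * B b a := by
    rw [h1, Finset.sum_comm]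
  have h2 : trace A * trace B = ∑ a, ∑ b, A a a * B b b := by
    simp [trace, Finset.sum_mul_sum]
  have h2' : trace A * trace B = ∑ a, ∑ b, A b b * B a a := by
    rw [h2, Finset.sum_comm]
  have : 2 * (trace (A * Bᵀ) - trace A * trace B) =
    trace (A * Bᵀ) + trace (A * Bᵀ) - trace A * trace B - trace A * trace B := by ring
  rw [this]
  nth_rewrite 1 [h1]
  nth_rewrite 1 [h1']
  nth_rewrite 1 [h2]
  rw [h2']
  simp only [← Finset.sum_add_distrib, ← Finset.sum_sub_distrib]
  refine Finset.sum_congr rfl fun a _ => Finset.sum_congr rfl fun b _ => by ring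

open MvPolynomial in
theorem loop_haar {n : ℕ} (μ : Measure (SO n)) [IsProbabilityMeasure μ] [μ.IsHaarMeasure]
    (k : ℕ) (hk : 1 ≤ k) (g : MvPolynomial ℕ ℝ) (B : ℕ) (hB : ∀ l, B ≤ l → l ∉ g.vars) :
    ((n : ℝ) - 1) * Psi μ (X k * g) =
      ∑ i ∈ Finset.Ico 1 k, Psi μ ((X (ad k (2 * i)) - X i * X (k - i)) * g) +
      ∑ l ∈ Finset.range B, (l : ℝ) * Psi μ ((X (ad k l) - X (k + l)) * pderiv l g) := by
  let F' : Fin n → Fin n → SO n → ℝ := fun a b M =>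
    (∑ i ∈ Finset.range k, trace (Xab a b * (mv M ^ (k - 1 - i) * Xab a b * mv M ^ (i + 1)))) *
      eval (pm M) g + trace (Xab a b * mv M ^ k) *
      ∑ l ∈ Finset.range B, eval (pm M) (pderiv l g) * (l * trace (Xab a b * mv M ^ l))
  have hcF' : ∀ a b, Continuous (F' a b) := by
    intro a b
    refine Continuous.add (Continuous.mul ?_ (continuous_eval g)) (Continuous.mul ?_ ?_)
    · refine continuous_finsetSum _ fun i _ => Continuous.matrix_trace ?_
      exact continuous_const.mul (((continuous_mv.pow _).mul continuous_const).mul (continuous_mv.pow _))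
    · exact Continuous.matrix_trace (continuous_const.mul (continuous_mv.pow _))
    · refine continuous_finsetSum _ fun l _ => (continuous_eval _).mul (continuous_const.mul ?_)
      exact Continuous.matrix_trace (continuous_const.mul (continuous_mv.pow _))
  have h0 : ∀ a b, ∫ M, F' a b M ∂μ = 0 := by
    intro a b
    refine integral_deriv_eq_zero μ (Xab a b) (Xab_skew a b)
      (fun M => trace (Xab a b * mv M ^ k) * eval (pm M) g) (F' a b) ?_ (hcF' a b) ?_
    · exact (Continuous.matrix_trace (continuous_const.mul (continuous_mv.pow _))).mul (continuous_eval g)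
    · intro M t
      have h1 := hasDeriv_tr (Xab a b) (mv M) (Xab a b) k t
      have h2 := hasDeriv_poly (fun t => pm (gam (Xab a b) (Xab_skew a b) t * M))
        (fun l => (l : ℝ) * trace (Xab a b * (NormedSpace.exp (t • Xab a b) * mv M) ^ l)) t
        (fun l => hasDeriv_tr1 (Xab a b) (mv M) l t) g B hB
      exact h1.fun_mul h2
  have hpt : ∀ M, ∑ a, ∑ b, F' a b M = 2 * eval (pm M)
      ((∑ i ∈ Finset.Ico 1 k, (X (ad k (2 * i)) - X i * X (k - i)) * g) +
        (∑ l ∈ Finset.range B, C (l : ℝ) * ((X (ad k l) - X (k + l)) * pderiv l g)) -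
        C ((n : ℝ) - 1) * (X k * g)) := by
    intro M
    have e1 : ∑ a, ∑ b, ∑ i ∈ Finset.range k,
        trace (Xab a b * (mv M ^ (k - 1 - i) * Xab a b * mv M ^ (i + 1))) =
        2 * (∑ i ∈ Finset.Ico 1 k, (pm M (ad k (2 * i)) - pm M i * pm M (k - i)) -
          ((n : ℝ) - 1) * pm M k) := by
      have : ∀ a : Fin n, ∑ b, ∑ i ∈ Finset.range k,
        trace (Xab a b * (mv M ^ (k - 1 - i) * Xab a b * mv M ^ (i + 1))) =
        ∑ i ∈ Finset.range k, ∑ b,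
        trace (Xab a b * (mv M ^ (k - 1 - i) * Xab a b * mv M ^ (i + 1))) :=
        fun a => Finset.sum_comm
      simp only [this]
      rw [Finset.sum_comm]
      simp only [sum_XAXB, trace_pow_transpose]
      rw [← Finset.mul_sum]
      congr 1
      obtain ⟨m, rfl⟩ : ∃ m, k = m + 1 := ⟨k - 1, by omega⟩
      rw [Finset.sum_range_succ, Finset.sum_Ico_eq_sum_range]
      have e : pm M 0 = n := by simp [pm]
      have e2 : m + 1 - 1 - m = 0 := by omega
      have e3 : ad 0 (m + 1) = m + 1 := by unfold ad; omega
      rw [e2, e3]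
      have : ∑ x ∈ Finset.range m, (pm M (ad (m + 1 - 1 - x) (x + 1)) -
            trace (mv M ^ (m + 1 - 1 - x)) * trace (mv M ^ (x + 1))) =
          ∑ i ∈ Finset.range (m + 1 - 1), (pm M (ad (m + 1) (2 * (1 + i))) -
            pm M (1 + i) * pm M (m + 1 - (1 + i))) := by
        rw [Nat.add_sub_cancel]
        refine Finset.sum_congr rfl fun i hi => ?_
        have := Finset.mem_range.1 hi
        have e5 : ad (m - i) (i + 1) = ad (m + 1) (2 * (1 + i)) := by unfold ad; omega
        have e6 : m + 1 - (1 + i) = m - i := by omega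
        rw [e5, e6, add_comm 1 i]
        unfold pm; ring
      rw [this]
      have e7 : trace (mv M ^ 0) = (n : ℝ) := e
      rw [e7]
      unfold pm; ring
    have e2 : ∑ a, ∑ b, trace (Xab a b * mv M ^ k) *
        ∑ l ∈ Finset.range B, eval (pm M) (pderiv l g) * (l * trace (Xab a b * mv M ^ l)) =
        2 * ∑ l ∈ Finset.range B, l * ((pm M (ad k l) - pm M (k + l)) * eval (pm M) (pderiv l g)) := by
      simp only [Finset.mul_sum]
      have : ∀ a : Fin n, ∑ b, ∑ l ∈ Finset.range B, trace (Xab a b * mv M ^ k) *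
          (eval (pm M) (pderiv l g) * (l * trace (Xab a b * mv M ^ l))) =
          ∑ l ∈ Finset.range B, ∑ b, trace (Xab a b * mv M ^ k) *
          (eval (pm M) (pderiv l g) * (l * trace (Xab a b * mv M ^ l))) :=
        fun a => Finset.sum_comm
      simp only [this]
      rw [Finset.sum_comm]
      refine Finset.sum_congr rfl fun l _ => ?_
      have h3 := sum_XX (mv M ^ k) (mv M ^ l)
      rw [trace_pow_transpose, ← pow_add] at h3
      have h4 : pm M (k + l) = trace (mv M ^ (k + l)) := rfl
      rw [h4]
      calc _ = (eval (pm M) (pderiv l g) * l) * ∑ a, ∑ b, trace (Xab a b * mv M ^ k) * trace (Xab a b * mv M ^ l) := by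
            simp only [Finset.mul_sum]
            refine Finset.sum_congr rfl fun a _ => Finset.sum_congr rfl fun b _ => by ring
        _ = _ := by rw [h3]; ring
    simp only [F', Finset.sum_add_distrib, ← Finset.sum_mul]
    rw [e1, e2]
    simp only [map_sub, map_add, map_sum, map_mul, eval_X, eval_C]
    ring
  have hintegral : ∫ M, ∑ a, ∑ b, F' a b M ∂μ = 0 := by
    rw [integral_finsetSum]
    · refine Finset.sum_eq_zero fun a _ => ?_
      rw [integral_finsetSum]
      · exact Finset.sum_eq_zero fun b _ => h0 a b
      · exact fun b _ => integrable_of_cont μ (hcF' a b)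
    · exact fun a _ => integrable_of_cont μ (continuous_finsetSum _ fun b _ => hcF' a b)
  simp only [hpt] at hintegral
  rw [integral_const_mul] at hintegral
  have hPsi : Psi μ ((∑ i ∈ Finset.Ico 1 k, (X (ad k (2 * i)) - X i * X (k - i)) * g) +
        (∑ l ∈ Finset.range B, C (l : ℝ) * ((X (ad k l) - X (k + l)) * pderiv l g)) -
        C ((n : ℝ) - 1) * (X k * g)) = 0 := by
    have := (mul_eq_zero.1 hintegral).resolve_left (by norm_num)
    exact this
  generalize (n : ℝ) - 1 = c at hPsi ⊢
  simp only [map_sub, map_add, map_sum, ← smul_eq_C_mul, map_smul, smul_eq_mul] at hPsi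
  linarith

end SOTrace

namespace SOTrace

/-- means of the Gaussian model -/
noncomputable def eta (n : ℕ) (k : ℕ) : ℝ := if k = 0 then n else if Even k then 1 else 0

/-- moments of the Gaussian model -/
noncomputable def hh (n k : ℕ) : ℕ → ℝ
  | 0 => 1
  | 1 => eta n k
  | (m + 2) => eta n k * hh n k (m + 1) + k * (m + 1) * hh n k m

lemma hh_succ (n k m : ℕ) : hh n k (m + 1) = eta n k * hh n k m + k * m * hh n k (m - 1) := by
  cases m with
  | zero => simp [hh]
  | succ m => simp [hh]

open MvPolynomial

/-- Gaussian functional -/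
noncomputable def PhiG (n : ℕ) : MvPolynomial ℕ ℝ →ₗ[ℝ] ℝ :=
  (MvPolynomial.basisMonomials ℕ ℝ).constr ℝ (fun s => s.prod (fun k m => hh n k m))

lemma PhiG_monomial (n : ℕ) (s : ℕ →₀ ℕ) (c : ℝ) :
    PhiG n (monomial s c) = c * s.prod (fun k m => hh n k m) := by
  have : monomial s c = c • (MvPolynomial.basisMonomials ℕ ℝ s) := by
    simp [MvPolynomial.coe_basisMonomials, smul_monomial]
  rw [this, map_smul, PhiG, Module.Basis.constr_basis, smul_eq_mul]

lemma prod_hh (n k : ℕ) (s : ℕ →₀ ℕ) :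
    s.prod (fun k m => hh n k m) = hh n k (s k) * (s.erase k).prod (fun k m => hh n k m) := by
  rw [Finsupp.mul_prod_erase' s k _ (fun _ => rfl)]

lemma PhiG_X_mul (n k : ℕ) (g : MvPolynomial ℕ ℝ) :
    PhiG n (X k * g) = eta n k * PhiG n g + k * PhiG n (pderiv k g) := by
  induction g using MvPolynomial.induction_on' with
  | add p q hp hq => simp only [mul_add, map_add, hp, hq]; ring
  | monomial s c =>
    rw [X, monomial_mul, one_mul, pderiv_monomial, PhiG_monomial, PhiG_monomial, PhiG_monomial,
      prod_hh n k s, prod_hh n k (s - _), prod_hh n k (_ + s)]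
    have e1 : (Finsupp.single k 1 + s).erase k = s.erase k := by
      ext l
      by_cases h : l = k
      · simp [h]
      · simp [Finsupp.erase_ne h, Finsupp.single_apply, Ne.symm h]
    have e2 : (s - Finsupp.single k 1).erase k = s.erase k := by
      ext l
      by_cases h : l = k
      · simp [h]
      · simp [Finsupp.erase_ne h, Finsupp.single_apply, Ne.symm h]
    rw [e1, e2]
    have e3 : (Finsupp.single k 1 + s : ℕ →₀ ℕ) k = s k + 1 := by simp [add_comm]
    have e4 : (s - Finsupp.single k 1 : ℕ →₀ ℕ) k = s k - 1 := by simp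
    rw [e3, e4, hh_succ]
    ring

lemma PhiG_one (n : ℕ) : PhiG n 1 = 1 := by
  have := PhiG_monomial n 0 1
  simpa using this

lemma eta_sum (n k : ℕ) (hk : 1 ≤ k) : ((n : ℝ) - 1) * eta n k =
    ∑ i ∈ Finset.Ico 1 k, (eta n (ad k (2 * i)) - eta n i * eta n (k - i) -
      (if 2 * i = k then (i : ℝ) else 0)) := by
  rcases Nat.even_or_odd' k with ⟨m, rfl | rfl⟩
  · have hterm : ∀ i ∈ Finset.Ico 1 (2 * m),
        eta n (ad (2 * m) (2 * i)) - eta n i * eta n (2 * m - i) -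
          (if 2 * i = 2 * m then (i : ℝ) else 0) =
        (if Even i then 0 else 1) + (if i = m then (n : ℝ) - 1 - m else 0) := by
      intro i hi
      have hi' := Finset.mem_Ico.1 hi
      have h1 : eta n (ad (2 * m) (2 * i)) = 1 + (if i = m then (n : ℝ) - 1 else 0) := by
        by_cases h : i = m
        · subst h; simp [ad, eta]
        · have a0 : ad (2 * m) (2 * i) ≠ 0 := by unfold ad; omega
          have a1 : Even (ad (2 * m) (2 * i)) := by unfold ad; rw [Nat.even_iff]; omega
          simp [eta, a0, a1, h]
      have h2 : eta n i * eta n (2 * m - i) = if Even i then 1 else 0 := by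
        have a0 : i ≠ 0 := by omega
        have a1 : 2 * m - i ≠ 0 := by omega
        by_cases h : Even i
        · have : Even (2 * m - i) := by rw [Nat.even_iff] at *; omega
          simp [eta, a0, a1, h, this]
        · simp [eta, a0, h]
      rw [h1, h2]
      by_cases h : i = m
      · subst h
        simp only [if_true]
        split_ifs <;> ring
      · have : ¬ (2 * i = 2 * m) := by omega
        simp only [h, this, if_false]
        split_ifs <;> simp
    rw [Finset.sum_congr rfl hterm, Finset.sum_add_distrib, Finset.sum_ite_eq']
    have hodd : ∀ m : ℕ, ∑ i ∈ Finset.Ico 1 (2 * m), (if Even i then (0 : ℝ) else 1) = m := by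
      intro m
      induction m with
      | zero => simp
      | succ m ih =>
        rcases Nat.eq_zero_or_pos m with rfl | hm
        · simp
        · have : 2 * (m + 1) = 2 * m + 1 + 1 := by ring
          rw [this, Finset.sum_Ico_succ_top (by omega), Finset.sum_Ico_succ_top (by omega), ih]
          simp
    have hm : m ∈ Finset.Ico 1 (2 * m) := Finset.mem_Ico.2 (by omega)
    have h0 : ¬ (2 * m = 0) := by omega
    have h0' : m ≠ 0 := by omega
    rw [hodd, if_pos hm]
    simp [eta, h0']
  · rw [Finset.sum_eq_zero]
    · simp [eta]
    · intro i hi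
      have hi' := Finset.mem_Ico.1 hi
      have a0 : ad (2 * m + 1) (2 * i) ≠ 0 := by unfold ad; omega
      have a1 : ¬ Even (ad (2 * m + 1) (2 * i)) := by unfold ad; rw [Nat.even_iff]; omega
      have a2 : i ≠ 0 := by omega
      have a3 : 2 * m + 1 - i ≠ 0 := by omega
      have a4 : ¬ (2 * i = 2 * m + 1) := by omega
      have a5 : eta n i * eta n (2 * m + 1 - i) = 0 := by
        by_cases h : Even i
        · have : ¬ Even (2 * m + 1 - i) := by rw [Nat.even_iff] at *; omega
          simp [eta, a3, this]
        · simp [eta, a2, h]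
      rw [a5]
      simp [eta, a0, a1, a4]

lemma sum_refl2_aux (F : ℕ → ℝ) (hF : F 0 = 0) (k : ℕ) :
    ∑ i ∈ Finset.range k, F (ad (k + 1) (2 * (i + 1))) =
      2 * ∑ i ∈ Finset.range k, if Even (k - i) then F (i + 1) else 0 := by
  induction k using Nat.twoStepInduction with
  | zero => simp
  | one => simp [ad, hF]
  | more k ih _ =>
    rw [Finset.sum_range_succ, Finset.sum_range_succ', Finset.sum_range_succ (n := k + 1),
      Finset.sum_range_succ (n := k)]
    have a1 : ad (k + 2 + 1) (2 * (k + 1 + 1)) = k + 1 := by unfold ad; omega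
    have a2 : ad (k + 2 + 1) (2 * (0 + 1)) = k + 1 := by unfold ad; omega
    have a3 : ∀ i, ad (k + 2 + 1) (2 * (i + 1 + 1)) = ad (k + 1) (2 * (i + 1)) := by
      intro i; unfold ad; omega
    have a4 : k + 2 - (k + 1) = 1 := by omega
    have a5 : k + 2 - k = 2 := by omega
    simp only [a1, a2, a3, a4, a5, ih]
    have : ∑ i ∈ Finset.range k, (if Even (k + 2 - i) then F (i + 1) else 0) =
        ∑ i ∈ Finset.range k, (if Even (k - i) then F (i + 1) else 0) := by
      refine Finset.sum_congr rfl fun i hi => ?_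
      have := Finset.mem_range.1 hi
      have : Even (k + 2 - i) ↔ Even (k - i) := by rw [Nat.even_iff, Nat.even_iff]; omega
      simp [this]
    rw [this]
    simp
    ring

lemma sum_refl2 (n : ℕ) (F : ℕ → ℝ) (hF : F 0 = 0) (k : ℕ) (hk : 1 ≤ k) :
    ∑ i ∈ Finset.Ico 1 k, F (ad k (2 * i)) =
      2 * ∑ i ∈ Finset.Ico 1 k, eta n (k - i) * F i := by
  obtain ⟨k, rfl⟩ : ∃ m, k = m + 1 := ⟨k - 1, by omega⟩
  have := sum_refl2_aux F hF k
  rw [Finset.sum_Ico_eq_sum_range, Finset.sum_Ico_eq_sum_range, Nat.add_sub_cancel]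
  simp only [add_comm 1]
  rw [this]
  congr 1
  refine Finset.sum_congr rfl fun i hi => ?_
  have := Finset.mem_range.1 hi
  have a1 : k + 1 - (i + 1) = k - i := by omega
  have a2 : k - i ≠ 0 := by omega
  rw [a1]
  unfold eta
  split_ifs <;> simp

lemma sum_flip (F : ℕ → ℝ) (k : ℕ) :
    ∑ i ∈ Finset.Ico 1 k, F (k - i) = ∑ i ∈ Finset.Ico 1 k, F i := by
  refine Finset.sum_bij' (fun i _ => k - i) (fun i _ => k - i) ?_ ?_ ?_ ?_ ?_
  all_goals intro i hi; have := Finset.mem_Ico.1 hi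
  · exact Finset.mem_Ico.2 (by omega)
  · exact Finset.mem_Ico.2 (by omega)
  · show k - (k - i) = i
    omega
  · show k - (k - i) = i
    omega
  · rfl

lemma single_sum (n : ℕ) (T : ℕ → ℝ) (k B : ℕ) (hk : 1 ≤ k) (hB : ∀ l, B ≤ l → T l = 0) :
    ∑ l ∈ Finset.range B, (l : ℝ) * ((eta n (ad k l) - eta n (k + l)) * T l) =
      ((n : ℝ) - 1) * k * T k := by
  rw [Finset.sum_eq_single k]
  · have : ad k k = 0 := by unfold ad; omega
    rw [this]
    have h0 : k + k ≠ 0 := by omega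
    have h1 : Even (k + k) := ⟨k, rfl⟩
    simp only [eta, h0, h1, if_true, if_false]
    ring
  · intro l _ hl
    rcases Nat.eq_zero_or_pos l with rfl | hpos
    · simp
    · have a1 : ad k l ≠ 0 := by unfold ad; omega
      have a2 : k + l ≠ 0 := by omega
      have a3 : Even (ad k l) ↔ Even (k + l) := by unfold ad; rw [Nat.even_iff, Nat.even_iff]; omega
      simp only [eta, a1, a2, a3, if_false, sub_self, zero_mul, mul_zero]
  · intro h
    rw [hB k (by simpa using h)]
    simp

lemma double_sum (T : ℕ → ℕ → ℝ) (k B : ℕ)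
    (hs : ∀ a b, T a b = T b a) (hB : ∀ l m, B ≤ l → T l m = 0) :
    ∑ i ∈ Finset.Ico 1 k, (i : ℝ) * ((k - i : ℕ) : ℝ) * T i (k - i) =
      ∑ l ∈ Finset.range B, (l : ℝ) * ((ad k l : ℕ) * T (ad k l) l) -
      ∑ l ∈ Finset.range B, (l : ℝ) * ((k + l : ℕ) * T (k + l) l) := by
  have e1 : ∀ (f : ℕ → ℝ) (N : ℕ), B ≤ N → (∀ l, B ≤ l → f l = 0) →
      ∑ l ∈ Finset.range B, f l = ∑ l ∈ Finset.range N, f l := by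
    intro f N hN hf
    refine Finset.sum_subset (Finset.range_subset_range.2 hN) ?_
    intro l _ hl
    exact hf l (by simpa using hl)
  rw [e1 _ (k + B) (by omega) (fun l hl => by rw [hs, hB l _ hl]; simp)]
  rw [Finset.sum_range_add]
  have e2 : ∑ x ∈ Finset.range B, ((k + x : ℕ) : ℝ) * ((ad k (k + x) : ℕ) * T (ad k (k + x)) (k + x)) =
      ∑ l ∈ Finset.range B, (l : ℝ) * ((k + l : ℕ) * T (k + l) l) := by
    refine Finset.sum_congr rfl fun l _ => ?_
    have : ad k (k + l) = l := by unfold ad; omega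
    rw [this, hs l]
    ring
  rw [e2, add_sub_cancel_right]
  rcases Nat.eq_zero_or_pos k with rfl | hk
  · simp
  rw [Finset.range_eq_Ico, Finset.sum_eq_sum_Ico_succ_bot hk]
  simp only [Nat.cast_zero, zero_mul, zero_add]
  refine Finset.sum_congr rfl fun i hi => ?_
  have := Finset.mem_Ico.1 hi
  have : ad k i = k - i := by unfold ad; omega
  rw [this, hs i]
  ring

lemma pderiv_pderiv_comm (a b : ℕ) (g : MvPolynomial ℕ ℝ) :
    pderiv a (pderiv b g) = pderiv b (pderiv a g) := by
  have h : ⁅(pderiv a : Derivation ℝ (MvPolynomial ℕ ℝ) (MvPolynomial ℕ ℝ)), (pderiv b : Derivation ℝ (MvPolynomial ℕ ℝ) (MvPolynomial ℕ ℝ))⁆ = 0 := by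
    apply MvPolynomial.derivation_ext
    intro i
    rw [Derivation.commutator_apply, pderiv_X, pderiv_X]
    by_cases h1 : b = i <;> by_cases h2 : a = i <;>
      simp [Pi.single_apply, h1, h2, eq_comm, apply_ite]
  have := congrArg (fun D => D g) h
  simp only [Derivation.commutator_apply] at this
  exact sub_eq_zero.1 this

theorem loop_gauss (n : ℕ) (k : ℕ) (hk : 1 ≤ k) (g : MvPolynomial ℕ ℝ) (B : ℕ)
    (hB : ∀ l, B ≤ l → l ∉ g.vars) :
    ((n : ℝ) - 1) * PhiG n (X k * g) =
      ∑ i ∈ Finset.Ico 1 k, PhiG n ((X (ad k (2 * i)) - X i * X (k - i)) * g) +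
      ∑ l ∈ Finset.range B, (l : ℝ) * PhiG n ((X (ad k l) - X (k + l)) * pderiv l g) := by
  set T0 := PhiG n g with hT0
  set T1 : ℕ → ℝ := fun l => PhiG n (pderiv l g) with hT1
  set T2 : ℕ → ℕ → ℝ := fun l m => PhiG n (pderiv l (pderiv m g)) with hT2
  have hB0 : ∀ l, B ≤ l → pderiv l g = 0 := fun l hl => pderiv_eq_zero_of_notMem_vars (hB l hl)
  have hs : ∀ a b, T2 a b = T2 b a := by
    intro a b
    simp only [hT2]
    rw [pderiv_pderiv_comm]
  have hb1 : ∀ l, B ≤ l → T1 l = 0 := fun l hl => by simp [hT1, hB0 l hl]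
  have hb2 : ∀ l m, B ≤ l → T2 l m = 0 := fun l m hl => by rw [hs]; simp [hT2, hB0 l hl]
  have A1 : ∀ a, PhiG n (X a * g) = eta n a * T0 + a * T1 a := fun a => PhiG_X_mul n a g
  have A2 : ∀ a l, PhiG n (X a * pderiv l g) = eta n a * T1 l + a * T2 a l :=
    fun a l => PhiG_X_mul n a _
  have A3 : ∀ a b, PhiG n (X a * X b * g) = eta n a * (eta n b * T0 + b * T1 b) +
      a * ((if a = b then 1 else 0) * T0 + (eta n b * T1 a + b * T2 a b)) := by
    intro a b
    rw [mul_assoc, PhiG_X_mul, A1, Derivation.leibniz, map_add, smul_eq_mul, A2, hs b a, pderiv_X]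
    by_cases h : a = b
    · subst h
      simp only [Pi.single_eq_same, smul_eq_mul, mul_one, if_true, ← hT0]
      ring
    · have : (Pi.single a 1 : ℕ → MvPolynomial ℕ ℝ) b = 0 := by simp [Ne.symm h]
      rw [this]
      simp [h]
  have R1 : ∑ i ∈ Finset.Ico 1 k, PhiG n ((X (ad k (2 * i)) - X i * X (k - i)) * g) =
      (∑ i ∈ Finset.Ico 1 k, (eta n (ad k (2 * i)) - eta n i * eta n (k - i) -
        (if 2 * i = k then (i : ℝ) else 0))) * T0 +
      (∑ i ∈ Finset.Ico 1 k, (ad k (2 * i) : ℕ) * T1 (ad k (2 * i)) -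
       ∑ i ∈ Finset.Ico 1 k, eta n (k - (k - i)) * ((k - i : ℕ) * T1 (k - i)) -
       ∑ i ∈ Finset.Ico 1 k, eta n (k - i) * (i * T1 i)) -
      ∑ i ∈ Finset.Ico 1 k, (i : ℝ) * ((k - i : ℕ) : ℝ) * T2 i (k - i) := by
    rw [Finset.sum_mul]
    simp only [← Finset.sum_add_distrib, ← Finset.sum_sub_distrib]
    refine Finset.sum_congr rfl fun i hi => ?_
    have := Finset.mem_Ico.1 hi
    have e : k - (k - i) = i := by omega
    rw [sub_mul, map_sub, A1, A3, e]
    by_cases h : 2 * i = k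
    · have : i = k - i := by omega
      rw [if_pos h, if_pos this]
      ring
    · have : ¬ (i = k - i) := by omega
      rw [if_neg h, if_neg this]
      ring
  have R2 : ∑ l ∈ Finset.range B, (l : ℝ) * PhiG n ((X (ad k l) - X (k + l)) * pderiv l g) =
      ∑ l ∈ Finset.range B, (l : ℝ) * ((eta n (ad k l) - eta n (k + l)) * T1 l) +
      (∑ l ∈ Finset.range B, (l : ℝ) * ((ad k l : ℕ) * T2 (ad k l) l) -
      ∑ l ∈ Finset.range B, (l : ℝ) * ((k + l : ℕ) * T2 (k + l) l)) := by
    simp only [← Finset.sum_add_distrib, ← Finset.sum_sub_distrib]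
    refine Finset.sum_congr rfl fun l _ => ?_
    rw [sub_mul, map_sub, A2, A2]
    ring
  rw [R1, R2, ← eta_sum n k hk, single_sum n T1 k B hk hb1, ← double_sum T2 k B hs hb2,
    sum_flip (fun i => eta n (k - i) * (i * T1 i)) k,
    sum_refl2 n (fun i => (i : ℝ) * T1 i) (by simp) k hk, A1]
  ring

end SOTrace

namespace SOTrace
open MvPolynomial

/-- weight -/
noncomputable def wt (s : ℕ →₀ ℕ) : ℕ := s.sum (fun k m => k * m)

lemma wt_add (s t : ℕ →₀ ℕ) : wt (s + t) = wt s + wt t :=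
  Finsupp.sum_add_index' (by simp) (by intros; ring)

lemma wt_single (k m : ℕ) : wt (Finsupp.single k m) = k * m := by
  simp [wt, Finsupp.sum_single_index]

lemma le_wt (s : ℕ →₀ ℕ) (k : ℕ) : k * s k ≤ wt s := by
  by_cases h : k ∈ s.support
  · exact Finset.single_le_sum (f := fun k => k * s k) (fun _ _ => Nat.zero_le _) h
  · simp [Finsupp.notMem_support_iff.1 h]

lemma finite_wt (N : ℕ) : {s : ℕ →₀ ℕ | s 0 = 0 ∧ wt s = N}.Finite := by
  refine (Set.finite_Iic (Finsupp.indicator (Finset.range (N + 1)) (fun _ _ => N))).subset ?_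
  rintro s ⟨h0, hw⟩ k
  have h1 := le_wt s k
  rw [hw] at h1
  rcases Nat.eq_zero_or_pos k with rfl | hk
  · simp [h0]
  · by_cases hkN : k < N + 1
    · rw [Finsupp.indicator_apply, dif_pos (Finset.mem_range.2 hkN)]
      exact le_trans (Nat.le_mul_of_pos_left _ hk) h1
    · have : s k = 0 := by
        by_contra hne
        have : k ≤ k * s k := Nat.le_mul_of_pos_right _ (Nat.pos_of_ne_zero hne)
        omega
      rw [this]; exact Nat.zero_le _

lemma X_mul_mono (k : ℕ) (s : ℕ →₀ ℕ) (c : ℝ) :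
    (X k * monomial s c : MvPolynomial ℕ ℝ) = monomial (Finsupp.single k 1 + s) c := by
  rw [X, monomial_mul, one_mul]

lemma uniq (n : ℕ) (D : MvPolynomial ℕ ℝ →ₗ[ℝ] ℝ) (D1 : D 1 = 0)
    (D0 : ∀ g, D (X 0 * g) = n * D g)
    (DL : ∀ k, 1 ≤ k → ∀ g : MvPolynomial ℕ ℝ, ∀ B, (∀ l, B ≤ l → l ∉ g.vars) →
      ((n : ℝ) - 1) * D (X k * g) =
      ∑ i ∈ Finset.Ico 1 k, D ((X (ad k (2 * i)) - X i * X (k - i)) * g) +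
      ∑ l ∈ Finset.range B, (l : ℝ) * D ((X (ad k l) - X (k + l)) * pderiv l g)) :
    ∀ N, N < n → ∀ s, wt s = N → D (monomial s 1) = 0 := by
  intro N
  induction N using Nat.strong_induction_on with
  | _ N ih =>
  intro hN
  have low : ∀ s, wt s < N → ∀ c, D (monomial s c) = 0 := by
    intro s hs c
    have := ih (wt s) hs (by omega) s rfl
    have e : monomial s c = c • (monomial s 1 : MvPolynomial ℕ ℝ) := by simp [smul_monomial]
    rw [e, map_smul, this, smul_zero]
  have main : ∀ s, s 0 = 0 → wt s = N → D (monomial s 1) = 0 := by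
    intro s₁ h10 h1w
    obtain ⟨t, ⟨ht0, htw⟩, hmax⟩ := Set.exists_max_image {s : ℕ →₀ ℕ | s 0 = 0 ∧ wt s = N}
      (fun s => |D (monomial s 1)|) (finite_wt N) ⟨s₁, h10, h1w⟩
    have hle : |D (monomial s₁ 1)| ≤ |D (monomial t 1)| := hmax s₁ ⟨h10, h1w⟩
    suffices hz : D (monomial t 1) = 0 by
      rw [hz, abs_zero] at hle
      exact abs_nonpos_iff.1 hle
    by_cases hts : t = 0
    · rw [hts]; exact D1
    obtain ⟨k, hk⟩ := Finsupp.ne_iff.1 hts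
    have hk' : t k ≠ 0 := hk
    have hk1 : 1 ≤ k := by
      rcases Nat.eq_zero_or_pos k with rfl | h
      · exact absurd ht0 hk'
      · exact h
    obtain ⟨s, rfl⟩ : ∃ s, t = Finsupp.single k 1 + s :=
      ⟨t - Finsupp.single k 1, by
        rw [add_tsub_cancel_of_le]
        rw [Finsupp.single_le_iff]; omega⟩
    have hs0 : s 0 = 0 := by
      have := ht0
      simp only [Finsupp.add_apply] at this
      omega
    rw [wt_add, wt_single, mul_one] at htw
    obtain ⟨B, hB⟩ : ∃ B, ∀ l, B ≤ l → s l = 0 := by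
      refine ⟨s.support.sup id + 1, fun l hl => ?_⟩
      by_contra hne
      have := Finset.le_sup (f := id) (Finsupp.mem_support_iff.2 hne)
      simp only [id] at this
      omega
    have hvars : ∀ l, B ≤ l → l ∉ (monomial s (1 : ℝ)).vars := by
      intro l hl
      rw [vars_monomial one_ne_zero, Finsupp.mem_support_iff, not_not]
      exact hB l hl
    set c := |D (monomial (Finsupp.single k 1 + s) 1)| with hc
    have L := DL k hk1 (monomial s 1) B hvars
    have t1 : ∀ i ∈ Finset.Ico 1 k,
        |D ((X (ad k (2 * i)) - X i * X (k - i)) * monomial s 1)| ≤ c := by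
      intro i hi
      have hi' := Finset.mem_Ico.1 hi
      rw [sub_mul, map_sub, X_mul_mono, low _ _ 1, zero_sub, abs_neg, mul_assoc, X_mul_mono, X_mul_mono]
      · apply hmax
        refine ⟨?_, ?_⟩
        · have a1 : i ≠ 0 := by omega
          have a2 : k - i ≠ 0 := by omega
          simp only [Finsupp.add_apply, hs0, Finsupp.single_eq_of_ne a1.symm,
            Finsupp.single_eq_of_ne a2.symm, add_zero]
        · rw [wt_add, wt_add, wt_single, wt_single]; omega
      · rw [wt_add, wt_single]; unfold ad; omega
    have t2 : ∀ l ∈ Finset.range B,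
        |(l : ℝ) * D ((X (ad k l) - X (k + l)) * pderiv l (monomial s 1))| ≤ ((l * s l : ℕ) : ℝ) * c := by
      intro l _
      by_cases hz : l * s l = 0
      · rcases Nat.mul_eq_zero.1 hz with h | h
        · subst h; simp
        · rw [pderiv_monomial, h]; simp
      · have hl0 : l ≠ 0 := fun h => hz (by simp [h])
        have hsl : s l ≠ 0 := fun h => hz (by simp [h])
        obtain ⟨u, hu⟩ : ∃ u, s = Finsupp.single l 1 + u :=
          ⟨s - Finsupp.single l 1, by
            rw [add_tsub_cancel_of_le]
            rw [Finsupp.single_le_iff]; omega⟩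
        have hsu : s - Finsupp.single l 1 = u := by rw [hu, add_tsub_cancel_left]
        have hw : wt s = l + wt u := by rw [hu, wt_add, wt_single, mul_one]
        have hu0 : u 0 = 0 := by
          have := hs0
          rw [hu, Finsupp.add_apply] at this
          omega
        rw [pderiv_monomial, hsu, one_mul]
        rw [sub_mul, map_sub, X_mul_mono, low _ _ _, zero_sub, X_mul_mono]
        · have e : monomial (Finsupp.single (k + l) 1 + u) (s l : ℝ) =
            (s l : ℝ) • (monomial (Finsupp.single (k + l) 1 + u) 1 : MvPolynomial ℕ ℝ) := by
            simp [smul_monomial]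
          rw [e, map_smul, smul_eq_mul, mul_neg, abs_neg, ← mul_assoc, abs_mul]
          have : |(l : ℝ) * (s l : ℝ)| = ((l * s l : ℕ) : ℝ) := by
            rw [abs_of_nonneg (by positivity)]; push_cast; rfl
          rw [this]
          refine mul_le_mul_of_nonneg_left ?_ (Nat.cast_nonneg _)
          apply hmax
          refine ⟨?_, ?_⟩
          · have a2 : k + l ≠ 0 := by omega
            simp only [Finsupp.add_apply, hu0, Finsupp.single_eq_of_ne a2.symm]
          · rw [wt_add, wt_single]; omega
        · rw [wt_add, wt_single]; unfold ad; omega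
    have hsum : ∑ l ∈ Finset.range B, l * s l = wt s := by
      symm
      refine Finset.sum_subset ?_ ?_
      · intro l hl
        rw [Finset.mem_range]
        by_contra hh
        exact Finsupp.mem_support_iff.1 hl (hB l (by omega))
      · intro l _ hl
        rw [Finsupp.notMem_support_iff.1 hl]; exact mul_zero l
    have hn1 : (1 : ℝ) ≤ n := by exact_mod_cast (by omega : 1 ≤ n)
    have fin : ((n : ℝ) - 1) * c ≤ (k - 1 : ℕ) * c + wt s * c := by
      calc ((n : ℝ) - 1) * c = |((n : ℝ) - 1) * D (X k * monomial s 1)| := by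
            rw [abs_mul, X_mul_mono, abs_of_nonneg (by linarith : (0:ℝ) ≤ n - 1)]
        _ ≤ ∑ i ∈ Finset.Ico 1 k, c + ∑ l ∈ Finset.range B, ((l * s l : ℕ) : ℝ) * c := by
            rw [L]
            refine (abs_add_le _ _).trans (add_le_add ?_ ?_)
            · exact (Finset.abs_sum_le_sum_abs _ _).trans (Finset.sum_le_sum t1)
            · exact (Finset.abs_sum_le_sum_abs _ _).trans (Finset.sum_le_sum t2)
        _ = (k - 1 : ℕ) * c + wt s * c := by
            rw [← Finset.sum_mul, ← Nat.cast_sum, hsum]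
            simp
    have hc0 : 0 ≤ c := abs_nonneg _
    have hNn : ((k - 1 : ℕ) : ℝ) + wt s + 1 ≤ (n : ℝ) - 1 := by
      have : (k - 1) + wt s + 2 ≤ n := by omega
      have h2 : (((k - 1) + wt s + 2 : ℕ) : ℝ) ≤ n := by exact_mod_cast this
      push_cast at h2 ⊢
      linarith
    have : c = 0 := by nlinarith
    exact abs_eq_zero.1 this
  intro s hs
  have hpow : ∀ m g, D (X 0 ^ m * g) = n ^ m * D g := by
    intro m
    induction m with
    | zero => intro g; simp
    | succ m ihm => intro g; rw [pow_succ, mul_assoc, ihm, D0]; ring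
  have e : (monomial s 1 : MvPolynomial ℕ ℝ) = X 0 ^ (s 0) * monomial (s.erase 0) 1 := by
    rw [X_pow_eq_monomial, monomial_mul, one_mul, Finsupp.single_add_erase]
  have hw : wt (s.erase 0) = N := by
    rw [← hs]
    conv_rhs => rw [← Finsupp.single_add_erase 0 s, wt_add, wt_single]
    simp
  rw [e, hpow, main _ (by simp) hw, mul_zero]

lemma Psi_eq_Phi {n : ℕ} (μ : Measure (SO n)) [IsProbabilityMeasure μ] [μ.IsHaarMeasure]
    (s : ℕ →₀ ℕ) (hs : wt s < n) : Psi μ (monomial s 1) = PhiG n (monomial s 1) := by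
  have := uniq n (Psi μ - PhiG n) ?_ ?_ ?_ (wt s) hs s rfl
  · exact sub_eq_zero.1 this
  · have h1 : Psi μ 1 = 1 := by simp [Psi]
    rw [LinearMap.sub_apply, h1, PhiG_one, sub_self]
  · intro g
    have h1 : Psi μ (X 0 * g) = n * Psi μ g := by
      simp only [Psi, LinearMap.coe_mk, AddHom.coe_mk, map_mul, eval_X]
      rw [← integral_const_mul]
      simp [pm]
    have h2 : PhiG n (X 0 * g) = n * PhiG n g := by
      rw [PhiG_X_mul]; simp [eta]
    rw [LinearMap.sub_apply, LinearMap.sub_apply, h1, h2]; ring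
  · intro k hk g B hB
    simp only [LinearMap.sub_apply, mul_sub, Finset.sum_sub_distrib]
    have h1 := loop_haar μ k hk g B hB
    have h2 := loop_gauss n k hk g B hB
    linarith

end SOTrace

/-- For Haar-distributed `M` in `SO(n,ℝ)` and `4j ≤ n − 1`:
`E[Tr(M^{2j})] = 1` and `Var(Tr(M^{2j})) = 2j`. -/
theorem so_trace_2j_mean_variance (n j : ℕ) (hn : 0 < n) (hj : 0 < j)
    (h : 4 * j ≤ n - 1)
    (μ : Measure (SO n)) [IsProbabilityMeasure μ] [μ.IsHaarMeasure] :
    (∫ M, trSO M ((2 * j : ℕ) : ℤ) ∂μ = 1) ∧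
      variance (fun M => trSO M ((2 * j : ℕ) : ℤ)) μ = 2 * j := by
  have hpm : ∀ M : SO n, trSO M ((2 * j : ℕ) : ℤ) = SOTrace.pm M (2 * j) :=
    fun M => SOTrace.trSO_eq M (2 * j)
  simp only [hpm]
  have heta : SOTrace.eta n (2 * j) = 1 := by
    have h0 : 2 * j ≠ 0 := by omega
    simp only [SOTrace.eta, h0, if_false, even_two_mul, if_true]
  have h1 : ∫ M, SOTrace.pm M (2 * j) ∂μ = 1 := by
    have e := SOTrace.Psi_eq_Phi μ (Finsupp.single (2 * j) 1) (by rw [SOTrace.wt_single]; omega)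
    have e1 : SOTrace.PhiG n (MvPolynomial.monomial (Finsupp.single (2 * j) 1) 1) = 1 := by
      have := SOTrace.PhiG_X_mul n (2 * j) 1
      rw [mul_one, MvPolynomial.X, SOTrace.PhiG_one, heta] at this
      rw [this]; simp
    have e2 : SOTrace.Psi μ (MvPolynomial.X (2 * j)) = ∫ M, SOTrace.pm M (2 * j) ∂μ := by
      simp [SOTrace.Psi]
    rw [← e2, MvPolynomial.X, e, e1]
  have h2 : ∫ M, SOTrace.pm M (2 * j) ^ 2 ∂μ = 1 + 2 * j := by
    have e := SOTrace.Psi_eq_Phi μ (Finsupp.single (2 * j) 1 + Finsupp.single (2 * j) 1)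
      (by rw [SOTrace.wt_add, SOTrace.wt_single]; omega)
    rw [← SOTrace.X_mul_mono, ← MvPolynomial.X] at e
    have e1 : SOTrace.PhiG n (MvPolynomial.X (2 * j) * MvPolynomial.X (2 * j)) = 1 + 2 * j := by
      have := SOTrace.PhiG_X_mul n (2 * j) 1
      rw [mul_one, SOTrace.PhiG_one, heta] at this
      rw [SOTrace.PhiG_X_mul, this, heta, MvPolynomial.pderiv_X_self, SOTrace.PhiG_one]
      simp
    have e2 : SOTrace.Psi μ (MvPolynomial.X (2 * j) * MvPolynomial.X (2 * j)) =
        ∫ M, SOTrace.pm M (2 * j) ^ 2 ∂μ := by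
      simp [SOTrace.Psi, sq]
    rw [← e2, e, e1]
  refine ⟨h1, ?_⟩
  have hcont := SOTrace.continuous_pm (n := n) (2 * j)
  have hL2 : MemLp (fun M : SO n => SOTrace.pm M (2 * j)) 2 μ := by
    rw [memLp_two_iff_integrable_sq (SOTrace.integrable_of_cont μ hcont).aestronglyMeasurable]
    exact SOTrace.integrable_of_cont μ (hcont.pow 2)
  rw [variance_eq_sub hL2]
  simp only [Pi.pow_apply]
  rw [h1, h2]
  ring
end

section
/- Let n and j be positive integers with 4j ≤ 2n + 1, and let M be distributed according to the Haar probability measure on USp(2n,ℂ). Then E[Tr(M^{2j})] = −1 and Var(Tr(M^{2j})) = 2j. -/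
open MeasureTheory ProbabilityTheory Matrix

/-- The compact symplectic group `USp(2n,ℂ)`: the `2n × 2n` complex unitary matrices `M`
with `M * J * Mᵀ = J`, where `J` is the `2n × 2n` block matrix `[[0, I], [−I, 0]]`
(equivalently, `Matrix.symplecticGroup`, whose defining matrix is `−J`; the two
conditions `M * J * Mᵀ = J` and `M * (−J) * Mᵀ = −J` are equivalent),
as a subgroup of the unitary group. -/
def USp (n : ℕ) : Subgroup (Matrix.unitaryGroup (Fin n ⊕ Fin n) ℂ) where
  carrier :=
    {M | (M : Matrix (Fin n ⊕ Fin n) (Fin n ⊕ Fin n) ℂ) ∈ Matrix.symplecticGroup (Fin n) ℂ}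
  mul_mem' := by
    intro a b ha hb
    simp only [Set.mem_setOf_eq, Matrix.UnitaryGroup.mul_val] at *
    exact mul_mem ha hb
  one_mem' := by
    simp only [Set.mem_setOf_eq, Matrix.UnitaryGroup.one_val]
    exact one_mem _
  inv_mem' := by
    intro M hM
    simp only [Set.mem_setOf_eq, Matrix.UnitaryGroup.inv_val] at *
    have h1 : (star (M : Matrix (Fin n ⊕ Fin n) (Fin n ⊕ Fin n) ℂ)) =
        (M : Matrix (Fin n ⊕ Fin n) (Fin n ⊕ Fin n) ℂ)⁻¹ :=
      (Matrix.inv_eq_left_inv (Matrix.UnitaryGroup.star_mul_self M)).symm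
    rw [h1, SymplecticGroup.inv_eq_symplectic_inv _ hM]
    exact mul_mem (mul_mem (SymplecticGroup.neg_mem (SymplecticGroup.J_mem _ _))
      (SymplecticGroup.transpose_mem hM)) (SymplecticGroup.J_mem _ _)

/-- The trace of the `k`-th power (`k : ℤ`, negative powers via the inverse) of an
element of `USp(2n,ℂ)`. -/
noncomputable def trUSp {n : ℕ} (M : USp n) (k : ℤ) : ℂ :=
  Matrix.trace (((M ^ k : USp n) : Matrix.unitaryGroup (Fin n ⊕ Fin n) ℂ) :
    Matrix (Fin n ⊕ Fin n) (Fin n ⊕ Fin n) ℂ)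

/-- Parity indicator: `1` on even numbers and `0` on odd ones. -/
noncomputable def etaC (b : ℕ) : ℂ := if Even b then 1 else 0

lemma etaC_zero : etaC 0 = 1 := by simp [etaC]
lemma etaC_one : etaC 1 = 0 := by simp [etaC]
lemma etaC_two : etaC 2 = 1 := by simp [etaC]
lemma etaC_add_two (b : ℕ) : etaC (b + 2) = etaC b := by simp [etaC, Nat.even_add]
lemma etaC_congr {b c : ℕ} (h : b % 2 = c % 2) : etaC b = etaC c := by
  simp [etaC, Nat.even_iff, h]

lemma sum_absdiff (f : ℕ → ℂ) (a : ℕ) (ha : 1 ≤ a) :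
    ∑ i ∈ Finset.Ico 1 a, f (Nat.dist a (2 * i)) =
      2 * (∑ c ∈ Finset.Ico 1 a, etaC (a - c) * f c) + etaC a * f 0 := by
  induction a using Nat.strong_induction_on with
  | _ a ih =>
    obtain rfl | rfl | h3 : a = 1 ∨ a = 2 ∨ 3 ≤ a := by omega
    · simp [etaC_one]
    · simp [etaC_one, etaC_two, Nat.dist]
    · obtain ⟨m, rfl⟩ : ∃ m, a = m + 2 := ⟨a - 2, by omega⟩
      have ih' := ih m (by omega) (by omega)
      rw [Finset.sum_eq_sum_Ico_succ_bot (by omega : 1 < m + 2),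
        Finset.sum_Ico_succ_top (by omega : 1 + 1 ≤ m + 1)]
      have e1 : ∑ k ∈ Finset.Ico (1 + 1) (m + 1), f (Nat.dist (m + 2) (2 * k)) =
          ∑ i ∈ Finset.Ico 1 m, f (Nat.dist m (2 * i)) := by
        rw [← Finset.sum_Ico_add' _ 1 m 1]
        apply Finset.sum_congr rfl
        intro i _
        congr 1
        simp only [Nat.dist]; omega
      have e2 : ∑ c ∈ Finset.Ico 1 m, etaC (m + 2 - c) * f c =
          ∑ c ∈ Finset.Ico 1 m, etaC (m - c) * f c := by
        apply Finset.sum_congr rfl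
        intro c hc
        rw [Finset.mem_Ico] at hc
        rw [show m + 2 - c = (m - c) + 2 by omega, etaC_add_two]
      have d1 : Nat.dist (m + 2) (2 * 1) = m := by simp only [Nat.dist]; omega
      have d2 : Nat.dist (m + 2) (2 * (m + 1)) = m := by simp only [Nat.dist]; omega
      rw [e1, ih', Finset.sum_Ico_succ_top (by omega : 1 ≤ m + 1),
        Finset.sum_Ico_succ_top (by omega : 1 ≤ m), e2, d1, d2, etaC_add_two,
        show m + 2 - (m + 1) = 1 by omega, show m + 2 - m = 2 by omega, etaC_one, etaC_two]
      ring

lemma sum_eta_eta (a : ℕ) (ha : 1 ≤ a) :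
    2 * (∑ c ∈ Finset.Ico 1 a, etaC (a - c) * etaC c) = ((a : ℂ) - 2) * etaC a := by
  have h := sum_absdiff etaC a ha
  have h2 : ∑ i ∈ Finset.Ico 1 a, etaC (Nat.dist a (2 * i)) = ((a : ℂ) - 1) * etaC a := by
    rw [Finset.sum_congr rfl (g := fun _ => etaC a)]
    · simp [Nat.cast_sub ha]
    · intro i _
      apply etaC_congr
      simp only [Nat.dist]; omega
  rw [h2, etaC_zero] at h
  linear_combination -h

lemma sum_half (a : ℕ) (ha : 1 ≤ a) :
    2 * (∑ i ∈ Finset.Ico 1 a, (i : ℂ) * (if a - i = i then 1 else 0)) = a * etaC a := by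
  by_cases he : Even a
  · obtain ⟨r, rfl⟩ := he
    rw [Finset.sum_eq_single r]
    · simp [etaC]; ring
    · intro b hb hne
      rw [if_neg (by rw [Finset.mem_Ico] at hb; omega)]; simp
    · intro hh; rw [Finset.mem_Ico] at hh; omega
  · rw [Finset.sum_eq_zero]
    · simp [etaC, he]
    · intro i hi
      rw [Finset.mem_Ico] at hi
      rw [Nat.even_iff] at he
      rw [if_neg (by omega)]; simp

/-- The numerical identity behind the Stein recursion. -/
lemma alg_core (a L : ℕ) (ha : 1 ≤ a) (N e : ℂ) (u q : ℕ → ℂ) (w z : ℕ → ℕ → ℂ)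
    (hu0 : u 0 = N * e) (hw0 : ∀ b, w 0 b = N * q b)
    (hu : ∀ c, 1 ≤ c → c < a → u c = - etaC c * e + c * q c)
    (hw : ∀ b, a < b → w (b - a) b = - etaC (b - a) * q b + ((b - a : ℕ) : ℂ) * z (b - a) b)
    (hzs : ∀ b c, z b c = z c b)
    (hz : ∀ b c, a + 1 + L ≤ b → z b c = 0) :
    (N + 1) * (etaC a * e - a * q a) +
      ∑ i ∈ Finset.Ico 1 a, (etaC i * u (a - i) - i * ((if a - i = i then 1 else 0) * e
        + w (a - i) i) - u (Nat.dist a (2 * i))) +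
      ∑ b ∈ Finset.range (a + 1 + L), b * (etaC (a + b) * q b - ((a + b : ℕ) : ℂ) * z (a + b) b
        + w (Nat.dist a b) b) = 0 := by
  have s1 : ∑ i ∈ Finset.Ico 1 a, etaC i * u (a - i) =
      ∑ c ∈ Finset.Ico 1 a, etaC (a - c) * u c := by
    have hr := Finset.sum_Ico_reflect (fun c => etaC (a - c) * u c) 1 (show a ≤ a + 1 by omega)
    rw [show a + 1 - a = 1 by omega, show a + 1 - 1 = a by omega] at hr
    rw [← hr]
    apply Finset.sum_congr rfl
    intro i hi
    rw [Finset.mem_Ico] at hi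
    rw [show a - (a - i) = i by omega]
  have s2 := sum_absdiff u a ha
  have s3 : ∑ c ∈ Finset.Ico 1 a, etaC (a - c) * u c =
      - (∑ c ∈ Finset.Ico 1 a, etaC (a - c) * etaC c) * e +
        ∑ c ∈ Finset.Ico 1 a, etaC (a - c) * (c * q c) := by
    rw [← Finset.sum_neg_distrib, Finset.sum_mul, ← Finset.sum_add_distrib]
    apply Finset.sum_congr rfl
    intro c hc
    rw [Finset.mem_Ico] at hc
    rw [hu c hc.1 hc.2]; ring
  have s4 := sum_eta_eta a ha
  have s5 := sum_half a ha
  -- split the last sum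
  have split : ∀ f : ℕ → ℂ, f 0 = 0 → ∑ b ∈ Finset.range (a + 1 + L), f b =
      ∑ b ∈ Finset.Ico 1 a, f b + f a + ∑ c ∈ Finset.range L, f (a + 1 + c) := by
    intro f hf
    rw [Finset.sum_range_add, Finset.sum_range_succ, Finset.range_eq_Ico,
      Finset.sum_eq_sum_Ico_succ_bot (by omega : 0 < a), hf]
    simp
  have t1 : ∑ b ∈ Finset.range (a + 1 + L), (b : ℂ) * w (Nat.dist a b) b =
      ∑ b ∈ Finset.Ico 1 a, (b : ℂ) * w (a - b) b + a * (N * q a) +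
      ∑ c ∈ Finset.range L, ((a + 1 + c : ℕ) : ℂ) * (- etaC (c + 1) * q (a + 1 + c)
        + ((c + 1 : ℕ) : ℂ) * z (c + 1) (a + 1 + c)) := by
    rw [split _ (by simp)]
    congr 1
    · congr 1
      · apply Finset.sum_congr rfl
        intro b hb
        rw [Finset.mem_Ico] at hb
        rw [show Nat.dist a b = a - b by simp only [Nat.dist]; omega]
      · rw [Nat.dist_self, hw0]
    · apply Finset.sum_congr rfl
      intro c _
      have := hw (a + 1 + c) (by omega)
      rw [show a + 1 + c - a = c + 1 by omega] at this
      rw [show Nat.dist a (a + 1 + c) = c + 1 by simp only [Nat.dist]; omega, this]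
  have t2 : ∑ b ∈ Finset.range (a + 1 + L), (b : ℂ) * (etaC (a + b) * q b) =
      ∑ b ∈ Finset.Ico 1 a, etaC (a - b) * (b * q b) + a * q a +
      ∑ c ∈ Finset.range L, ((a + 1 + c : ℕ) : ℂ) * (etaC (c + 1) * q (a + 1 + c)) := by
    rw [split _ (by simp)]
    congr 1
    · congr 1
      · apply Finset.sum_congr rfl
        intro b hb
        rw [Finset.mem_Ico] at hb
        rw [etaC_congr (show (a + b) % 2 = (a - b) % 2 by omega)]; ring
      · rw [etaC_congr (show (a + a) % 2 = 0 % 2 by omega), etaC_zero]; ring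
    · apply Finset.sum_congr rfl
      intro c _
      rw [etaC_congr (show (a + (a + 1 + c)) % 2 = (c + 1) % 2 by omega)]
  have t3 : ∑ b ∈ Finset.range (a + 1 + L), (b : ℂ) * (((a + b : ℕ) : ℂ) * z (a + b) b) =
      ∑ c ∈ Finset.range L, ((a + 1 + c : ℕ) : ℂ) * (((c + 1 : ℕ) : ℂ) * z (c + 1) (a + 1 + c)) := by
    rw [show a + 1 + L = (L + a) + 1 by ring, Finset.sum_range_succ', Finset.sum_range_add]
    rw [Finset.sum_eq_zero (s := Finset.range a)]
    · simp only [Nat.cast_zero, zero_mul, add_zero]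
      apply Finset.sum_congr rfl
      intro c _
      rw [show a + (c + 1) = a + 1 + c by ring, hzs]; ring
    · intro x _
      rw [hz _ _ (by omega)]; simp
  simp only [mul_add, mul_sub, Finset.sum_add_distrib, Finset.sum_sub_distrib]
  rw [t1, t2, t3, s1, s2, hu0]
  have s6 : ∑ i ∈ Finset.Ico 1 a, (i : ℂ) * ((if a - i = i then 1 else 0) * e) =
      (∑ i ∈ Finset.Ico 1 a, (i : ℂ) * (if a - i = i then 1 else 0)) * e := by
    rw [Finset.sum_mul]; apply Finset.sum_congr rfl; intros; ring
  rw [s6]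
  have t4 : ∑ c ∈ Finset.range L, ((a + 1 + c : ℕ) : ℂ) * (- etaC (c + 1) * q (a + 1 + c)
        + ((c + 1 : ℕ) : ℂ) * z (c + 1) (a + 1 + c)) =
      - (∑ c ∈ Finset.range L, ((a + 1 + c : ℕ) : ℂ) * (etaC (c + 1) * q (a + 1 + c))) +
      ∑ c ∈ Finset.range L, ((a + 1 + c : ℕ) : ℂ) * (((c + 1 : ℕ) : ℂ) * z (c + 1) (a + 1 + c)) := by
    rw [← Finset.sum_neg_distrib, ← Finset.sum_add_distrib]
    apply Finset.sum_congr rfl; intros; ring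
  rw [t4, s3]
  linear_combination e / 2 * s4 - e / 2 * s5

open MvPolynomial in
/-- The Stein defect of a linear functional on polynomials in the power sums. -/
noncomputable def steinD (E : MvPolynomial ℕ ℂ →ₗ[ℂ] ℂ) (a : ℕ) (R : MvPolynomial ℕ ℂ) : ℂ :=
  E (X a * R) + etaC a * E R - a * E (pderiv a R)

lemma steinD_smul (E : MvPolynomial ℕ ℂ →ₗ[ℂ] ℂ) (a : ℕ) (c : ℂ) (R : MvPolynomial ℕ ℂ) :
    steinD E a (c • R) = c * steinD E a R := by
  simp only [steinD, mul_smul_comm, map_smul, smul_eq_mul, Derivation.map_smul]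
  ring

/-- weight of an exponent vector -/
noncomputable abbrev wtN (s : ℕ →₀ ℕ) : ℕ := Finsupp.weight (fun b : ℕ => b) s

lemma wtN_sub {s : ℕ →₀ ℕ} {b : ℕ} (h : s b ≠ 0) :
    wtN (s - Finsupp.single b 1) + b = wtN s := by
  have : s = (s - Finsupp.single b 1) + Finsupp.single b 1 := by
    rw [tsub_add_cancel_of_le]
    rw [Finsupp.single_le_iff]; omega
  conv_rhs => rw [this]
  simp [wtN, map_add, Finsupp.weight_single]

open MvPolynomial in
lemma pderiv_mono (b : ℕ) (s : ℕ →₀ ℕ) :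
    pderiv b (monomial s (1 : ℂ)) = (s b : ℂ) • monomial (s - Finsupp.single b 1) (1 : ℂ) := by
  rw [pderiv_monomial, smul_monomial]; simp

open MvPolynomial in
/-- The loop equation for a linear functional. -/
def LoopEq (E : MvPolynomial ℕ ℂ →ₗ[ℂ] ℂ) : Prop :=
  ∀ (a K : ℕ), 1 ≤ a → ∀ s : ℕ →₀ ℕ, (∀ b, K ≤ b → s b = 0) →
    ∑ i ∈ Finset.range a, E ((X i * X (a - i) + X (Nat.dist a (2 * i))) * monomial s 1) +
    ∑ b ∈ Finset.range K, (b : ℂ) * E ((X (a + b) - X (Nat.dist a b)) * pderiv b (monomial s 1)) = 0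

open MvPolynomial in
lemma stein_step (N : ℕ) (E : MvPolynomial ℕ ℂ →ₗ[ℂ] ℂ)
    (hE0 : ∀ R, E (X 0 * R) = N * E R) (hloop : LoopEq E)
    (k a : ℕ) (ha : 1 ≤ a) (s : ℕ →₀ ℕ) (hs0 : s 0 = 0) (hk : a + wtN s = k)
    (ih : ∀ a', 1 ≤ a' → ∀ s' : ℕ →₀ ℕ, s' 0 = 0 → a' + wtN s' < k →
      steinD E a' (monomial s' 1) = 0) :
    ((N : ℂ) + 1) * steinD E a (monomial s 1) +
      ∑ i ∈ Finset.Ico 1 a, steinD E i (X (a - i) * monomial s 1) +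
      ∑ b ∈ Finset.range (a + 1 + k), (b : ℂ) * steinD E (a + b) (pderiv b (monomial s 1)) = 0 := by
  set R : MvPolynomial ℕ ℂ := monomial s 1 with hR
  have hsb : ∀ b, k < b → s b = 0 := by
    intro b hb
    by_contra hne
    have := wtN_sub hne
    omega
  have hl := hloop a (a + 1 + k) ha s (fun b hb => hsb b (by omega))
  rw [← hR] at hl
  have hcore := alg_core a k ha (N : ℂ) (E R) (fun c => E (X c * R)) (fun b => E (pderiv b R))
    (fun c b => E (X c * pderiv b R)) (fun c b => E (pderiv c (pderiv b R)))
    (hE0 R) (fun b => hE0 _) ?_ ?_ ?_ ?_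
  · rw [Finset.range_eq_Ico, Finset.sum_eq_sum_Ico_succ_bot (by omega : 0 < a)] at hl
    have e0 : E ((X 0 * X (a - 0) + X (Nat.dist a (2 * 0))) * R) = ((N : ℂ) + 1) * E (X a * R) := by
      rw [show Nat.dist a (2 * 0) = a by simp [Nat.dist], Nat.sub_zero, add_mul, map_add, mul_assoc,
        hE0]
      ring
    rw [e0, zero_add] at hl
    have e1 : ∑ i ∈ Finset.Ico 1 a, steinD E i (X (a - i) * R) =
        ∑ i ∈ Finset.Ico 1 a, E ((X i * X (a - i) + X (Nat.dist a (2 * i))) * R) +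
        ∑ i ∈ Finset.Ico 1 a, (etaC i * E (X (a - i) * R) - i * ((if a - i = i then 1 else 0) * E R
        + E (X (a - i) * pderiv i R)) - E (X (Nat.dist a (2 * i)) * R)) := by
      rw [← Finset.sum_add_distrib]
      apply Finset.sum_congr rfl
      intro i _
      have : pderiv i (X (a - i) * R) =
          (if a - i = i then (1 : ℂ) else 0) • R + X (a - i) * pderiv i R := by
        rw [Derivation.leibniz, pderiv_X, smul_eq_mul, smul_eq_mul]
        by_cases hh : a - i = i
        · rw [hh]; simp; ring
        · simp [hh, Pi.single_apply]
      simp only [steinD, this, add_mul, map_add, map_smul, smul_eq_mul, mul_assoc]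
      ring
    have e2 : ∑ b ∈ Finset.range (a + 1 + k), (b : ℂ) * steinD E (a + b) (pderiv b R) =
        ∑ b ∈ Finset.range (a + 1 + k), (b : ℂ) * E ((X (a + b) - X (Nat.dist a b)) * pderiv b R) +
        ∑ b ∈ Finset.range (a + 1 + k), (b : ℂ) * (etaC (a + b) * E (pderiv b R)
          - ((a + b : ℕ) : ℂ) * E (pderiv (a + b) (pderiv b R)) + E (X (Nat.dist a b) * pderiv b R)) := by
      rw [← Finset.sum_add_distrib]
      apply Finset.sum_congr rfl
      intro i _
      simp only [steinD, sub_mul, map_sub]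
      ring
    rw [e1, e2]
    simp only [steinD]
    linear_combination hl + hcore
  · intro c hc hca
    have := ih c hc s hs0 (by omega)
    rw [steinD, ← hR] at this
    linear_combination this
  · intro b hb
    by_cases hb0 : s b = 0
    · have : pderiv b R = 0 := by rw [hR, pderiv_mono, hb0]; simp
      simp [this]
    · have h1 := ih (b - a) (by omega) (s - Finsupp.single b 1) (by simp [hs0])
        (by have := wtN_sub hb0; omega)
      have h2 : steinD E (b - a) (pderiv b R) = 0 := by
        rw [hR, pderiv_mono, steinD_smul, h1, mul_zero]
      rw [steinD] at h2
      linear_combination h2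
  · intro b c
    have : pderiv b (pderiv c R) = pderiv c (pderiv b R) := by
      rw [hR]
      simp only [pderiv_monomial]
      by_cases hbc : b = c
      · rw [hbc]
      · congr 1
        · rw [tsub_right_comm]
        · simp [Finsupp.single_apply, hbc, Ne.symm hbc, eq_comm]
          ring
    simp only [this]
  · intro b c hb
    have : pderiv b (pderiv c R) = 0 := by
      rw [hR]
      simp only [pderiv_monomial]
      simp [hsb b (by omega)]
    simp only [this, map_zero]

open MvPolynomial in
/-- Stein's identity for the power sums in low degree. -/
theorem stein_main (N : ℕ) (E : MvPolynomial ℕ ℂ →ₗ[ℂ] ℂ)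
    (hE0 : ∀ R, E (X 0 * R) = N * E R) (hloop : LoopEq E)
    (k : ℕ) (hkN : k ≤ N + 1) (a : ℕ) (ha : 1 ≤ a) (s : ℕ →₀ ℕ) (hs0 : s 0 = 0)
    (hk : a + wtN s = k) :
    steinD E a (monomial s 1) = 0 := by
  induction k using Nat.strong_induction_on generalizing a s with
  | _ k ih =>
  have ih' : ∀ a', 1 ≤ a' → ∀ s' : ℕ →₀ ℕ, s' 0 = 0 → a' + wtN s' < k →
      steinD E a' (monomial s' 1) = 0 := by
    intro a' ha' s' hs' hlt
    exact ih _ hlt (by omega) a' ha' s' hs' rfl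
  -- the finite set of all cases of total degree `k`
  let S : Set (ℕ × (ℕ →₀ ℕ)) := {x | 1 ≤ x.1 ∧ x.2 0 = 0 ∧ x.1 + wtN x.2 = k}
  have hfin : S.Finite := by
    apply Set.Finite.subset ((Set.finite_Iic k).prod
      (Set.finite_Iic (∑ b ∈ Finset.range (k + 1), Finsupp.single b k : ℕ →₀ ℕ)))
    rintro ⟨x, t⟩ ⟨h1, h2, h3⟩
    simp only at h1 h2 h3
    refine ⟨by simp only [Set.mem_Iic]; omega, ?_⟩
    intro b
    rw [Finsupp.finsetSum_apply]
    by_cases hb : t b = 0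
    · rw [hb]; exact Nat.zero_le _
    · have hw := wtN_sub hb
      have hb0 : b ≠ 0 := by rintro rfl; exact hb h2
      have := Finsupp.le_weight (fun b : ℕ => b) (s := b) hb0 t
      change t b ≤ wtN t at this
      rw [Finset.sum_eq_single b]
      · simp only [Finsupp.single_eq_same]; omega
      · intro c _ hc; simp [Finsupp.single_apply, hc]
      · intro hh; rw [Finset.mem_range] at hh; omega
  obtain ⟨⟨a0, s0⟩, ⟨h1, h2, h3⟩, hmax⟩ := hfin.exists_maximalFor
    (fun x => ‖steinD E x.1 (monomial x.2 1)‖) S ⟨(a, s), ha, hs0, hk⟩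
  simp only at h1 h2 h3
  set B := ‖steinD E a0 (monomial s0 1)‖ with hB
  have hle : ∀ x ∈ S, ‖steinD E x.1 (monomial x.2 1)‖ ≤ B := by
    intro x hx
    by_contra hcon
    push Not at hcon
    exact absurd (hmax hx hcon.le) (not_le.mpr hcon)
  have hstep := stein_step N E hE0 hloop k a0 h1 s0 h2 h3 ih'
  have b1 : ‖∑ i ∈ Finset.Ico 1 a0, steinD E i (X (a0 - i) * monomial s0 1)‖ ≤ ((a0 : ℝ) - 1) * B := by
    calc _ ≤ ∑ i ∈ Finset.Ico 1 a0, ‖steinD E i (X (a0 - i) * monomial s0 1)‖ := norm_sum_le _ _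
      _ ≤ ∑ i ∈ Finset.Ico 1 a0, B := by
        apply Finset.sum_le_sum
        intro i hi
        rw [Finset.mem_Ico] at hi
        have hX : (X (a0 - i) * monomial s0 1 : MvPolynomial ℕ ℂ) =
            monomial (Finsupp.single (a0 - i) 1 + s0) 1 := by
          rw [X, monomial_mul, one_mul]
        rw [hX]
        refine hle (i, Finsupp.single (a0 - i) 1 + s0) ⟨hi.1, ?_, ?_⟩
        · simp only [Finsupp.add_apply, h2, Finsupp.single_apply]
          rw [if_neg (by omega)]
        · simp only [wtN, map_add, Finsupp.weight_single]
          simp only [wtN] at h3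
          simp only [smul_eq_mul, one_mul]
          omega
      _ = _ := by simp [Nat.cast_sub h1]
  have b2 : ‖∑ b ∈ Finset.range (a0 + 1 + k), (b : ℂ) * steinD E (a0 + b) (pderiv b (monomial s0 1))‖
      ≤ (wtN s0 : ℝ) * B := by
    calc _ ≤ ∑ b ∈ Finset.range (a0 + 1 + k),
          ‖(b : ℂ) * steinD E (a0 + b) (pderiv b (monomial s0 1))‖ := norm_sum_le _ _
      _ ≤ ∑ b ∈ Finset.range (a0 + 1 + k), ((s0 b * b : ℕ) : ℝ) * B := by
        apply Finset.sum_le_sum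
        intro b _
        rw [pderiv_mono, steinD_smul]
        by_cases hb : s0 b = 0
        · simp [hb]
        · have := hle (a0 + b, s0 - Finsupp.single b 1) ⟨by simp only; omega, by simp [h2], by
            have := wtN_sub hb
            simp only; omega⟩
          simp only at this
          rw [norm_mul, norm_mul, Complex.norm_natCast, Complex.norm_natCast, Nat.cast_mul]
          calc (b : ℝ) * ((s0 b : ℝ) * ‖steinD E (a0 + b) (monomial (s0 - Finsupp.single b 1) 1)‖)
              ≤ (b : ℝ) * ((s0 b : ℝ) * B) := by gcongr
            _ = _ := by ring
      _ = _ := by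
        rw [← Finset.sum_mul, ← Nat.cast_sum]
        congr 2
        rw [wtN, Finsupp.weight_apply, Finsupp.sum_of_support_subset (s := Finset.range (a0 + 1 + k))]
        · simp
        · intro b hb
          rw [Finsupp.mem_support_iff] at hb
          have := wtN_sub hb
          rw [Finset.mem_range]; omega
        · simp
  have b3 : ((N : ℝ) + 1) * B ≤ ((a0 : ℝ) - 1) * B + (wtN s0 : ℝ) * B := by
    have e : ((N : ℂ) + 1) * steinD E a0 (monomial s0 1) =
      -(∑ i ∈ Finset.Ico 1 a0, steinD E i (X (a0 - i) * monomial s0 1) +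
        ∑ b ∈ Finset.range (a0 + 1 + k), (b : ℂ) * steinD E (a0 + b) (pderiv b (monomial s0 1))) := by
      linear_combination hstep
    have e' := congrArg norm e
    rw [norm_mul, norm_neg, ← hB] at e'
    have e3 : ‖(N : ℂ) + 1‖ = (N : ℝ) + 1 := by
      have := Complex.norm_natCast (N + 1)
      push_cast at this
      exact this
    rw [e3] at e'
    rw [e']
    exact (norm_add_le _ _).trans (add_le_add b1 b2)
  have hB0 : 0 ≤ B := norm_nonneg _
  have hkk : (a0 : ℝ) + wtN s0 ≤ N + 1 := by
    have : a0 + wtN s0 ≤ N + 1 := by omega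
    exact_mod_cast this
  have hBz : B ≤ 0 := by nlinarith
  have hfinal := hle (a, s) ⟨ha, hs0, hk⟩
  exact norm_le_zero_iff.mp (hfinal.trans hBz)

section UspLoop

/-- The underlying matrix of an element of `USp`. -/
abbrev uval {n : ℕ} (M : USp n) : Matrix (Fin n ⊕ Fin n) (Fin n ⊕ Fin n) ℂ :=
  ((M : Matrix.unitaryGroup (Fin n ⊕ Fin n) ℂ) : Matrix (Fin n ⊕ Fin n) (Fin n ⊕ Fin n) ℂ)

/-- The symplectic anti-involution. -/
noncomputable def th {n : ℕ} (Y : Matrix (Fin n ⊕ Fin n) (Fin n ⊕ Fin n) ℂ) :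
    Matrix (Fin n ⊕ Fin n) (Fin n ⊕ Fin n) ℂ :=
  -(J (Fin n) ℂ * Yᵀ * J (Fin n) ℂ)

lemma th_mul {n : ℕ} (A B : Matrix (Fin n ⊕ Fin n) (Fin n ⊕ Fin n) ℂ) :
    th (A * B) = th B * th A := by
  have h := J_squared (Fin n) ℂ
  simp only [th, transpose_mul]
  calc _ = J (Fin n) ℂ * Bᵀ * (-1) * Aᵀ * J (Fin n) ℂ := by simp [Matrix.mul_assoc]
    _ = _ := by rw [← h]; simp [Matrix.mul_assoc]

lemma th_trace {n : ℕ} (A : Matrix (Fin n ⊕ Fin n) (Fin n ⊕ Fin n) ℂ) :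
    (th A).trace = A.trace := by
  have h := J_squared (Fin n) ℂ
  rw [th, trace_neg, Matrix.mul_assoc, trace_mul_comm, Matrix.mul_assoc, h]
  simp [trace_transpose]

lemma th_th {n : ℕ} (A : Matrix (Fin n ⊕ Fin n) (Fin n ⊕ Fin n) ℂ) : th (th A) = A := by
  have h := J_squared (Fin n) ℂ
  simp only [th, transpose_neg, transpose_mul, J_transpose, transpose_transpose]
  calc _ = (J (Fin n) ℂ * J (Fin n) ℂ) * A * (J (Fin n) ℂ * J (Fin n) ℂ) := by
        simp [Matrix.mul_assoc]
    _ = A := by rw [h]; simp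

lemma th_sub {n : ℕ} (A B : Matrix (Fin n ⊕ Fin n) (Fin n ⊕ Fin n) ℂ) :
    th (A - B) = th A - th B := by
  simp only [th, transpose_sub, Matrix.mul_sub, Matrix.sub_mul]; abel

lemma th_add {n : ℕ} (A B : Matrix (Fin n ⊕ Fin n) (Fin n ⊕ Fin n) ℂ) :
    th (A + B) = th A + th B := by
  simp only [th, transpose_add, Matrix.mul_add, Matrix.add_mul]; abel

lemma th_smul {n : ℕ} (c : ℂ) (A : Matrix (Fin n ⊕ Fin n) (Fin n ⊕ Fin n) ℂ) :
    th (c • A) = c • th A := by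
  simp [th]

lemma J_conjTranspose' (n : ℕ) : (J (Fin n) ℂ)ᴴ = - J (Fin n) ℂ := by
  simp [J, fromBlocks_conjTranspose, fromBlocks_neg]

lemma th_conj {n : ℕ} (A : Matrix (Fin n ⊕ Fin n) (Fin n ⊕ Fin n) ℂ) :
    th Aᴴ = (th A)ᴴ := by
  simp only [th, conjTranspose_neg, conjTranspose_mul, J_conjTranspose']
  have : Aᵀᴴ = Aᴴᵀ := by ext; simp
  rw [this]; simp [Matrix.mul_assoc]

lemma mul_th_of_symplectic {n : ℕ} {A : Matrix (Fin n ⊕ Fin n) (Fin n ⊕ Fin n) ℂ}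
    (hA : A ∈ symplecticGroup (Fin n) ℂ) : A * th A = 1 := by
  rw [SymplecticGroup.mem_iff] at hA
  rw [th, Matrix.mul_neg, ← Matrix.mul_assoc, ← Matrix.mul_assoc, hA, J_squared, neg_neg]

lemma trace_pow_th {n : ℕ} {A : Matrix (Fin n ⊕ Fin n) (Fin n ⊕ Fin n) ℂ}
    (hA : A ∈ symplecticGroup (Fin n) ℂ) (a b : ℕ) :
    (A ^ a * th (A ^ b)).trace = (A ^ (Nat.dist a b)).trace := by
  have hp : ∀ c, A ^ c * th (A ^ c) = 1 := fun c => mul_th_of_symplectic (pow_mem hA c)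
  rcases le_total b a with h | h
  · rw [show Nat.dist a b = a - b by simp only [Nat.dist]; omega]
    conv_lhs => rw [show a = (a - b) + b by omega, pow_add, Matrix.mul_assoc, hp, Matrix.mul_one]
  · rw [show Nat.dist a b = b - a by simp only [Nat.dist]; omega]
    conv_lhs => rw [show b = (b - a) + a by omega, pow_add, th_mul, ← Matrix.mul_assoc, hp,
      Matrix.one_mul, th_trace]

lemma uval_mem {n : ℕ} (M : USp n) : uval M ∈ symplecticGroup (Fin n) ℂ := M.2

lemma uval_continuous {n : ℕ} : Continuous (uval : USp n → _) :=
  continuous_subtype_val.comp continuous_subtype_val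

instance matBorel (n : ℕ) : BorelSpace (Matrix (Fin n ⊕ Fin n) (Fin n ⊕ Fin n) ℂ) :=
  inferInstanceAs (BorelSpace ((Fin n ⊕ Fin n) → (Fin n ⊕ Fin n) → ℂ))

instance uspCompact (n : ℕ) : CompactSpace (USp n) := by
  have hcl : Topology.IsClosedEmbedding (uval : USp n → _) := by
    refine ⟨Topology.IsEmbedding.subtypeVal.comp Topology.IsEmbedding.subtypeVal, ?_⟩
    · have : Set.range (uval : USp n → _) =
          {A | A * star A = 1} ∩ {A | A * J (Fin n) ℂ * Aᵀ = J (Fin n) ℂ} := by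
        ext A
        constructor
        · rintro ⟨M, rfl⟩
          exact ⟨(Unitary.mem_iff.mp M.1.2).2, SymplecticGroup.mem_iff.mp (uval_mem M)⟩
        · rintro ⟨h1, h2⟩
          exact ⟨⟨⟨A, mem_unitaryGroup_iff.mpr h1⟩, SymplecticGroup.mem_iff.mpr h2⟩, rfl⟩
      rw [this]
      apply IsClosed.inter
      · exact isClosed_eq (by fun_prop) continuous_const
      · exact isClosed_eq (by fun_prop) continuous_const
  have hK : IsCompact (Set.univ.pi fun _ => Set.univ.pi fun _ => Metric.closedBall (0 : ℂ) 1 :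
      Set ((Fin n ⊕ Fin n) → (Fin n ⊕ Fin n) → ℂ)) :=
    isCompact_univ_pi fun _ => isCompact_univ_pi fun _ => isCompact_closedBall _ _
  have hpre := hcl.isCompact_preimage hK
  rw [← isCompact_univ_iff]
  convert hpre
  ext M
  simp only [Set.mem_univ, true_iff]
  intro i _ j _
  rw [mem_closedBall_zero_iff]
  exact entry_norm_bound_of_unitary M.1.2 i j

lemma usp_integrable {n : ℕ} (μ : Measure (USp n)) [IsProbabilityMeasure μ] {f : USp n → ℂ}
    (hf : Continuous f) : Integrable f μ := by
  have := ContinuousOn.integrableOn_compact (μ := μ) isCompact_univ hf.continuousOn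
  simpa using this

lemma integral_deriv_zero {n : ℕ} (μ : Measure (USp n)) [IsProbabilityMeasure μ]
    [μ.IsHaarMeasure] (f f' : USp n → ℂ) (hf : Continuous f) (hf' : Continuous f')
    (γ : ℝ → USp n) (hγ : ∀ s t, γ (s + t) = γ s * γ t)
    (hd : ∀ M, HasDerivAt (fun t => f (γ t * M)) (f' M) 0) : ∫ M, f' M ∂μ = 0 := by
  have hd' : ∀ M t0, HasDerivAt (fun t => f (γ t * M)) (f' (γ t0 * M)) t0 := by
    intro M t0
    have h1 := hd (γ t0 * M)
    rw [show (0 : ℝ) = t0 - t0 by ring] at h1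
    have h2 := HasDerivAt.comp_sub_const t0 t0 h1
    have e : (fun t => f (γ t * M)) = fun t => f (γ (t - t0) * (γ t0 * M)) := by
      funext t
      rw [← mul_assoc, ← hγ, sub_add_cancel]
    rw [e]
    exact h2
  obtain ⟨C, hC⟩ := isCompact_univ.exists_bound_of_continuousOn hf'.continuousOn
  have hcm : ∀ t, Continuous fun M : USp n => γ t * M := fun t => continuous_const_mul _
  have key := (hasDerivAt_integral_of_dominated_loc_of_deriv_le (μ := μ) (bound := fun _ => C)
    (F := fun t M => f (γ t * M)) (F' := fun t M => f' (γ t * M)) (x₀ := (0 : ℝ)) (s := Set.univ)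
    Filter.univ_mem
    (Filter.Eventually.of_forall fun t => (usp_integrable μ (hf.comp (hcm t))).aestronglyMeasurable)
    (usp_integrable μ (hf.comp (hcm 0)))
    (usp_integrable μ (hf'.comp (hcm 0))).aestronglyMeasurable
    (Filter.Eventually.of_forall fun M t _ => hC _ (Set.mem_univ _))
    (integrable_const _)
    (Filter.Eventually.of_forall fun M t _ => hd' M t)).2
  have hconst : (fun t : ℝ => ∫ M, f (γ t * M) ∂μ) = fun _ => ∫ M, f M ∂μ := by
    funext t
    exact integral_mul_left_eq_self f (γ t)
  rw [hconst] at key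
  have := key.unique (hasDerivAt_const _ _)
  rw [← this]
  exact (integral_mul_left_eq_self f' (γ 0)).symm

open scoped Matrix.Norms.Operator in
lemma trace_pow_deriv {n : ℕ} (B X M : Matrix (Fin n ⊕ Fin n) (Fin n ⊕ Fin n) ℂ) (a : ℕ) :
    HasDerivAt (fun t : ℝ => (B * (NormedSpace.exp (t • X) * M) ^ a).trace)
      (∑ i ∈ Finset.range a, (B * (M ^ i * X * M ^ (a - i))).trace) 0 := by
  have h0 := hasDerivAt_exp_smul_const (𝕂 := ℝ) X 0
  rw [zero_smul, NormedSpace.exp_zero, one_mul] at h0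
  have h1 : HasDerivAt (fun t : ℝ => NormedSpace.exp (t • X) * M) (X * M) 0 := h0.mul_const M
  have h2 := h1.fun_pow' a
  simp only [zero_smul, NormedSpace.exp_zero, one_mul] at h2
  let T : Matrix (Fin n ⊕ Fin n) (Fin n ⊕ Fin n) ℂ →L[ℝ] ℂ := LinearMap.toContinuousLinearMap
    ((traceLinearMap (Fin n ⊕ Fin n) ℝ ℂ).comp (LinearMap.mulLeft ℝ B))
  have h3 := T.hasFDerivAt.comp_hasDerivAt (0 : ℝ) h2
  have hT : ∀ A, T A = (B * A).trace := fun A => rfl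
  simp only [Function.comp_def, hT] at h3
  refine h3.congr_deriv ?_
  refine (hT _).trans ?_
  rw [Matrix.mul_sum, trace_sum, ← Finset.sum_range_reflect]
  apply Finset.sum_congr rfl
  intro i hi
  rw [Finset.mem_range] at hi
  rw [Nat.pred_eq_sub_one, show a - 1 - (a - 1 - i) = i by omega, show a - i = (a - 1 - i) + 1 by omega,
    pow_succ']
  simp only [Matrix.mul_assoc]

/-- The one-parameter subgroup generated by an element of the Lie algebra. -/
noncomputable def uspExp {n : ℕ} (X : Matrix (Fin n ⊕ Fin n) (Fin n ⊕ Fin n) ℂ)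
    (h1 : Xᴴ = -X) (h2 : th X = -X) (t : ℝ) : USp n := by
  refine ⟨⟨NormedSpace.exp (t • X), ?_⟩, ?_⟩
  · rw [mem_unitaryGroup_iff, star_eq_conjTranspose, ← exp_conjTranspose, conjTranspose_smul, h1,
      star_trivial, smul_neg, ← exp_add_of_commute _ _ (Commute.neg_right (Commute.refl (t • X))), add_neg_cancel,
      NormedSpace.exp_zero]
  · change NormedSpace.exp (t • X) ∈ symplecticGroup (Fin n) ℂ
    have hJ := J_squared (Fin n) ℂ
    have hinv : (J (Fin n) ℂ)⁻¹ = - J (Fin n) ℂ := by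
      apply Matrix.inv_eq_right_inv
      rw [Matrix.mul_neg, hJ, neg_neg]
    have hunit : IsUnit (J (Fin n) ℂ) := by
      rw [Matrix.isUnit_iff_isUnit_det]
      exact isUnit_det_J _ _
    have h3 := exp_conj (J (Fin n) ℂ) (t • X)ᵀ hunit
    have h4 : J (Fin n) ℂ * (t • X)ᵀ * (J (Fin n) ℂ)⁻¹ = - (t • X) := by
      rw [hinv, transpose_smul, Matrix.mul_smul, Matrix.smul_mul, Matrix.mul_neg, ← smul_neg, ← h2, th]
    rw [h4, exp_transpose, hinv] at h3
    have h5 : NormedSpace.exp (t • X) * NormedSpace.exp (-(t • X)) = 1 := by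
      rw [← exp_add_of_commute _ _ (Commute.neg_right (Commute.refl (t • X))), add_neg_cancel, NormedSpace.exp_zero]
    rw [SymplecticGroup.mem_iff]
    rw [h3] at h5
    have h6 := congrArg (· * J (Fin n) ℂ) h5
    simp only [Matrix.mul_assoc, Matrix.neg_mul, hJ, neg_neg, Matrix.mul_one, Matrix.one_mul] at h6
    rw [Matrix.mul_assoc]
    exact h6

lemma uspExp_add {n : ℕ} (X : Matrix (Fin n ⊕ Fin n) (Fin n ⊕ Fin n) ℂ)
    (h1 : Xᴴ = -X) (h2 : th X = -X) (s t : ℝ) :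
    uspExp X h1 h2 (s + t) = uspExp X h1 h2 s * uspExp X h1 h2 t := by
  apply Subtype.ext
  apply Subtype.ext
  change NormedSpace.exp ((s + t) • X) = NormedSpace.exp (s • X) * NormedSpace.exp (t • X)
  rw [add_smul]
  exact exp_add_of_commute _ _ ((Commute.refl X).smul_left s |>.smul_right t)

open MvPolynomial in
/-- Evaluation of a polynomial at the power sums of a matrix. -/
noncomputable def evP {n : ℕ} (A : Matrix (Fin n ⊕ Fin n) (Fin n ⊕ Fin n) ℂ)
    (R : MvPolynomial ℕ ℂ) : ℂ :=
  MvPolynomial.eval (fun b => (A ^ b).trace) R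

lemma evP_continuous {n : ℕ} (R : MvPolynomial ℕ ℂ) : Continuous fun M : USp n => evP (uval M) R := by
  unfold evP
  apply (MvPolynomial.continuous_eval R).comp
  apply continuous_pi
  intro b
  exact (uval_continuous.pow b).matrix_trace

open MvPolynomial in
lemma evP_deriv {n : ℕ} (X M : Matrix (Fin n ⊕ Fin n) (Fin n ⊕ Fin n) ℂ) (K : ℕ)
    (R : MvPolynomial ℕ ℂ) (hR : R ∈ MvPolynomial.supported ℂ (Finset.range K : Set ℕ)) :
    HasDerivAt (fun t : ℝ => evP (NormedSpace.exp (t • X) * M) R)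
      (∑ b ∈ Finset.range K, (b * (X * M ^ b).trace) * evP M (pderiv b R)) 0 := by
  have hexp0 : NormedSpace.exp ((0 : ℝ) • X) * M = M := by
    rw [zero_smul, NormedSpace.exp_zero, one_mul]
  rw [supported_eq_adjoin_X] at hR
  induction hR using Algebra.adjoin_induction with
  | mem x hx =>
    obtain ⟨c, hc, rfl⟩ := hx
    have h := trace_pow_deriv 1 X M c
    have e : ∑ i ∈ Finset.range c, (1 * (M ^ i * X * M ^ (c - i))).trace = c * (X * M ^ c).trace := by
      rw [Finset.sum_congr rfl (g := fun _ => (X * M ^ c).trace)]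
      · simp
      · intro i hi
        rw [Finset.mem_range] at hi
        rw [Matrix.one_mul, Matrix.mul_assoc, trace_mul_comm, Matrix.mul_assoc, ← pow_add,
          Nat.sub_add_cancel hi.le]
    rw [e] at h
    simp only [Matrix.one_mul] at h
    simp only [evP, eval_X, pderiv_X]
    refine h.congr_deriv ?_
    symm
    rw [Finset.sum_eq_single c]
    · simp
    · intro b _ hb
      simp [Pi.single_apply, hb, Ne.symm hb]
    · intro hh; exact absurd (by simpa using hc) hh
  | algebraMap r =>
    simp only [evP, MvPolynomial.algebraMap_eq, eval_C, pderiv_C, map_zero, mul_zero,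
      Finset.sum_const_zero]
    exact hasDerivAt_const _ _
  | add x y hx hy ihx ihy =>
    have := ihx.add ihy
    simp only [evP, map_add, mul_add, Finset.sum_add_distrib] at this ⊢
    exact this
  | mul x y hx hy ihx ihy =>
    have := ihx.fun_mul ihy
    rw [hexp0] at this
    simp only [evP, map_mul] at this ⊢
    refine this.congr_deriv ?_
    symm
    rw [Finset.sum_mul, Finset.mul_sum, ← Finset.sum_add_distrib]
    apply Finset.sum_congr rfl
    intro b _
    rw [Derivation.leibniz]
    simp only [smul_eq_mul, map_add, map_mul]
    ring

/-- The derivative of `Tr(B M^a) R(M)` in the direction `X`. -/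
noncomputable def Lfun {n : ℕ} (B X : Matrix (Fin n ⊕ Fin n) (Fin n ⊕ Fin n) ℂ) (a K : ℕ)
    (R : MvPolynomial ℕ ℂ) (A : Matrix (Fin n ⊕ Fin n) (Fin n ⊕ Fin n) ℂ) : ℂ :=
  (∑ i ∈ Finset.range a, (B * (A ^ i * X * A ^ (a - i))).trace) * evP A R +
    (B * A ^ a).trace * ∑ b ∈ Finset.range K, (b * (X * A ^ b).trace) * evP A (MvPolynomial.pderiv b R)

lemma Lfun_continuous {n : ℕ} (B X : Matrix (Fin n ⊕ Fin n) (Fin n ⊕ Fin n) ℂ) (a K : ℕ)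
    (R : MvPolynomial ℕ ℂ) : Continuous fun M : USp n => Lfun B X a K R (uval M) := by
  unfold Lfun
  have h := uval_continuous (n := n)
  have hp : ∀ b, Continuous fun M : USp n => uval M ^ b := fun b => h.pow b
  apply Continuous.add
  · apply Continuous.mul _ (evP_continuous R)
    apply continuous_finsetSum
    intro i _
    exact (continuous_const.matrix_mul (((hp i).matrix_mul continuous_const).matrix_mul
      (hp (a - i)))).matrix_trace
  · apply Continuous.mul (continuous_const.matrix_mul (hp a)).matrix_trace
    apply continuous_finsetSum
    intro b _
    exact (continuous_const.mul (continuous_const.matrix_mul (hp b)).matrix_trace).mul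
      (evP_continuous _)

lemma Lfun_add {n : ℕ} (B X Y : Matrix (Fin n ⊕ Fin n) (Fin n ⊕ Fin n) ℂ) (a K : ℕ) (c : ℂ)
    (R : MvPolynomial ℕ ℂ) (A : Matrix (Fin n ⊕ Fin n) (Fin n ⊕ Fin n) ℂ) :
    Lfun B (X + c • Y) a K R A = Lfun B X a K R A + c * Lfun B Y a K R A := by
  simp only [Lfun, Matrix.mul_add, Matrix.add_mul, Matrix.mul_smul, Matrix.smul_mul, trace_add,
    trace_smul, smul_eq_mul, mul_add, add_mul, Finset.sum_add_distrib, Finset.mul_sum,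
    Finset.sum_mul]
  have e : ∀ x y z w : ℂ, x + y + (z + w) = x + z + (y + w) := by intros; ring
  rw [e]
  congr 1
  congr 1
  · apply Finset.sum_congr rfl; intros; ring
  · apply Finset.sum_congr rfl; intros; ring

lemma Lfun_real {n : ℕ} (μ : Measure (USp n)) [IsProbabilityMeasure μ] [μ.IsHaarMeasure]
    (B X : Matrix (Fin n ⊕ Fin n) (Fin n ⊕ Fin n) ℂ) (a K : ℕ)
    (R : MvPolynomial ℕ ℂ) (hR : R ∈ MvPolynomial.supported ℂ (Finset.range K : Set ℕ))
    (h1 : Xᴴ = -X) (h2 : th X = -X) :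
    ∫ M : USp n, Lfun B X a K R (uval M) ∂μ = 0 := by
  apply integral_deriv_zero μ (fun M => (B * uval M ^ a).trace * evP (uval M) R) _ _
    (Lfun_continuous B X a K R) (uspExp X h1 h2) (uspExp_add X h1 h2)
  · intro M
    have d1 := trace_pow_deriv B X (uval M) a
    have d2 := evP_deriv X (uval M) K R hR
    have d3 := d1.fun_mul d2
    rw [zero_smul, NormedSpace.exp_zero, one_mul] at d3
    exact d3
  · exact (continuous_const.matrix_mul (uval_continuous.pow a)).matrix_trace.mul (evP_continuous R)

lemma Lfun_cplx {n : ℕ} (μ : Measure (USp n)) [IsProbabilityMeasure μ] [μ.IsHaarMeasure]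
    (B X : Matrix (Fin n ⊕ Fin n) (Fin n ⊕ Fin n) ℂ) (a K : ℕ)
    (R : MvPolynomial ℕ ℂ) (hR : R ∈ MvPolynomial.supported ℂ (Finset.range K : Set ℕ))
    (h2 : th X = -X) :
    ∫ M : USp n, Lfun B X a K R (uval M) ∂μ = 0 := by
  set S1 : Matrix (Fin n ⊕ Fin n) (Fin n ⊕ Fin n) ℂ := (1 / 2 : ℂ) • (X - Xᴴ) with hS1
  set S2 : Matrix (Fin n ⊕ Fin n) (Fin n ⊕ Fin n) ℂ := (-Complex.I / 2 : ℂ) • (X + Xᴴ) with hS2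
  have hX : X = S1 + Complex.I • S2 := by
    rw [hS1, hS2, smul_smul]
    have : Complex.I * (-Complex.I / 2) = 1 / 2 := by
      linear_combination (-1 / 2 : ℂ) * Complex.I_mul_I
    rw [this, ← smul_add]
    simp only [sub_add_add_cancel]
    rw [← two_smul ℂ X, smul_smul]; norm_num
  have hc : th Xᴴ = - Xᴴ := by rw [th_conj, h2, conjTranspose_neg]
  have a1 : S1ᴴ = -S1 := by
    rw [hS1, conjTranspose_smul, conjTranspose_sub, conjTranspose_conjTranspose, ← smul_neg, neg_sub]
    congr 1; simp
  have a2 : S2ᴴ = -S2 := by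
    rw [hS2, conjTranspose_smul, conjTranspose_add, conjTranspose_conjTranspose, ← neg_smul,
      add_comm Xᴴ X]
    congr 1; simp [neg_div]
  have b1 : th S1 = -S1 := by
    rw [hS1, th_smul, th_sub, h2, hc, ← smul_neg]; congr 1; abel
  have b2 : th S2 = -S2 := by
    rw [hS2, th_smul, th_add, h2, hc, ← smul_neg]; congr 1; abel
  rw [hX]
  simp only [Lfun_add]
  rw [integral_add (usp_integrable μ (Lfun_continuous B S1 a K R))
    ((usp_integrable μ (Lfun_continuous B S2 a K R)).const_mul _), integral_const_mul,
    Lfun_real μ B S1 a K R hR a1 b1, Lfun_real μ B S2 a K R hR a2 b2]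
  simp

lemma mul_single_mul_apply' {m : Type*} [Fintype m] [DecidableEq m] (A B : Matrix m m ℂ)
    (p q i j : m) : (A * Matrix.single p q (1 : ℂ) * B : Matrix m m ℂ) i j = A i p * B q j := by
  rw [Matrix.mul_apply, Finset.sum_eq_single q]
  · simp
  · intro b _ hb
    rw [Matrix.mul_single_apply_of_ne]
    · simp
    · exact hb
  · simp

lemma trace_single_mul' {m : Type*} [Fintype m] [DecidableEq m] (W : Matrix m m ℂ)
    (p q : m) : (Matrix.single p q (1 : ℂ) * W).trace = W q p := by
  have : ∀ i, (Matrix.single p q (1 : ℂ) * W : Matrix m m ℂ) i i = if i = p then W q p else 0 := by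
    intro i
    have := mul_single_mul_apply' 1 W p q i i
    rw [Matrix.one_mul] at this
    rw [this, Matrix.one_apply]
    split_ifs with h
    · rw [h, one_mul]
    · simp
  simp [Matrix.trace, this]

lemma sum_same {n : ℕ} (U V : Matrix (Fin n ⊕ Fin n) (Fin n ⊕ Fin n) ℂ) :
    ∑ x, ∑ y, (single y x (1 : ℂ) * (U * (single x y (1 : ℂ) - th (single x y (1 : ℂ))) * V)).trace =
      U.trace * V.trace + (U * th V).trace := by
  have e : ∀ x y, (single y x (1 : ℂ) * (U * (single x y (1 : ℂ) - th (single x y (1 : ℂ))) * V)).trace =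
      U x x * V y y + (U * J (Fin n) ℂ) x y * (J (Fin n) ℂ * V) x y := by
    intro x y
    rw [trace_single_mul', Matrix.mul_sub, Matrix.sub_mul, Matrix.sub_apply, mul_single_mul_apply']
    have : U * th (single x y (1 : ℂ)) * V =
        -((U * J (Fin n) ℂ) * single y x (1 : ℂ) * (J (Fin n) ℂ * V)) := by
      simp [th, Matrix.mul_assoc, Matrix.transpose_single]
    rw [this, Matrix.neg_apply, mul_single_mul_apply', sub_neg_eq_add]
  simp only [e, Finset.sum_add_distrib]
  congr 1
  · simp only [Matrix.trace, Matrix.diag_apply, Finset.sum_mul_sum]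
  · have : U * th V = (U * J (Fin n) ℂ) * (J (Fin n) ℂ * V)ᵀ := by
      simp [th, Matrix.mul_assoc, transpose_mul, J_transpose]
    rw [this]
    simp only [Matrix.trace, Matrix.diag_apply]
    apply Finset.sum_congr rfl
    intro x _
    rw [Matrix.mul_apply]
    simp only [Matrix.transpose_apply]

lemma sum_cross {n : ℕ} (U V : Matrix (Fin n ⊕ Fin n) (Fin n ⊕ Fin n) ℂ) :
    ∑ x, ∑ y, (single y x (1 : ℂ) * U).trace * ((single x y (1 : ℂ) - th (single x y (1 : ℂ))) * V).trace =
      (U * V).trace - (U * th V).trace := by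
  have e : ∀ x y, ((single x y (1 : ℂ) - th (single x y (1 : ℂ))) * V).trace = (V - th V) y x := by
    intro x y
    rw [Matrix.sub_mul, trace_sub, trace_single_mul', Matrix.sub_apply]
    congr 1
    rw [← th_trace, th_mul, th_th, trace_mul_comm, trace_single_mul']
  simp only [e, trace_single_mul']
  rw [← trace_sub, ← Matrix.mul_sub]
  simp only [Matrix.trace, Matrix.diag_apply]
  apply Finset.sum_congr rfl
  intro x _
  rw [Matrix.mul_apply]

/-- Expectation of polynomials in the power sums. -/
noncomputable def EP {n : ℕ} (μ : Measure (USp n)) [IsProbabilityMeasure μ] :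
    MvPolynomial ℕ ℂ →ₗ[ℂ] ℂ where
  toFun R := ∫ M : USp n, evP (uval M) R ∂μ
  map_add' R S := by
    rw [← integral_add (usp_integrable μ (evP_continuous R)) (usp_integrable μ (evP_continuous S))]
    simp [evP]
  map_smul' c R := by
    rw [RingHom.id_apply, smul_eq_mul, ← integral_const_mul]
    simp [evP, MvPolynomial.smul_eval]

lemma EP_apply {n : ℕ} (μ : Measure (USp n)) [IsProbabilityMeasure μ] (R : MvPolynomial ℕ ℂ) :
    EP μ R = ∫ M : USp n, evP (uval M) R ∂μ := rfl

lemma Lfun_sum {n : ℕ} (M : USp n) (a K : ℕ) (R : MvPolynomial ℕ ℂ) :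
    ∑ x, ∑ y, Lfun (single y x (1 : ℂ)) (single x y (1 : ℂ) - th (single x y (1 : ℂ))) a K R (uval M) =
      evP (uval M) (∑ i ∈ Finset.range a,
        (MvPolynomial.X i * MvPolynomial.X (a - i) + MvPolynomial.X (Nat.dist a (2 * i))) * R +
      ∑ b ∈ Finset.range K, (b : ℂ) • ((MvPolynomial.X (a + b) - MvPolynomial.X (Nat.dist a b)) *
        MvPolynomial.pderiv b R)) := by
  simp only [Lfun, Finset.sum_add_distrib]
  have h1 : ∑ x, ∑ y, (∑ i ∈ Finset.range a, (single y x (1 : ℂ) * (uval M ^ i *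
      (single x y (1 : ℂ) - th (single x y (1 : ℂ))) * uval M ^ (a - i))).trace) * evP (uval M) R =
      (∑ i ∈ Finset.range a, ((uval M ^ i).trace * (uval M ^ (a - i)).trace +
        (uval M ^ (Nat.dist a (2 * i))).trace)) * evP (uval M) R := by
    suffices h0 : ∑ x, ∑ y, (∑ i ∈ Finset.range a, (single y x (1 : ℂ) * (uval M ^ i *
      (single x y (1 : ℂ) - th (single x y (1 : ℂ))) * uval M ^ (a - i))).trace) =
      ∑ i ∈ Finset.range a, ((uval M ^ i).trace * (uval M ^ (a - i)).trace +
        (uval M ^ (Nat.dist a (2 * i))).trace) by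
      rw [← h0]
      simp only [Finset.sum_mul]
    rw [Finset.sum_congr rfl fun x _ => Finset.sum_comm, Finset.sum_comm]
    apply Finset.sum_congr rfl
    intro i hi
    rw [Finset.mem_range] at hi
    rw [sum_same, trace_pow_th (uval_mem M),
      show Nat.dist i (a - i) = Nat.dist a (2 * i) by simp only [Nat.dist]; omega]
  have h2 : ∑ x, ∑ y, (single y x (1 : ℂ) * uval M ^ a).trace * ∑ b ∈ Finset.range K,
      (b * ((single x y (1 : ℂ) - th (single x y (1 : ℂ))) * uval M ^ b).trace) *
        evP (uval M) (MvPolynomial.pderiv b R) =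
      ∑ b ∈ Finset.range K, b * (((uval M ^ (a + b)).trace - (uval M ^ (Nat.dist a b)).trace) *
        evP (uval M) (MvPolynomial.pderiv b R)) := by
    simp only [Finset.mul_sum]
    rw [Finset.sum_congr rfl fun x _ => Finset.sum_comm, Finset.sum_comm]
    apply Finset.sum_congr rfl
    intro b _
    rw [pow_add, ← trace_pow_th (uval_mem M), ← sum_cross]
    simp only [Finset.sum_mul, Finset.mul_sum]
    apply Finset.sum_congr rfl; intro x _
    apply Finset.sum_congr rfl; intro y _
    ring
  rw [h1, h2]
  simp only [evP, map_add, map_sum, map_mul, map_sub, MvPolynomial.smul_eval, MvPolynomial.eval_X,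
    Finset.sum_mul]

lemma EP_loop {n : ℕ} (μ : Measure (USp n)) [IsProbabilityMeasure μ] [μ.IsHaarMeasure] :
    LoopEq (EP μ) := by
  intro a K _ s hs
  have hR : (MvPolynomial.monomial s (1 : ℂ)) ∈
      MvPolynomial.supported ℂ (Finset.range K : Set ℕ) := by
    rw [MvPolynomial.mem_supported, MvPolynomial.vars_monomial one_ne_zero]
    intro b hb
    rw [Finset.mem_coe, Finsupp.mem_support_iff] at hb
    rw [Finset.mem_coe, Finset.mem_range]
    by_contra hh
    exact hb (hs b (by omega))
  set R : MvPolynomial ℕ ℂ := MvPolynomial.monomial s (1 : ℂ) with hRdef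
  have h : EP μ (∑ i ∈ Finset.range a,
        (MvPolynomial.X i * MvPolynomial.X (a - i) + MvPolynomial.X (Nat.dist a (2 * i))) * R +
      ∑ b ∈ Finset.range K, (b : ℂ) • ((MvPolynomial.X (a + b) - MvPolynomial.X (Nat.dist a b)) *
        MvPolynomial.pderiv b R)) = 0 := by
    rw [EP_apply]
    simp only [← Lfun_sum]
    have hIntg : ∀ x y : Fin n ⊕ Fin n, Integrable (fun M : USp n =>
        Lfun (single y x (1 : ℂ)) (single x y (1 : ℂ) - th (single x y (1 : ℂ))) a K R (uval M)) μ :=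
      fun x y => usp_integrable μ (Lfun_continuous _ _ a K R)
    rw [integral_finsetSum _ fun x _ => integrable_finsetSum _ fun y _ => hIntg x y]
    apply Finset.sum_eq_zero
    intro x _
    rw [integral_finsetSum _ fun y _ => hIntg x y]
    apply Finset.sum_eq_zero
    intro y _
    apply Lfun_cplx μ _ _ a K R hR
    rw [th_sub, th_th, neg_sub]
  rw [map_add, map_sum, map_sum] at h
  simp only [map_smul, smul_eq_mul] at h
  exact h

lemma trace_real {n : ℕ} (M : USp n) (b : ℕ) :
    (((uval M ^ b).trace.re : ℝ) : ℂ) = (uval M ^ b).trace := by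
  rw [← Complex.conj_eq_iff_re]
  have h1 := mul_th_of_symplectic (pow_mem (uval_mem M) b)
  have h2 : uval M ^ b * (uval M ^ b)ᴴ = 1 := by
    have := (Unitary.mem_iff.mp (pow_mem M.1.2 b)).2
    exact this
  have h3 : (uval M ^ b)ᴴ = th (uval M ^ b) := by
    have h4 := _root_.mul_eq_one_comm.mp h2
    calc (uval M ^ b)ᴴ = (uval M ^ b)ᴴ * (uval M ^ b * th (uval M ^ b)) := by rw [h1, Matrix.mul_one]
      _ = _ := by rw [← Matrix.mul_assoc, h4, Matrix.one_mul]
  have h5 := trace_conjTranspose (uval M ^ b)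
  rw [h3, th_trace] at h5
  exact h5.symm

lemma trUSp_eq {n : ℕ} (M : USp n) (k : ℕ) : trUSp M (k : ℤ) = (uval M ^ k).trace := by
  simp [trUSp, uval]

end UspLoop

/-- For Haar-distributed `M` in `USp(2n,ℂ)` and `4j ≤ 2n + 1`:
`E[Tr(M^{2j})] = −1` and `Var(Tr(M^{2j})) = 2j` (the trace being real, its variance is
the variance of its real part). -/
theorem usp_trace_2j_mean_variance (n j : ℕ) (hn : 0 < n) (hj : 0 < j)
    (h : 4 * j ≤ 2 * n + 1)
    (μ : Measure (USp n)) [IsProbabilityMeasure μ] [μ.IsHaarMeasure] :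
    (∫ M, trUSp M ((2 * j : ℕ) : ℤ) ∂μ = -1) ∧
      variance (fun M => (trUSp M ((2 * j : ℕ) : ℤ)).re) μ = 2 * j := by
  have hE0 : ∀ R, EP μ (MvPolynomial.X 0 * R) = ((2 * n : ℕ) : ℂ) * EP μ R := by
    intro R
    rw [EP_apply, EP_apply, ← integral_const_mul]
    congr 1
    funext M
    simp only [evP, map_mul, MvPolynomial.eval_X, pow_zero, Matrix.trace_one, Fintype.card_sum,
      Fintype.card_fin]
    rw [two_mul]
  have hE1 : EP μ 1 = 1 := by
    rw [EP_apply]; simp [evP]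
  have heta : etaC (2 * j) = 1 := by simp [etaC]
  have s1 := stein_main (2 * n) (EP μ) hE0 (EP_loop μ) (2 * j) (by omega) (2 * j) (by omega) 0
    (by simp) (by simp [wtN])
  have s2 := stein_main (2 * n) (EP μ) hE0 (EP_loop μ) (4 * j) (by omega) (2 * j) (by omega)
    (Finsupp.single (2 * j) 1) (by rw [Finsupp.single_apply, if_neg (by omega)])
    (by simp [wtN, Finsupp.weight_single]; ring)
  change steinD (EP μ) (2 * j) 1 = 0 at s1
  change steinD (EP μ) (2 * j) (MvPolynomial.X (2 * j)) = 0 at s2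
  rw [steinD, heta, mul_one, hE1, MvPolynomial.pderiv_one, map_zero] at s1
  rw [steinD, heta, MvPolynomial.pderiv_X_self, hE1] at s2
  have m1 : EP μ (MvPolynomial.X (2 * j)) = -1 := by linear_combination s1
  have m2 : EP μ (MvPolynomial.X (2 * j) * MvPolynomial.X (2 * j)) = 2 * j + 1 := by
    rw [m1] at s2; push_cast at s2; linear_combination s2
  rw [EP_apply] at m1 m2
  simp only [evP, map_mul, MvPolynomial.eval_X] at m1 m2
  simp only [trUSp_eq]
  refine ⟨m1, ?_⟩
  have hcont : Continuous fun M : USp n => (uval M ^ (2 * j)).trace.re :=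
    Complex.continuous_re.comp (uval_continuous.pow (2 * j)).matrix_trace
  have r1 : ∫ M : USp n, (uval M ^ (2 * j)).trace.re ∂μ = -1 := by
    have : ((∫ M : USp n, (uval M ^ (2 * j)).trace.re ∂μ : ℝ) : ℂ) = -1 := by
      rw [← integral_complex_ofReal]
      simp only [trace_real]
      exact m1
    exact_mod_cast this
  have r2 : ∫ M : USp n, (uval M ^ (2 * j)).trace.re ^ 2 ∂μ = 2 * j + 1 := by
    have : ((∫ M : USp n, (uval M ^ (2 * j)).trace.re ^ 2 ∂μ : ℝ) : ℂ) = 2 * j + 1 := by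
      rw [← integral_complex_ofReal]
      simp only [pow_two, Complex.ofReal_mul, trace_real]
      exact m2
    exact_mod_cast this
  obtain ⟨C, hC⟩ := isCompact_univ.exists_bound_of_continuousOn hcont.continuousOn
  have hIntg : Integrable (fun M : USp n => (uval M ^ (2 * j)).trace.re) μ := by
    have := ContinuousOn.integrableOn_compact (μ := μ) isCompact_univ hcont.continuousOn
    simpa using this
  have hmem : MemLp (fun M : USp n => (uval M ^ (2 * j)).trace.re) 2 μ :=
    MemLp.of_bound hIntg.aestronglyMeasurable C
      (Filter.Eventually.of_forall fun M => hC M (Set.mem_univ _))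
  rw [variance_eq_sub hmem]
  simp only [Pi.pow_apply]
  rw [r1, r2]
  ring
end
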